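/- arXiv:1707.02002 — 3 statements merged into one kernel-verified Lean document; each statement's English description precedes it below -/
import Mathlib

section
/- Let G be an n-vertex unicyclic graph whose unique cycle has length l < n, with n ≥ 6, and let x be a vertex of G. Then CC(x) ≥ −l³/6 + n·l²/3 + (7−12n)l/6 + n(6n−7)/3, with equality if and only if G is S_n^l (the cycle C_l with n−l pendant vertices attached to a single cycle vertex) and x is a pendant vertex of G. -/
open SimpleGraph Finset

attribute [local instance] Classical.propDecidable

variable {V : Type*}

/-- Degree of a vertex as a real number. -/
noncomputable def degR [Fintype V] (G : SimpleGraph V) (x : V) : ℝ :=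
  ((Finset.univ.filter fun y => G.Adj x y).card : ℝ)

/-- Number of edges of a graph. -/
noncomputable def esize (G : SimpleGraph V) : ℕ := Nat.card G.edgeSet

/-- Dirichlet energy of a potential. -/
noncomputable def energyFn [Fintype V] (G : SimpleGraph V) (φ : V → ℝ) : ℝ :=
  (1/2) * ∑ u, ∑ v, if G.Adj u v then (φ u - φ v)^2 else 0

/-- Effective resistance between two vertices (unit resistors on edges),
via the Dirichlet variational principle: the reciprocal of the minimal energy
of a potential with value 1 at `x` and 0 at `y`. -/
noncomputable def eres [Fintype V] (G : SimpleGraph V) (x y : V) : ℝ :=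
  (sInf {e : ℝ | ∃ φ : V → ℝ, φ x = 1 ∧ φ y = 0 ∧ e = energyFn G φ})⁻¹

/-- The transition matrix of the simple random walk, killed at `y`. -/
noncomputable def hitMat [Fintype V] (G : SimpleGraph V) (y : V) : Matrix V V ℝ :=
  Matrix.of fun u v => if v = y then 0 else if G.Adj u v then (degR G u)⁻¹ else 0

/-- Expected hitting time `H_{xy}` of the simple random walk from `x` to `y`,
expressed as the sum of the survival probabilities of the walk killed at `y`. -/
noncomputable def hitting [Fintype V] (G : SimpleGraph V) (x y : V) : ℝ :=
  if x = y then 0 else ∑' k : ℕ, ∑ z, (hitMat G y ^ k) x z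

/-- Resistance-centrality `R(x)`. -/
noncomputable def Rres [Fintype V] (G : SimpleGraph V) (x : V) : ℝ := ∑ y, eres G x y

/-- Weighted resistance-centrality `R^w(x)`. -/
noncomputable def Rw [Fintype V] (G : SimpleGraph V) (x : V) : ℝ :=
  ∑ y, degR G y * eres G x y

/-- Kirchhoff index `Kf(G)`. -/
noncomputable def Kf [Fintype V] (G : SimpleGraph V) : ℝ :=
  (1/2) * ∑ x, ∑ y, eres G x y

/-- Additive degree-Kirchhoff index `Kf⁺(G)`. -/
noncomputable def KfPlus [Fintype V] (G : SimpleGraph V) : ℝ :=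
  (1/2) * ∑ x, ∑ y, (degR G x + degR G y) * eres G x y

/-- Multiplicative degree-Kirchhoff index `Kf*(G)`. -/
noncomputable def KfStar [Fintype V] (G : SimpleGraph V) : ℝ :=
  (1/2) * ∑ x, ∑ y, degR G x * degR G y * eres G x y

/-- Cover cost `CC(x) = Σ_y H_{xy}`. -/
noncomputable def coverCost [Fintype V] (G : SimpleGraph V) (x : V) : ℝ :=
  ∑ y, hitting G x y

/-- Reverse cover cost `RC(x) = Σ_y H_{yx}`. -/
noncomputable def reverseCoverCost [Fintype V] (G : SimpleGraph V) (x : V) : ℝ :=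
  ∑ y, hitting G y x

/-- Centrality (transmission) `D(x) = Σ_y d(x,y)`. -/
noncomputable def Dcent [Fintype V] (G : SimpleGraph V) (x : V) : ℝ :=
  ∑ y, (G.dist x y : ℝ)

/-- Weighted centrality `D^w(x) = Σ_y deg(y)·d(x,y)`. -/
noncomputable def Dw [Fintype V] (G : SimpleGraph V) (x : V) : ℝ :=
  ∑ y, degR G y * (G.dist x y : ℝ)

/-- Wiener index `W(G)`. -/
noncomputable def Wiener [Fintype V] (G : SimpleGraph V) : ℝ :=
  (1/2) * ∑ x, ∑ y, (G.dist x y : ℝ)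

/-- `D_{T}(v)`: sum of distances from `v` to the vertices of its connected
component in `G'` (used for the branch trees of a unicyclic graph). -/
noncomputable def branchD [Fintype V] (G' : SimpleGraph V) (v : V) : ℝ :=
  ∑ u, if G'.Reachable v u then (G'.dist v u : ℝ) else 0

/-- The set of edges of the cycle `c 0 - c 1 - ⋯ - c (l-1) - c 0`. -/
def cycleEdges {l : ℕ} [NeZero l] (c : Fin l → V) : Set (Sym2 V) :=
  Set.range fun i : Fin l => s(c i, c (i + 1))

/-- Distance from a vertex to a set of vertices. -/
noncomputable def distToSet [Fintype V] (G : SimpleGraph V) (x : V) (s : Set V) : ℕ :=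
  sInf {d | ∃ y ∈ s, G.dist x y = d}

/-- `v` is the center of a star. -/
def IsStarCenter (G : SimpleGraph V) (v : V) : Prop := ∀ u, u ≠ v → G.Adj v u

/-- `G` is a star. -/
def IsStar (G : SimpleGraph V) : Prop := ∃ v, IsStarCenter G v

/-- The lollipop graph `P_n^l` : a cycle `C_l` on `0,…,l-1` together with a
path on `l,…,n-1` attached at the cycle vertex `0`. -/
def lollipop (n l : ℕ) : SimpleGraph (Fin n) :=
  SimpleGraph.fromRel (fun a b =>
    (a.val + 1 = b.val ∧ b.val < l) ∨ (a.val = 0 ∧ b.val = l - 1) ∨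
    (a.val = 0 ∧ b.val = l) ∨ (l ≤ a.val ∧ a.val + 1 = b.val))

/-- The graph `S_n^l` : a cycle `C_l` on `0,…,l-1` with `n - l` pendant
vertices `l,…,n-1` attached at the cycle vertex `0`. -/
def starCycle (n l : ℕ) : SimpleGraph (Fin n) :=
  SimpleGraph.fromRel (fun a b =>
    (a.val + 1 = b.val ∧ b.val < l) ∨ (a.val = 0 ∧ b.val = l - 1) ∨
    (a.val = 0 ∧ l ≤ b.val))

/-- The cycle graph `C_n` on `Fin n`. -/
def cycleG (n : ℕ) : SimpleGraph (Fin n) :=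
  SimpleGraph.fromRel (fun a b => a.val + 1 = b.val ∨ (a.val = 0 ∧ b.val = n - 1))


/-- Hitting times from a solution of the linear system. -/
theorem hitting_eq_of_solution [Fintype V] (G : SimpleGraph V) (y : V) (f : V → ℝ)
    (hf0 : ∀ u, 0 ≤ f u) (hfy : f y = 0)
    (hf : ∀ u, u ≠ y → f u = 1 + ∑ v, (if G.Adj u v then (degR G u)⁻¹ else 0) * f v) (x : V) :
    hitting G x y = f x := by
  unfold hitting
  split_ifs with hxy
  · rw [hxy, hfy]
  have hd : ∀ u, 0 ≤ (degR G u)⁻¹ := fun u => inv_nonneg.2 (Nat.cast_nonneg _)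
  set Q := hitMat G y with hQ
  have hQ0 : ∀ u v, 0 ≤ Q u v := by
    intro u v
    simp only [hQ, hitMat, Matrix.of_apply]
    split_ifs <;> first | exact le_rfl | exact hd u
  set g : V → ℝ := fun u => 1 + ∑ v, (if G.Adj u v then (degR G u)⁻¹ else 0) * f v with hg
  have hg1 : ∀ u, 1 ≤ g u := by
    intro u
    have : 0 ≤ ∑ v, (if G.Adj u v then (degR G u)⁻¹ else 0) * f v := by
      refine Finset.sum_nonneg fun v _ => mul_nonneg ?_ (hf0 v)
      split_ifs
      · exact hd u
      · exact le_rfl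
    simp only [hg]; linarith
  have hgQ : ∀ u, g u = 1 + ∑ v, Q u v * g v := by
    intro u
    simp only [hg]
    congr 1
    refine Finset.sum_congr rfl fun v _ => ?_
    simp only [hQ, hitMat, Matrix.of_apply]
    by_cases hv : v = y
    · subst hv; simp [hfy]
    · rw [if_neg hv, ← hf v hv]
  have hpow0 : ∀ k u v, 0 ≤ (Q ^ k) u v := by
    intro k
    induction k with
    | zero => intro u v; simp only [pow_zero, Matrix.one_apply]; split_ifs <;> norm_num
    | succ k ih =>
      intro u v
      rw [pow_succ, Matrix.mul_apply]
      exact Finset.sum_nonneg fun w _ => mul_nonneg (ih _ _) (hQ0 _ _)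
  set s : ℕ → ℝ := fun k => ∑ z, (Q ^ k) x z with hs
  have hs0 : ∀ k, 0 ≤ s k := fun k => Finset.sum_nonneg fun z _ => hpow0 k x z
  set t : ℕ → ℝ := fun k => ∑ z, (Q ^ k) x z * g z with ht
  have ht0 : ∀ k, 0 ≤ t k := fun k =>
    Finset.sum_nonneg fun z _ => mul_nonneg (hpow0 k x z) (by linarith [hg1 z])
  have hstep : ∀ k, t k = s k + t (k + 1) := by
    intro k
    have h1 : t (k + 1) = ∑ z, (Q ^ k) x z * ∑ v, Q z v * g v := by
      simp only [ht, pow_succ, Matrix.mul_apply, Finset.sum_mul, Finset.mul_sum]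
      rw [Finset.sum_comm]
      simp only [mul_assoc]
    rw [h1, hs, ht]
    simp only
    rw [← Finset.sum_add_distrib]
    refine Finset.sum_congr rfl fun z _ => ?_
    conv_lhs => rw [hgQ z]
    ring
  have hpart : ∀ N, ∑ k ∈ Finset.range N, s k = g x - t N := by
    intro N
    induction N with
    | zero => simp [ht, Matrix.one_apply]
    | succ N ih => rw [Finset.sum_range_succ, ih]; linarith [hstep N]
  have hsum : Summable s := summable_of_sum_range_le (c := g x) hs0 (fun N => by
    rw [hpart]; linarith [ht0 N])
  have hs_tend := hsum.tendsto_atTop_zero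
  have ht_le : ∀ k, t k ≤ (∑ z, g z) * s k := by
    intro k
    rw [hs, ht]
    simp only
    rw [Finset.mul_sum]
    refine Finset.sum_le_sum fun z _ => ?_
    rw [mul_comm]
    refine mul_le_mul_of_nonneg_right ?_ (hpow0 k x z)
    exact Finset.single_le_sum (f := g) (fun w _ => by linarith [hg1 w]) (Finset.mem_univ z)
  have ht_tend : Filter.Tendsto t Filter.atTop (nhds 0) := by
    refine squeeze_zero ht0 ht_le ?_
    simpa using hs_tend.const_mul (∑ z, g z)
  have h1 := hsum.hasSum.tendsto_sum_nat
  have h2 : Filter.Tendsto (fun N => ∑ k ∈ Finset.range N, s k) Filter.atTop (nhds (g x)) := by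
    simp only [hpart]
    simpa using ht_tend.const_sub (g x)
  rw [tendsto_nhds_unique h1 h2, hf x hxy]

/-- A minimum principle. -/
theorem nonneg_of_lap [Fintype V] (G : SimpleGraph V) (y : V) (f : V → ℝ) (hfy : f y = 0)
    (hL : ∀ u, u ≠ y → 0 < ∑ v, if G.Adj u v then f u - f v else 0) (u : V) : 0 ≤ f u := by
  obtain ⟨m, -, hm⟩ := Finset.exists_min_image Finset.univ f ⟨y, Finset.mem_univ y⟩
  by_cases hmy : m = y
  · have := hm u (Finset.mem_univ u); rw [hmy, hfy] at this; exact this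
  · exfalso
    have := hL m hmy
    have h2 : ∑ v, (if G.Adj m v then f m - f v else 0) ≤ 0 := by
      refine Finset.sum_nonpos fun v _ => ?_
      split_ifs
      · linarith [hm v (Finset.mem_univ v)]
      · exact le_rfl
    linarith

theorem degR_eq [Fintype V] (G : SimpleGraph V) (x : V) :
    degR G x = ∑ v, if G.Adj x v then (1 : ℝ) else 0 := by
  unfold degR
  rw [Finset.sum_boole]

/-- Cover cost from a resistance kernel. -/
theorem coverCost_of_kernel [Fintype V] (G : SimpleGraph V) (N : ℝ)
    (hdeg : ∀ u, 0 < degR G u) (hN : ∑ u, degR G u = 2 * N) (R : V → V → ℝ)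
    (diag : ∀ u, R u u = 0) (a : V → ℝ)
    (lap : ∀ u z, (∑ v, if G.Adj u v then R u z - R v z else 0) = a u - if u = z then 2 else 0)
    (x : V) :
    coverCost G x = N * ∑ y, R x y + (∑ y, ∑ z, degR G z * R y z) / 2
      - Fintype.card V / 2 * ∑ z, degR G z * R x z := by
  have key : ∀ y, hitting G x y = ∑ z, degR G z * (R x y + R y z - R x z) / 2 := by
    intro y
    have hlapf : ∀ u, (∑ v, if G.Adj u v then
        (∑ z, degR G z * (R u y + R y z - R u z) / 2)
          - (∑ z, degR G z * (R v y + R y z - R v z) / 2) else 0)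
        = degR G u - if u = y then 2 * N else 0 := by
      intro u
      have h1 : ∀ v, (if G.Adj u v then
        (∑ z, degR G z * (R u y + R y z - R u z) / 2)
          - (∑ z, degR G z * (R v y + R y z - R v z) / 2) else 0)
          = ∑ z, degR G z / 2 * ((if G.Adj u v then R u y - R v y else 0)
             - (if G.Adj u v then R u z - R v z else 0)) := by
        intro v
        split_ifs
        · rw [← Finset.sum_sub_distrib]
          refine Finset.sum_congr rfl fun z _ => ?_
          ring
        · simp
      simp only [h1]
      rw [Finset.sum_comm]
      simp only [← Finset.mul_sum, Finset.sum_sub_distrib, lap]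
      have h2 : ∀ z, degR G z / 2 * (a u - (if u = y then (2:ℝ) else 0) - (a u - if u = z then 2 else 0))
          = (if u = z then degR G z else 0) - degR G z * (if u = y then 1 else 0) := by
        intro z; split_ifs <;> ring
      simp only [h2, Finset.sum_sub_distrib, ← Finset.sum_mul, hN]
      simp
    refine hitting_eq_of_solution G y (fun u => ∑ z, degR G z * (R u y + R y z - R u z) / 2)
      ?_ ?_ ?_ x
    · refine nonneg_of_lap G y _ ?_ ?_
      · simp [diag]
      · intro u hu
        rw [hlapf u, if_neg hu]
        simpa using hdeg u
    · simp [diag]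
    · intro u hu
      have h := hlapf u
      rw [if_neg hu] at h
      set f : V → ℝ := (fun u => ∑ z, degR G z * (R u y + R y z - R u z) / 2) with hf
      have h3 : (∑ v, if G.Adj u v then f u - f v else 0)
          = degR G u * f u - ∑ v, if G.Adj u v then f v else 0 := by
        rw [degR_eq, Finset.sum_mul, ← Finset.sum_sub_distrib]
        refine Finset.sum_congr rfl fun v _ => ?_
        split_ifs <;> ring
      have h4 : ∑ v, (if G.Adj u v then (degR G u)⁻¹ else 0) * f v
          = (degR G u)⁻¹ * ∑ v, if G.Adj u v then f v else 0 := by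
        rw [Finset.mul_sum]
        refine Finset.sum_congr rfl fun v _ => ?_
        split_ifs <;> ring
      have h5 : degR G u * f u - ∑ v, (if G.Adj u v then f v else 0) = degR G u - 0 := by
        rw [← h3]; exact h
      have hne := (hdeg u).ne'
      change f u = _
      rw [h4]
      field_simp
      linarith
  unfold coverCost
  simp only [key]
  have h6 : ∀ y z, degR G z * (R x y + R y z - R x z) / 2
      = degR G z * (R x y / 2) + degR G z * R y z / 2 - degR G z * R x z / 2 := by
    intro y z; ring
  simp only [h6, Finset.sum_add_distrib, Finset.sum_sub_distrib, ← Finset.sum_mul, hN,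
    ← Finset.mul_sum, ← Finset.sum_div]
  simp
  ring

/-- Structural invariants of the growing piece `S` of a unicyclic graph. -/
structure Good (G : SimpleGraph V) (C S : Finset V) (R : V → V → ℝ) (h : V → ℕ) (a : V → ℝ) :
    Prop where
  CS : C ⊆ S
  E : ∑ u ∈ S, ∑ v ∈ S, (if G.Adj u v then (1 : ℝ) else 0) = 2 * S.card
  sym : ∀ u ∈ S, ∀ v ∈ S, R u v = R v u
  diag : ∀ u ∈ S, R u u = 0
  lap : ∀ u ∈ S, ∀ z ∈ S, (∑ v ∈ S, if G.Adj u v then R u z - R v z else 0)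
    = a u - if u = z then 2 else 0
  rw' : ∀ x ∈ S, ∑ z ∈ S, (∑ v ∈ S, if G.Adj z v then (1 : ℝ) else 0) * R x z
    = 2 * ∑ z ∈ S, R x z + 2 * h x - (S.card - C.card)
  h0 : ∀ u ∈ C, h u = 0
  h1 : ∀ u ∈ S, u ∉ C → 1 ≤ h u
  csum : ∀ w ∈ S, ∑ c ∈ C, R w c = C.card * h w + ((C.card : ℝ) ^ 2 - 1) / 6
  lip : ∀ u ∈ S, ∀ v ∈ S, (h u : ℝ) - h v ≤ R u v
  ge1 : ∀ u ∈ S, ∀ v ∈ S, v ∉ C → u ≠ v → 1 ≤ R u v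
  ge2 : ∀ u ∈ S, ∀ v ∈ S, u ∉ C → v ∉ C → u ≠ v → ¬ G.Adj u v → 2 ≤ R u v
  adj1 : ∀ u ∈ S, ∀ v ∈ S, v ∉ C → G.Adj u v → R u v = 1
  pos : ∀ u ∈ S, ∀ v ∈ S, u ≠ v → 0 < R u v
  gt1 : ∀ u ∈ S, ∀ v ∈ S, v ∉ C → u ≠ v → ¬ G.Adj u v → 1 < R u v
  par : ∀ u ∈ S, u ∉ C → ∃ p ∈ S, h p + 1 = h u ∧ G.Adj u p ∧
    ∀ v ∈ S, G.Adj u v → v = p ∨ h v = h u + 1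

theorem Good.step {G : SimpleGraph V} {C S : Finset V} {R : V → V → ℝ} {h : V → ℕ} {a : V → ℝ}
    (g : Good G C S R h a) {z w : V} (hz : z ∉ S) (hw : w ∈ S)
    (hadj : ∀ u ∈ S, G.Adj u z ↔ u = w) {R' : V → V → ℝ} {h' : V → ℕ}
    (r1 : ∀ u ∈ S, ∀ v ∈ S, R' u v = R u v) (r2 : ∀ u ∈ S, R' u z = R u w + 1)
    (r3 : ∀ u ∈ S, R' z u = R w u + 1) (r4 : R' z z = 0)
    (e1 : ∀ u ∈ S, h' u = h u) (e2 : h' z = h w + 1) :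
    ∃ a', Good G C (insert z S) R' h' a' := by
  have hne : ∀ u ∈ S, u ≠ z := fun u hu e => hz (e ▸ hu)
  have hadj' : ∀ u ∈ S, G.Adj z u ↔ u = w := fun u hu => by rw [G.adj_comm]; exact hadj u hu
  have hzC : z ∉ C := fun hc => hz (g.CS hc)
  have hcard : ((insert z S).card : ℝ) = S.card + 1 := by
    rw [Finset.card_insert_of_notMem hz]; push_cast; rfl
  have degz : ∑ v ∈ S, (if G.Adj z v then (1 : ℝ) else 0) = 1 := by
    rw [Finset.sum_congr rfl fun v hv => if_congr (hadj' v hv) rfl rfl]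
    simp [hw]
  have degz' : ∑ v ∈ insert z S, (if G.Adj z v then (1 : ℝ) else 0) = 1 := by
    rw [Finset.sum_insert hz, degz]; simp
  have degu : ∀ u ∈ S, ∑ v ∈ insert z S, (if G.Adj u v then (1 : ℝ) else 0)
      = (if u = w then 1 else 0) + ∑ v ∈ S, (if G.Adj u v then (1 : ℝ) else 0) := by
    intro u hu
    rw [Finset.sum_insert hz, if_congr (hadj u hu) rfl rfl]
  have sumR : ∀ x ∈ S, ∑ y ∈ insert z S, R' x y = R x w + 1 + ∑ y ∈ S, R x y := by
    intro x hx
    rw [Finset.sum_insert hz, r2 x hx, Finset.sum_congr rfl fun y hy => r1 x hx y hy]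
  have sumRz : ∑ y ∈ insert z S, R' z y = S.card + ∑ y ∈ S, R w y := by
    rw [Finset.sum_insert hz, r4, Finset.sum_congr rfl fun y hy => r3 y hy,
      Finset.sum_add_distrib]
    simp; ring
  refine ⟨fun u => if u = z then 1 else if u = w then a w - 1 else a u, ?_⟩
  refine ⟨g.CS.trans (Finset.subset_insert _ _), ?_, ?_, ?_, ?_, ?_, ?_, ?_, ?_, ?_, ?_, ?_, ?_, ?_, ?_, ?_⟩
  · rw [Finset.sum_insert hz, degz', Finset.sum_congr rfl degu, Finset.sum_add_distrib, g.E, hcard]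
    simp [hw]; ring
  · intro u hu v hv
    rw [Finset.mem_insert] at hu hv
    rcases hu with rfl | hu <;> rcases hv with rfl | hv
    · rfl
    · rw [r3 v hv, r2 v hv, g.sym _ hw _ hv]
    · rw [r3 u hu, r2 u hu, g.sym _ hw _ hu]
    · rw [r1 u hu v hv, r1 v hv u hu, g.sym _ hu _ hv]
  · intro u hu
    rw [Finset.mem_insert] at hu
    rcases hu with rfl | hu
    · exact r4
    · rw [r1 u hu u hu, g.diag u hu]
  · intro u hu y hy
    rw [Finset.mem_insert] at hu hy
    rw [Finset.sum_insert hz]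
    rcases hu with rfl | hu
    · rw [if_neg (G.loopless.irrefl u), zero_add,
        Finset.sum_congr rfl fun v hv => if_congr (hadj' v hv) rfl rfl,
        Finset.sum_ite_eq' S w, if_pos hw, if_pos rfl]
      rcases hy with rfl | hy
      · rw [r4, r2 w hw, g.diag w hw]; norm_num
      · rw [r3 y hy, r1 w hw y hy, if_neg (hne y hy).symm]; ring
    · rw [if_neg (hne u hu), if_congr (hadj u hu) rfl rfl]
      rcases hy with rfl | hy
      · rw [if_neg (hne u hu)]
        have : (∑ v ∈ S, if G.Adj u v then R' u y - R' v y else 0)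
            = a u - if u = w then 2 else 0 := by
          rw [← g.lap u hu w hw]
          refine Finset.sum_congr rfl fun v hv => ?_
          rw [r2 u hu, r2 v hv]
          split_ifs <;> ring
        rw [this, r2 u hu, r4]
        split_ifs with e
        · subst e; rw [g.diag u hu]; ring
        · ring
      · have : (∑ v ∈ S, if G.Adj u v then R' u y - R' v y else 0)
            = a u - if u = y then 2 else 0 := by
          rw [← g.lap u hu y hy]
          refine Finset.sum_congr rfl fun v hv => ?_
          rw [r1 u hu y hy, r1 v hv y hy]
        rw [this, r1 u hu y hy, r3 y hy]
        by_cases e : u = w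
        · subst e; simp only [if_true]; ring
        · simp only [if_neg e]; ring
  · intro x hx
    rw [Finset.mem_insert] at hx
    rw [hcard, Finset.sum_insert hz (f := fun y => _ * R' x y), degz']
    have hs : ∀ F : V → ℝ, ∑ y ∈ S, (∑ v ∈ insert z S, if G.Adj y v then (1 : ℝ) else 0) * F y
        = F w + ∑ y ∈ S, (∑ v ∈ S, if G.Adj y v then (1 : ℝ) else 0) * F y := by
      intro F
      rw [Finset.sum_congr rfl fun y hy => by rw [degu y hy, add_mul], Finset.sum_add_distrib]
      congr 1
      simp [hw]
    rw [hs]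
    rcases hx with rfl | hx
    · rw [sumRz, r4, r3 w hw, g.diag w hw, e2,
        Finset.sum_congr rfl fun y hy => by rw [r3 y hy, mul_add, mul_one], Finset.sum_add_distrib,
        g.rw' w hw, g.E]
      push_cast; ring
    · rw [sumR x hx, r2 x hx, r1 x hx w hw, e1 x hx,
        Finset.sum_congr rfl fun y hy => by rw [r1 x hx y hy], g.rw' x hx]
      ring
  · intro u hu
    rw [e1 u (g.CS hu), g.h0 u hu]
  · intro u hu hc
    rw [Finset.mem_insert] at hu
    rcases hu with rfl | hu
    · omega
    · rw [e1 u hu]; exact g.h1 u hu hc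
  · intro u hu
    rw [Finset.mem_insert] at hu
    rcases hu with rfl | hu
    · rw [Finset.sum_congr rfl fun y hy => r3 y (g.CS hy), Finset.sum_add_distrib, g.csum w hw, e2]
      simp; ring
    · rw [Finset.sum_congr rfl fun y hy => r1 u hu y (g.CS hy), g.csum u hu, e1 u hu]
  · intro u hu v hv
    rw [Finset.mem_insert] at hu hv
    rcases hu with rfl | hu <;> rcases hv with rfl | hv
    · rw [r4]; simp
    · rw [r3 v hv, e2, e1 v hv]; push_cast; linarith [g.lip w hw v hv]
    · rw [r2 u hu, e2, e1 u hu]; push_cast; linarith [g.lip u hu w hw]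
    · rw [r1 u hu v hv, e1 u hu, e1 v hv]; exact g.lip u hu v hv
  · have nn : ∀ u ∈ S, ∀ v ∈ S, (u ∉ C ∨ v ∉ C) → 0 ≤ R u v := by
      intro u hu v hv hc
      by_cases e : u = v
      · subst e; rw [g.diag u hu]
      · rcases hc with hc | hc
        · rw [g.sym u hu v hv]; linarith [g.ge1 v hv u hu hc (Ne.symm e)]
        · linarith [g.ge1 u hu v hv hc e]
    have nn2 : ∀ u ∈ S, 0 ≤ R u w := by
      intro u hu
      by_cases hc : u ∉ C ∨ w ∉ C
      · exact nn u hu w hw hc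
      · push Not at hc
        have := g.lip u hu w hw
        rw [g.h0 u hc.1, g.h0 w hc.2] at this
        simpa using this
    intro u hu v hv hc huv
    rw [Finset.mem_insert] at hu hv
    rcases hu with rfl | hu <;> rcases hv with rfl | hv
    · exact absurd rfl huv
    · rw [r3 v hv, g.sym w hw v hv]; linarith [nn2 v hv]
    · rw [r2 u hu]; linarith [nn2 u hu]
    · rw [r1 u hu v hv]; exact g.ge1 u hu v hv hc huv
  · have key : ∀ u ∈ S, u ∉ C → ¬ G.Adj u z → 1 ≤ R w u := by
      intro u hu hc hn
      rw [hadj u hu] at hn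
      exact g.ge1 w hw u hu hc (Ne.symm hn)
    intro u hu v hv huc hvc huv hn
    rw [Finset.mem_insert] at hu hv
    rcases hu with rfl | hu <;> rcases hv with rfl | hv
    · exact absurd rfl huv
    · rw [r3 v hv]; linarith [key v hv hvc (fun e => hn e.symm)]
    · rw [r2 u hu, g.sym u hu w hw]; linarith [key u hu huc hn]
    · rw [r1 u hu v hv]; exact g.ge2 u hu v hv huc hvc huv hn
  · intro u hu v hv hvc hn
    rw [Finset.mem_insert] at hu hv
    rcases hu with rfl | hu <;> rcases hv with rfl | hv
    · exact absurd hn (G.loopless.irrefl _)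
    · rw [hadj' v hv] at hn; subst hn; rw [r3 v hv, g.diag v hv]; ring
    · rw [hadj u hu] at hn; subst hn; rw [r2 u hu, g.diag u hu]; ring
    · rw [r1 u hu v hv]; exact g.adj1 u hu v hv hvc hn
  · have nn : ∀ u ∈ S, 0 ≤ R u w := by
      intro u hu
      by_cases e : u = w
      · rw [e, g.diag w hw]
      · exact (g.pos u hu w hw e).le
    intro u hu v hv huv
    rw [Finset.mem_insert] at hu hv
    rcases hu with rfl | hu <;> rcases hv with rfl | hv
    · exact absurd rfl huv
    · rw [r3 v hv, g.sym w hw v hv]; linarith [nn v hv]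
    · rw [r2 u hu]; linarith [nn u hu]
    · rw [r1 u hu v hv]; exact g.pos u hu v hv huv
  · intro u hu v hv hc huv hn
    rw [Finset.mem_insert] at hu hv
    rcases hu with rfl | hu <;> rcases hv with rfl | hv
    · exact absurd rfl huv
    · rw [hadj' v hv] at hn
      rw [r3 v hv, g.sym w hw v hv]; linarith [g.pos v hv w hw hn]
    · rw [hadj u hu] at hn
      rw [r2 u hu]; linarith [g.pos u hu w hw hn]
    · rw [r1 u hu v hv]; exact g.gt1 u hu v hv hc huv hn
  · intro u hu hc
    rw [Finset.mem_insert] at hu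
    rcases hu with rfl | hu
    · refine ⟨w, Finset.mem_insert_of_mem hw, by rw [e1 w hw, e2], (hadj' w hw).2 rfl, ?_⟩
      intro v hv hv2
      rw [Finset.mem_insert] at hv
      rcases hv with rfl | hv
      · exact absurd hv2 (G.loopless.irrefl _)
      · exact Or.inl ((hadj' v hv).1 hv2)
    · obtain ⟨p, hp, hp1, hp2, hp3⟩ := g.par u hu hc
      refine ⟨p, Finset.mem_insert_of_mem hp, by rw [e1 p hp, e1 u hu, hp1], hp2, ?_⟩
      intro v hv hv2
      rw [Finset.mem_insert] at hv
      rcases hv with rfl | hv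
      · right; rw [hadj u hu] at hv2; rw [e2, e1 u hu, hv2]
      · rw [e1 v hv, e1 u hu]; exact hp3 v hv hv2

/-- The claimed lower bound. -/
noncomputable def BB (l n : ℝ) : ℝ :=
  -l^3/6 + n*l^2/3 + (7-12*n)*l/6 + n*(6*n-7)/3

/-- Total resistance plus total height. -/
noncomputable def Tot (S : Finset V) (R : V → V → ℝ) (h : V → ℕ) : ℝ :=
  ∑ u ∈ S, ∑ v ∈ S, R u v + ∑ u ∈ S, (h u : ℝ)

/-- The extremal bounds along the growth. -/
structure Bnd (G : SimpleGraph V) (C S : Finset V) (R : V → V → ℝ) (h : V → ℕ) : Prop where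
  low : ∀ x ∈ S, (S.card : ℝ) * h x + BB C.card S.card ≤ Tot S R h
  eq : ∀ x ∈ S, Tot S R h = (S.card : ℝ) * h x + BB C.card S.card → 6 ≤ S.card →
    C.card < S.card → ∃ w ∈ C, (∀ y ∈ S, y ∉ C → G.Adj y w) ∧ h x = 1
  star : ∀ w ∈ C, (∀ y ∈ S, y ∉ C → G.Adj y w) → Tot S R h = S.card + BB C.card S.card

theorem le_sum_aux (s : Finset V) (f : V → ℝ) (b : ℝ) (hf : ∀ y ∈ s, b ≤ f y) :
    s.card * b ≤ ∑ y ∈ s, f y := by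
  have := Finset.card_nsmul_le_sum s f b hf
  simpa using this

theorem Bnd.step {G : SimpleGraph V} {C S : Finset V} {R : V → V → ℝ} {h : V → ℕ} {a : V → ℝ}
    (g : Good G C S R h a) (b : Bnd G C S R h) (hC3 : 3 ≤ C.card)
    {z w : V} (hz : z ∉ S) (hw : w ∈ S)
    (hadj : ∀ u ∈ S, G.Adj u z ↔ u = w) {R' : V → V → ℝ} {h' : V → ℕ}
    (r1 : ∀ u ∈ S, ∀ v ∈ S, R' u v = R u v) (r2 : ∀ u ∈ S, R' u z = R u w + 1)
    (r3 : ∀ u ∈ S, R' z u = R w u + 1) (r4 : R' z z = 0)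
    (e1 : ∀ u ∈ S, h' u = h u) (e2 : h' z = h w + 1) :
    Bnd G C (insert z S) R' h' := by
  have hadj' : ∀ u ∈ S, G.Adj z u ↔ u = w := fun u hu => by rw [G.adj_comm]; exact hadj u hu
  have hzC : z ∉ C := fun hc => hz (g.CS hc)
  have hcard : ((insert z S).card : ℝ) = S.card + 1 := by
    rw [Finset.card_insert_of_notMem hz]; push_cast; rfl
  set l : ℝ := (C.card : ℝ) with hl
  have hl3 : (3 : ℝ) ≤ l := by rw [hl]; exact_mod_cast hC3
  set k : ℝ := ((S \ C).card : ℝ) with hk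
  have hn : (S.card : ℝ) = l + k := by
    rw [hl, hk]
    have := Finset.card_sdiff_add_card_eq_card g.CS
    rw [← this]; push_cast; ring
  have hTot : Tot (insert z S) R' h'
      = Tot S R h + 2 * ∑ y ∈ S, R w y + 2 * (l + k) + h w + 1 := by
    unfold Tot
    rw [Finset.sum_insert hz, Finset.sum_insert hz, Finset.sum_insert hz, r4,
      Finset.sum_congr rfl fun y hy => r3 y hy,
      Finset.sum_congr rfl (fun x hx => show ∑ y ∈ insert z S, R' x y
        = R w x + 1 + ∑ y ∈ S, R x y by
          rw [Finset.sum_insert hz, r2 x hx, g.sym x hx w hw,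
            Finset.sum_congr rfl fun y hy => r1 x hx y hy]),
      Finset.sum_congr rfl (fun x hx => show ((h' x : ℕ) : ℝ) = h x by rw [e1 x hx]),
      Finset.sum_add_distrib, Finset.sum_add_distrib, Finset.sum_add_distrib, e2]
    simp only [Finset.sum_const, nsmul_eq_mul, hn]
    push_cast; ring
  set O : ℝ := ∑ y ∈ S \ C, R w y with hO
  have hRw : ∑ y ∈ S, R w y = l * h w + (l ^ 2 - 1) / 6 + O := by
    rw [← Finset.sum_sdiff g.CS, g.csum w hw]; ring
  rw [hRw] at hTot
  have hBB : BB l (l + k + 1) = BB l (l + k) + 2 * l + 4 * k + (l ^ 2 - 1) / 3 := by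
    unfold BB; ring
  have hoff : ∀ y, y ∈ S \ C ↔ y ∈ S ∧ y ∉ C := fun y => Finset.mem_sdiff
  have hk0 : 0 ≤ k := Nat.cast_nonneg _
  have hwh0 : (0 : ℝ) ≤ h w := Nat.cast_nonneg _
  -- lower bounds for `O`
  have O1 : w ∈ C → k ≤ O := by
    intro hwC
    have := le_sum_aux (S \ C) (fun y => R w y) 1 (fun y hy => by
      rw [hoff] at hy
      exact g.ge1 w hw y hy.1 hy.2 (fun e => hy.2 (e ▸ hwC)))
    rw [mul_one] at this; exact this
  have O1eq : w ∈ C → O = k → ∀ y ∈ insert z S, y ∉ C → G.Adj y w := by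
    intro hwC he y hy hyC
    rw [Finset.mem_insert] at hy
    rcases hy with rfl | hy
    · exact (hadj' w hw).2 rfl
    have h0 : ∑ y ∈ S \ C, (R w y - 1) = 0 := by
      rw [Finset.sum_sub_distrib, ← hO, he]; simp [hk]
    have hnn : ∀ y ∈ S \ C, 0 ≤ R w y - 1 := by
      intro y hy
      rw [hoff] at hy
      linarith [g.ge1 w hw y hy.1 hy.2 (fun e => hy.2 (e ▸ hwC))]
    have h2 := (Finset.sum_eq_zero_iff_of_nonneg hnn).1 h0 y ((hoff y).2 ⟨hy, hyC⟩)
    by_contra hna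
    have := g.gt1 w hw y hy hyC (fun e => hyC (e ▸ hwC)) (fun e => hna e.symm)
    linarith
  have kerase : ∀ y ∈ S \ C, (((S \ C).erase y).card : ℝ) = k - 1 := by
    intro y hy
    rw [Finset.card_erase_of_mem hy, Nat.cast_sub (Finset.card_pos.2 ⟨y, hy⟩)]; simp [hk]
  have O2 : ∀ x ∈ S, x ∉ C → w ∈ C → k - 1 + h x ≤ O := by
    intro x hx hxC hwC
    have hx' := (hoff x).2 ⟨hx, hxC⟩
    have := le_sum_aux ((S \ C).erase x) (fun y => R w y) 1 (fun y hy => by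
      have hy := (hoff y).1 (Finset.mem_of_mem_erase hy)
      exact g.ge1 w hw y hy.1 hy.2 (fun e => hy.2 (e ▸ hwC)))
    rw [kerase x hx'] at this
    rw [hO, ← Finset.add_sum_erase _ _ hx']
    have h3 := g.lip x hx w hw
    rw [g.sym x hx w hw, g.h0 w hwC] at h3
    push_cast at h3
    linarith
  have Ow : w ∉ C → O = ∑ y ∈ (S \ C).erase w, R w y := by
    intro hwC
    rw [hO, ← Finset.add_sum_erase _ _ ((hoff w).2 ⟨hw, hwC⟩), g.diag w hw, zero_add]
  have ge1w : ∀ y ∈ (S \ C).erase w, 1 ≤ R w y := by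
    intro y hy
    have hy' := (hoff y).1 (Finset.mem_of_mem_erase hy)
    exact g.ge1 w hw y hy'.1 hy'.2 (Finset.ne_of_mem_erase hy).symm
  have O3 : w ∉ C → k - 1 ≤ O := by
    intro hwC
    have := le_sum_aux ((S \ C).erase w) (fun y => R w y) 1 ge1w
    rw [kerase w ((hoff w).2 ⟨hw, hwC⟩)] at this
    rw [Ow hwC]; linarith
  have kerase2 : ∀ x ∈ S, x ∉ C → w ∉ C → x ≠ w →
      ((((S \ C).erase w).erase x).card : ℝ) = k - 2 := by
    intro x hx hxC hwC hxw
    have hx' := Finset.mem_erase.2 ⟨hxw, (hoff x).2 ⟨hx, hxC⟩⟩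
    rw [Finset.card_erase_of_mem hx', Nat.cast_sub (Finset.card_pos.2 ⟨x, hx'⟩),
      kerase w ((hoff w).2 ⟨hw, hwC⟩)]; push_cast; ring
  have O4 : ∀ x ∈ S, x ∉ C → w ∉ C → x ≠ w → k - 2 + (h x - h w) ≤ O := by
    intro x hx hxC hwC hxw
    have hx' := Finset.mem_erase.2 ⟨hxw, (hoff x).2 ⟨hx, hxC⟩⟩
    have := le_sum_aux (((S \ C).erase w).erase x) (fun y => R w y) 1
      (fun y hy => ge1w y (Finset.mem_of_mem_erase hy))
    rw [kerase2 x hx hxC hwC hxw] at this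
    rw [Ow hwC, ← Finset.add_sum_erase _ _ hx']
    have h3 := g.lip x hx w hw
    rw [g.sym x hx w hw] at h3
    linarith
  have hw1 : w ∉ C → (1 : ℝ) ≤ h w := fun hwC => by exact_mod_cast g.h1 w hw hwC
  -- the bound for old vertices
  have oldx : ∀ x ∈ S, 
      (l + k + 1) * h x + BB l (l + k + 1) ≤ Tot (insert z S) R' h' ∧
      (Tot (insert z S) R' h' = (l + k + 1) * h x + BB l (l + k + 1) →
        ∃ w ∈ C, (∀ y ∈ insert z S, y ∉ C → G.Adj y w) ∧ h x = 1) := by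
    intro x hx
    have hb := b.low x hx
    rw [hn] at hb
    rw [hTot, hBB]
    by_cases hwC : w ∈ C
    · have hw0 : (h w : ℝ) = 0 := by rw [g.h0 w hwC]; simp
      by_cases hxC : x ∈ C
      · have hx0 : (h x : ℝ) = 0 := by rw [g.h0 x hxC]; simp
        rw [hx0] at hb ⊢
        rw [hw0]
        have := O1 hwC
        constructor
        · linarith
        · intro he; exfalso; linarith
      · have hx1 : (1 : ℝ) ≤ h x := by exact_mod_cast g.h1 x hx hxC
        have h2 := O2 x hx hxC hwC
        rw [hw0]
        constructor
        · linarith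
        · intro he
          have hx1' : (h x : ℝ) = 1 := by linarith
          refine ⟨w, hwC, O1eq hwC ?_, by exact_mod_cast hx1'⟩
          rw [hx1'] at *
          linarith
    · have h1 := hw1 hwC
      have hlw : l ≤ l * h w := by nlinarith
      have hlw3 : 3 * h w ≤ l * h w := by nlinarith
      suffices hs : (l + k + 1) * h x + (BB l (l + k) + 2 * l + 4 * k + (l ^ 2 - 1) / 3)
          < Tot S R h + 2 * (l * h w + (l ^ 2 - 1) / 6 + O) + 2 * (l + k) + h w + 1 from
        ⟨hs.le, fun he => absurd he hs.ne'⟩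
      by_cases hxC : x ∈ C
      · have hx0 : (h x : ℝ) = 0 := by rw [g.h0 x hxC]; simp
        rw [hx0] at hb ⊢
        linarith [O3 hwC]
      · by_cases hxw : x = w
        · subst hxw; linarith [O3 hwC]
        · have := O4 x hx hxC hwC hxw
          have hx1 : (1 : ℝ) ≤ h x := by exact_mod_cast g.h1 x hx hxC
          linarith
  -- the bound for the new vertex
  have newz : 
      (l + k + 1) * (h w + 1) + BB l (l + k + 1) ≤ Tot (insert z S) R' h' ∧
      (Tot (insert z S) R' h' = (l + k + 1) * (h w + 1) + BB l (l + k + 1) → 5 ≤ l + k →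
        ∃ w' ∈ C, (∀ y ∈ insert z S, y ∉ C → G.Adj y w') ∧ h w + 1 = 1) := by
    rw [hTot, hBB]
    by_cases hwC : w ∈ C
    · have hw0 : (h w : ℝ) = 0 := by rw [g.h0 w hwC]; simp
      have hT : l + k + BB l (l + k) ≤ Tot S R h := by
        by_cases hemp : ∃ y ∈ S, y ∉ C
        · obtain ⟨y, hy, hyC⟩ := hemp
          have h1 := b.low y hy
          have h2 : (1 : ℝ) ≤ h y := by exact_mod_cast g.h1 y hy hyC
          rw [hn] at h1
          nlinarith
        · push Not at hemp
          have := b.star w hwC (fun y hy hyC => absurd (hemp y hy) hyC)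
          rw [hn] at this
          linarith
      have := O1 hwC
      rw [hw0]
      constructor
      · linarith
      · intro he _
        exact ⟨w, hwC, O1eq hwC (by linarith), by rw [g.h0 w hwC]⟩
    · have h1 := hw1 hwC
      have hlw : l ≤ l * h w := by nlinarith
      obtain ⟨p, hp, hp1, hp2, hp3⟩ := g.par w hw hwC
      by_cases hch : ∃ v ∈ S, G.Adj w v ∧ h v = h w + 1
      · obtain ⟨v, hv, -, hv2⟩ := hch
        suffices hs : (l + k + 1) * (h w + 1) + (BB l (l + k) + 2 * l + 4 * k + (l ^ 2 - 1) / 3)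
            < Tot S R h + 2 * (l * h w + (l ^ 2 - 1) / 6 + O) + 2 * (l + k) + h w + 1 from
          ⟨hs.le, fun he => absurd he hs.ne'⟩
        have hb := b.low v hv
        rw [hv2, hn] at hb
        push_cast at hb
        have := O3 hwC
        linarith
      · have hnb : ∀ v ∈ S, G.Adj w v → v = p := by
          intro v hv hwv
          rcases hp3 v hv hwv with e | e
          · exact e
          · exact absurd ⟨v, hv, hwv, e⟩ hch
        have hb := b.low w hw
        rw [hn] at hb
        by_cases hpC : p ∈ C
        · have hw1' : (h w : ℝ) = 1 := by rw [← hp1, g.h0 p hpC]; simp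
          have hO2 : 2 * (k - 1) ≤ O := by
            have := le_sum_aux ((S \ C).erase w) (fun y => R w y) 2 (fun y hy => by
              have hy' := (hoff y).1 (Finset.mem_of_mem_erase hy)
              refine g.ge2 w hw y hy'.1 hwC hy'.2 (Finset.ne_of_mem_erase hy).symm ?_
              intro hA
              exact hy'.2 (hnb y hy'.1 hA ▸ hpC))
            rw [kerase w ((hoff w).2 ⟨hw, hwC⟩)] at this
            rw [Ow hwC]; linarith
          have hk1 : 1 ≤ k := by
            rw [hk]; exact_mod_cast Finset.card_pos.2 ⟨w, (hoff w).2 ⟨hw, hwC⟩⟩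
          rw [hw1'] at hb ⊢
          constructor
          · linarith
          · intro he h5; exfalso; linarith
        · have hph : (1 : ℝ) ≤ h p := by exact_mod_cast g.h1 p hp hpC
          have hw2 : (2 : ℝ) ≤ h w := by rw [← hp1]; push_cast; linarith
          have hpw : p ≠ w := fun e => by rw [e] at hp1; omega
          have hp' := Finset.mem_erase.2 ⟨hpw, (hoff p).2 ⟨hp, hpC⟩⟩
          have hO2 : 1 + 2 * (k - 2) ≤ O := by
            have := le_sum_aux (((S \ C).erase w).erase p) (fun y => R w y) 2 (fun y hy => by
              have hy1 := Finset.mem_of_mem_erase hy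
              have hy' := (hoff y).1 (Finset.mem_of_mem_erase hy1)
              refine g.ge2 w hw y hy'.1 hwC hy'.2 (Finset.ne_of_mem_erase hy1).symm ?_
              intro hA
              exact Finset.ne_of_mem_erase hy (hnb y hy'.1 hA))
            rw [kerase2 p hp hpC hwC hpw] at this
            rw [Ow hwC, ← Finset.add_sum_erase _ _ hp']
            linarith [ge1w p hp']
          suffices hs : (l + k + 1) * (h w + 1) +
                (BB l (l + k) + 2 * l + 4 * k + (l ^ 2 - 1) / 3)
              < Tot S R h + 2 * (l * h w + (l ^ 2 - 1) / 6 + O) + 2 * (l + k) + h w + 1 from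
            ⟨hs.le, fun he => absurd he hs.ne'⟩
          nlinarith
  refine ⟨?_, ?_, ?_⟩
  · intro x hx
    rw [hcard, hn]
    rw [Finset.mem_insert] at hx
    rcases hx with rfl | hx
    · rw [e2]; push_cast; exact newz.1
    · rw [e1 x hx]; exact (oldx x hx).1
  · intro x hx
    rw [hcard, hn]
    intro he h6 _
    rw [Finset.mem_insert] at hx
    rcases hx with rfl | hx
    · rw [e2] at he ⊢
      push_cast at he
      refine newz.2 he ?_
      rw [Finset.card_insert_of_notMem hz] at h6
      rw [← hn]
      have : 5 ≤ S.card := by omega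
      exact_mod_cast this
    · rw [e1 x hx] at he ⊢; exact (oldx x hx).2 he
  · intro w0 hw0 hall
    have hw : w0 = w := (hadj' w0 (g.CS hw0)).1 (hall z (Finset.mem_insert_self _ _) hzC)
    subst hw
    have hb := b.star w0 hw0 (fun y hy hyC => hall y (Finset.mem_insert_of_mem hy) hyC)
    have hOk : O = k := by
      rw [hO, Finset.sum_congr rfl (fun y hy => ?_ : ∀ y ∈ S \ C, R w0 y = 1)]
      · simp [hk]
      · rw [hoff] at hy
        exact g.adj1 w0 (g.CS hw0) y hy.1 hy.2 (hall y (Finset.mem_insert_of_mem hy.1) hy.2).symm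
    rw [hTot, hcard, hb, hn, hBB, hOk, g.h0 w0 hw0]
    push_cast; ring

/-- Twice the number of edges inside `S`. -/
noncomputable def EE (G : SimpleGraph V) (S : Finset V) : ℝ :=
  ∑ u ∈ S, ∑ v ∈ S, (if G.Adj u v then (1 : ℝ) else 0)

theorem EE_insert (G : SimpleGraph V) (S : Finset V) {z : V} (hz : z ∉ S) :
    EE G (insert z S) = EE G S + 2 * ∑ v ∈ S, (if G.Adj z v then (1 : ℝ) else 0) := by
  unfold EE
  rw [Finset.sum_insert hz, Finset.sum_insert hz, if_neg (G.loopless.irrefl z),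
    Finset.sum_congr rfl (fun u _ => Finset.sum_insert hz), Finset.sum_add_distrib,
    Finset.sum_congr rfl (fun u _ => if_congr (G.adj_comm u z) rfl rfl)]
  ring

theorem exists_cross [Fintype V] {G : SimpleGraph V} (hconn : G.Connected) (S : Finset V)
    (hne : S.Nonempty) (hS : S ≠ Finset.univ) : ∃ w ∈ S, ∃ z, z ∉ S ∧ G.Adj w z := by
  obtain ⟨u, hu⟩ := hne
  obtain ⟨v, hv⟩ : ∃ v, v ∉ S := by
    by_contra hc
    push Not at hc
    exact hS (Finset.eq_univ_iff_forall.2 hc)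
  obtain ⟨p⟩ := hconn.preconnected u v
  obtain ⟨d, -, h1, h2⟩ := p.exists_boundary_dart (S : Set V) (by simpa using hu) (by simpa using hv)
  exact ⟨d.fst, by simpa using h1, d.snd, by simpa using h2, d.adj⟩

theorem one_le_nbr {G : SimpleGraph V} {S : Finset V} {z w : V} (hw : w ∈ S) (h : G.Adj w z) :
    1 ≤ ∑ v ∈ S, (if G.Adj z v then (1 : ℝ) else 0) := by
  have := Finset.single_le_sum (f := fun v => if G.Adj z v then (1 : ℝ) else 0) (s := S)
    (fun v _ => by split_ifs <;> norm_num) hw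
  simpa [h.symm] using this

theorem EE_lower [Fintype V] {G : SimpleGraph V} (hconn : G.Connected) (m : ℕ) :
    ∀ S : Finset V, S.Nonempty → S.card + m = Fintype.card V →
      EE G S + 2 * m ≤ EE G Finset.univ := by
  induction m with
  | zero =>
    intro S _ h
    have : S = Finset.univ := by
      rw [← Finset.card_eq_iff_eq_univ]; simpa using h
    rw [this]; simp
  | succ m ih =>
    intro S hne h
    have hS : S ≠ Finset.univ := by
      intro e; rw [e, Finset.card_univ] at h; omega
    obtain ⟨w, hw, z, hz, hwz⟩ := exists_cross hconn S hne hS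
    have h1 := ih (insert z S) (Finset.insert_nonempty _ _) (by
      rw [Finset.card_insert_of_notMem hz]; omega)
    rw [EE_insert G S hz] at h1
    have := one_le_nbr hw hwz
    push_cast; linarith

theorem grow [Fintype V] {G : SimpleGraph V} (hconn : G.Connected)
    (hE : EE G Finset.univ = 2 * Fintype.card V) {C : Finset V} (hC3 : 3 ≤ C.card) (m : ℕ) :
    ∀ (S : Finset V) (R : V → V → ℝ) (h : V → ℕ) (a : V → ℝ), S.card + m = Fintype.card V →
      Good G C S R h a → Bnd G C S R h →
      ∃ R' h' a', Good G C Finset.univ R' h' a' ∧ Bnd G C Finset.univ R' h' := by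
  induction m with
  | zero =>
    intro S R h a hc g b
    have : S = Finset.univ := by
      rw [← Finset.card_eq_iff_eq_univ]; simpa using hc
    subst this
    exact ⟨R, h, a, g, b⟩
  | succ m ih =>
    intro S R h a hc g b
    have hne : S.Nonempty := by
      have h1 : 0 < C.card := by omega
      exact (Finset.card_pos.1 h1).mono g.CS
    have hS : S ≠ Finset.univ := by
      intro e; rw [e, Finset.card_univ] at hc; omega
    obtain ⟨w, hw, z, hz, hwz⟩ := exists_cross hconn S hne hS
    have hcz : (insert z S).card + m = Fintype.card V := by
      rw [Finset.card_insert_of_notMem hz]; omega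
    have h1 := EE_lower hconn m (insert z S) (Finset.insert_nonempty _ _) hcz
    rw [EE_insert G S hz, hE] at h1
    have h2 : EE G S = 2 * S.card := g.E
    have h3 : (Fintype.card V : ℝ) = S.card + (m + 1) := by rw [← hc]; push_cast; ring
    have h4 : ∑ v ∈ S, (if G.Adj z v then (1 : ℝ) else 0) ≤ 1 := by linarith
    have huniq : ∀ u ∈ S, G.Adj u z ↔ u = w := by
      intro u hu
      constructor
      · intro huz
        by_contra hne
        have hsub : ({u, w} : Finset V) ⊆ S := by
          intro y hy; simp only [Finset.mem_insert, Finset.mem_singleton] at hy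
          rcases hy with rfl | rfl <;> assumption
        have := Finset.sum_le_sum_of_subset_of_nonneg (f := fun v => if G.Adj z v then (1 : ℝ) else 0)
          hsub (fun v _ _ => by split_ifs <;> norm_num)
        rw [Finset.sum_pair hne, if_pos huz.symm, if_pos hwz.symm] at this
        linarith
      · rintro rfl; exact hwz
    set R' : V → V → ℝ := fun u v =>
      if u = z then (if v = z then 0 else R w v + 1) else if v = z then R u w + 1 else R u v with hR'
    set h' : V → ℕ := fun u => if u = z then h w + 1 else h u with hh'
    have hnz : ∀ u ∈ S, u ≠ z := fun u hu e => hz (e ▸ hu)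
    have r1 : ∀ u ∈ S, ∀ v ∈ S, R' u v = R u v := fun u hu v hv => by
      simp only [hR', if_neg (hnz u hu), if_neg (hnz v hv)]
    have r2 : ∀ u ∈ S, R' u z = R u w + 1 := fun u hu => by
      simp only [hR', if_neg (hnz u hu), if_true]
    have r3 : ∀ u ∈ S, R' z u = R w u + 1 := fun u hu => by
      simp only [hR', if_neg (hnz u hu), if_true]
    have r4 : R' z z = 0 := by simp only [hR', if_true]
    have e1 : ∀ u ∈ S, h' u = h u := fun u hu => by simp only [hh', if_neg (hnz u hu)]
    have e2 : h' z = h w + 1 := by simp only [hh', if_true]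
    obtain ⟨a', g'⟩ := g.step hz hw huniq r1 r2 r3 r4 e1 e2
    exact ih (insert z S) R' h' a' hcz g' (b.step g hC3 hz hw huniq r1 r2 r3 r4 e1 e2)

/-- Resistance in the cycle. -/
noncomputable def qq {l : ℕ} (d : Fin l) : ℝ := (d.val : ℝ) * (l - d.val) / l

theorem fin_val_succ' {l : ℕ} [NeZero l] (hl : 3 ≤ l) (d : Fin l) :
    (d + 1).val = if d.val + 1 = l then 0 else d.val + 1 := by
  rw [Fin.val_add, Fin.val_one', Nat.mod_eq_of_lt (show 1 < l by omega)]
  split_ifs with h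
  · rw [h, Nat.mod_self]
  · exact Nat.mod_eq_of_lt (by omega)

theorem fin_val_pred' {l : ℕ} [NeZero l] (hl : 3 ≤ l) (d : Fin l) :
    (d - 1).val = if d.val = 0 then l - 1 else d.val - 1 := by
  have h := fin_val_succ' hl (d - 1)
  rw [sub_add_cancel] at h
  have := (d - 1).isLt
  split_ifs at h ⊢ <;> omega

theorem qq_zero {l : ℕ} [NeZero l] : qq (0 : Fin l) = 0 := by simp [qq]

theorem qq_neg {l : ℕ} [NeZero l] (d : Fin l) : qq (-d) = qq d := by
  by_cases h : d = 0
  · simp [h]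
  · have h1 : (-d).val = l - d.val := by
      rw [Fin.val_neg, if_neg h]
    unfold qq
    rw [h1, Nat.cast_sub d.isLt.le]
    ring

theorem qq_lap {l : ℕ} [NeZero l] (hl : 3 ≤ l) (d : Fin l) :
    2 * qq d - qq (d + 1) - qq (d - 1) = 2 / l - if d = 0 then 2 else 0 := by
  have hl0 : (l : ℝ) ≠ 0 := by positivity
  have hd := d.isLt
  have e0 : d = 0 ↔ d.val = 0 := by rw [Fin.ext_iff]; simp
  unfold qq
  rw [fin_val_succ' hl, fin_val_pred' hl, if_congr e0 rfl rfl]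
  by_cases h0 : d.val = 0
  · rw [if_pos h0, if_pos h0, if_neg (by omega), h0, Nat.cast_sub (by omega)]
    field_simp; push_cast; ring
  · rw [if_neg h0, if_neg h0, Nat.cast_sub (show 1 ≤ d.val by omega)]
    by_cases h1 : d.val + 1 = l
    · rw [if_pos h1]
      have h1' : (d.val : ℝ) + 1 = l := by exact_mod_cast h1
      have : (d.val : ℝ) = l - 1 := by linarith
      rw [this]
      field_simp; push_cast; ring
    · rw [if_neg h1]
      field_simp; push_cast; ring

theorem qq_sum {l : ℕ} [NeZero l] (hl : 3 ≤ l) : ∑ d : Fin l, qq d = ((l : ℝ) ^ 2 - 1) / 6 := by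
  have hl0 : (l : ℝ) ≠ 0 := by positivity
  unfold qq
  rw [Fin.sum_univ_eq_sum_range (fun d : ℕ => (d : ℝ) * (l - d) / l) l]
  have : ∀ (m : ℕ) (x : ℝ), ∑ d ∈ Finset.range m, (d : ℝ) * (x - d) / x
      = ((m : ℝ) * (m - 1) / 2 * x - (m : ℝ) * (m - 1) * (2 * m - 1) / 6) / x := by
    intro m x
    induction m with
    | zero => simp
    | succ m ih => rw [Finset.sum_range_succ, ih]; push_cast; ring
  rw [this]
  field_simp; ring

theorem qq_pos {l : ℕ} [NeZero l] (d : Fin l) (h : d ≠ 0) : 0 < qq d := by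
  have h1 : (0 : ℝ) < d.val := by
    have : d.val ≠ 0 := fun e => h (Fin.ext (by simpa using e))
    exact_mod_cast Nat.pos_of_ne_zero this
  have h2 : (d.val : ℝ) < l := by exact_mod_cast d.isLt
  unfold qq
  apply div_pos (mul_pos h1 (by linarith)) (by linarith)

theorem fin_succ_ne_pred {l : ℕ} [NeZero l] (hl : 3 ≤ l) (i : Fin l) : i + 1 ≠ i - 1 := by
  intro h
  have h1 := congrArg Fin.val h
  rw [fin_val_succ' hl, fin_val_pred' hl] at h1
  have := i.isLt
  split_ifs at h1 <;> omega

theorem base_struct (G : SimpleGraph V) (l : ℕ) [NeZero l] (hl : 3 ≤ l)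
    (c : Fin l → V) (hinj : Function.Injective c)
    (hadj : ∀ i : Fin l, G.Adj (c i) (c (i + 1)))
    (hE : EE G (Finset.univ.image c) ≤ 2 * l) :
    (∀ i j, G.Adj (c i) (c j) ↔ j = i + 1 ∨ j = i - 1) ∧
    ∃ R h a, Good G (Finset.univ.image c) (Finset.univ.image c) R h a ∧
      Bnd G (Finset.univ.image c) (Finset.univ.image c) R h := by
  set C := Finset.univ.image c with hC
  have hsum : ∀ F : V → ℝ, ∑ v ∈ C, F v = ∑ i, F (c i) := by
    intro F; rw [hC, Finset.sum_image (fun _ _ _ _ h => hinj h)]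
  have hcard : C.card = l := by
    rw [hC, Finset.card_image_of_injective _ hinj]; simp
  have hadj2 : ∀ i : Fin l, G.Adj (c i) (c (i - 1)) := by
    intro i
    have := hadj (i - 1)
    rw [sub_add_cancel] at this
    exact this.symm
  have hA' : ∀ (i : Fin l) (F : Fin l → ℝ),
      ∑ j, (if j = i + 1 ∨ j = i - 1 then F j else 0) = F (i + 1) + F (i - 1) := by
    intro i F
    have : ∀ j, (if j = i + 1 ∨ j = i - 1 then F j else 0)
        = (if j = i + 1 then F j else 0) + (if j = i - 1 then F j else 0) := by
      intro j
      by_cases h1 : j = i + 1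
      · have h2 : j ≠ i - 1 := by rw [h1]; exact fin_succ_ne_pred hl i
        simp [h1, fin_succ_ne_pred hl i]
      · simp [h1]
    simp only [this, Finset.sum_add_distrib]
    simp
  have hle : ∀ i j : Fin l, (if j = i + 1 ∨ j = i - 1 then (1 : ℝ) else 0)
      ≤ if G.Adj (c i) (c j) then 1 else 0 := by
    intro i j
    split_ifs with h1 h2
    · exact le_rfl
    · exfalso; apply h2
      rcases h1 with rfl | rfl
      · exact hadj i
      · exact hadj2 i
    · norm_num
    · exact le_rfl
  have hEE : EE G C = ∑ i, ∑ j, (if G.Adj (c i) (c j) then (1 : ℝ) else 0) := by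
    unfold EE
    rw [hsum]
    exact Finset.sum_congr rfl fun i _ => hsum _
  have hle2 : ∀ i ∈ (Finset.univ : Finset (Fin l)),
      ∑ j, (if j = i + 1 ∨ j = i - 1 then (1 : ℝ) else 0)
      ≤ ∑ j, if G.Adj (c i) (c j) then (1 : ℝ) else 0 :=
    fun i _ => Finset.sum_le_sum fun j _ => hle i j
  have hs2 : ∑ i : Fin l, ∑ j, (if j = i + 1 ∨ j = i - 1 then (1 : ℝ) else 0) = 2 * l := by
    rw [Finset.sum_congr rfl fun i _ => hA' i (fun _ => 1)]
    simp; ring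
  have heq : ∑ i : Fin l, ∑ j, (if j = i + 1 ∨ j = i - 1 then (1 : ℝ) else 0)
      = ∑ i, ∑ j, (if G.Adj (c i) (c j) then (1 : ℝ) else 0) := by
    apply le_antisymm (Finset.sum_le_sum hle2)
    rw [hs2, ← hEE]; exact hE
  have hchar : ∀ i j, G.Adj (c i) (c j) ↔ j = i + 1 ∨ j = i - 1 := by
    intro i j
    have h1 := (Finset.sum_eq_sum_iff_of_le hle2).1 heq i (Finset.mem_univ i)
    have h2 := (Finset.sum_eq_sum_iff_of_le (fun j _ => hle i j)).1 h1 j (Finset.mem_univ j)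
    constructor
    · intro h
      by_contra hn
      rw [if_neg hn, if_pos h] at h2
      norm_num at h2
    · rintro (rfl | rfl)
      · exact hadj i
      · exact hadj2 i
  have hEE2 : EE G C = 2 * C.card := by rw [hEE, ← heq, hs2, hcard]
  refine ⟨hchar, ?_⟩
  set R : V → V → ℝ := fun u v => qq (Function.invFun c v - Function.invFun c u) with hR
  have hRc : ∀ i j, R (c i) (c j) = qq (j - i) := by
    intro i j
    simp only [hR, Function.leftInverse_invFun hinj _]
  have hmem : ∀ u ∈ C, ∃ i, u = c i := by
    intro u hu
    rw [hC, Finset.mem_image] at hu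
    obtain ⟨i, -, rfl⟩ := hu
    exact ⟨i, rfl⟩
  have hadjsum : ∀ (i : Fin l) (F : V → ℝ),
      ∑ v ∈ C, (if G.Adj (c i) v then F v else 0) = F (c (i + 1)) + F (c (i - 1)) := by
    intro i F
    rw [hsum, ← hA' i (fun j => F (c j))]
    exact Finset.sum_congr rfl fun j _ => if_congr (hchar i j) rfl rfl
  have hrow : ∀ i : Fin l, ∑ v ∈ C, R (c i) v = ((l : ℝ) ^ 2 - 1) / 6 := by
    intro i
    rw [hsum, Finset.sum_congr rfl fun j _ => hRc i j, ← qq_sum hl]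
    exact Equiv.sum_comp (Equiv.subRight i) (fun d : Fin l => qq d)
  refine ⟨R, fun _ => 0, fun _ => 2 / l, ?_, ?_⟩
  · refine ⟨Finset.Subset.refl _, hEE2, ?_, ?_, ?_, ?_, ?_, ?_, ?_, ?_, ?_, ?_, ?_, ?_, ?_, ?_⟩
    · intro u hu v hv
      obtain ⟨i, rfl⟩ := hmem u hu
      obtain ⟨j, rfl⟩ := hmem v hv
      rw [hRc, hRc, ← qq_neg, neg_sub]
    · intro u hu
      obtain ⟨i, rfl⟩ := hmem u hu
      rw [hRc, sub_self, qq_zero]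
    · intro u hu v hv
      obtain ⟨i, rfl⟩ := hmem u hu
      obtain ⟨j, rfl⟩ := hmem v hv
      rw [hadjsum i (fun v => R (c i) (c j) - R v (c j)), hRc, hRc, hRc]
      have h1 : j - (i + 1) = (j - i) - 1 := by abel
      have h2 : j - (i - 1) = (j - i) + 1 := by abel
      rw [h1, h2]
      have h3 := qq_lap hl (j - i)
      have h4 : c i = c j ↔ j - i = 0 := by
        rw [hinj.eq_iff, sub_eq_zero]; exact eq_comm
      rw [if_congr h4 rfl rfl]
      linarith
    · intro u hu
      rw [Finset.mul_sum, sub_self, Finset.sum_congr rfl (fun v hv => ?_ : ∀ v ∈ C, _ = 2 * R u v)]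
      · simp
      · obtain ⟨j, rfl⟩ := hmem v hv
        rw [hadjsum j (fun _ => 1)]; norm_num
    · intro u hu; rfl
    · intro u hu hu2; exact absurd hu hu2
    · intro u hu
      obtain ⟨i, rfl⟩ := hmem u hu
      rw [hrow, hcard]; simp
    · intro u hu v hv
      obtain ⟨i, rfl⟩ := hmem u hu
      obtain ⟨j, rfl⟩ := hmem v hv
      rw [hRc]
      by_cases h : j - i = 0
      · rw [h, qq_zero]; simp
      · simpa using (qq_pos _ h).le
    · intro u hu v hv hv2; exact absurd hv hv2
    · intro u hu v hv _ hv2; exact absurd hv hv2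
    · intro u hu v hv hv2; exact absurd hv hv2
    · intro u hu v hv huv
      obtain ⟨i, rfl⟩ := hmem u hu
      obtain ⟨j, rfl⟩ := hmem v hv
      rw [hRc]
      refine qq_pos _ fun h => huv ?_
      rw [sub_eq_zero.1 h]
    · intro u hu v hv hv2; exact absurd hv hv2
    · intro u hu hu2; exact absurd hu hu2
  · have hT : Tot C R (fun _ => 0) = l * (((l : ℝ) ^ 2 - 1) / 6) := by
      unfold Tot
      rw [hsum, Finset.sum_congr rfl fun i _ => hrow i]
      simp
    have hB : BB (C.card : ℝ) C.card = l * (((l : ℝ) ^ 2 - 1) / 6) - l := by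
      rw [hcard]; unfold BB; ring
    refine ⟨?_, ?_, ?_⟩
    · intro x _
      rw [hT, hB]
      have : (0 : ℝ) ≤ l := Nat.cast_nonneg _
      simp
    · intro x _ _ _ h; exact absurd h (lt_irrefl _)
    · intro w _ _
      rw [hT, hB, hcard]; ring

theorem main_struct [Fintype V] (G : SimpleGraph V) (n l : ℕ) [NeZero l]
    (hn : Fintype.card V = n) (hconn : G.Connected) (huni : esize G = n)
    (hl : 3 ≤ l) (c : Fin l → V) (hinj : Function.Injective c)
    (hadj : ∀ i : Fin l, G.Adj (c i) (c (i + 1))) :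
    (∀ i j, G.Adj (c i) (c j) ↔ j = i + 1 ∨ j = i - 1) ∧
    ∃ R h a, Good G (Finset.univ.image c) Finset.univ R h a ∧
      Bnd G (Finset.univ.image c) Finset.univ R h ∧
      ∀ x, coverCost G x = Tot Finset.univ R h - n * h x := by
  have hcard : (Finset.univ.image c).card = l := by
    rw [Finset.card_image_of_injective _ hinj]; simp
  have hE : EE G Finset.univ = 2 * n := by
    have h1 := G.sum_degrees_eq_twice_card_edges
    have h2 : G.edgeFinset.card = n := by
      rw [← huni]; unfold esize
      rw [Nat.card_eq_fintype_card, ← SimpleGraph.edgeFinset_card]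
    rw [h2] at h1
    have h3 : EE G Finset.univ = ((∑ v, G.degree v : ℕ) : ℝ) := by
      unfold EE
      push_cast
      refine Finset.sum_congr rfl fun u _ => ?_
      rw [Finset.sum_boole, ← SimpleGraph.card_neighborFinset_eq_degree,
        SimpleGraph.neighborFinset_eq_filter]
    rw [h3, h1]; push_cast; ring
  have hle : l ≤ n := by
    rw [← hn, ← hcard]; exact Finset.card_le_univ _
  obtain ⟨m, hm⟩ := Nat.exists_eq_add_of_le hle
  have hneC : (Finset.univ.image c).Nonempty := by
    rw [← Finset.card_pos, hcard]; omega
  have h1 := EE_lower hconn m (Finset.univ.image c) hneC (by rw [hcard, hn, hm])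
  have hb : EE G (Finset.univ.image c) ≤ 2 * l := by
    rw [hE, hm] at h1; push_cast at h1; linarith
  obtain ⟨hchar, R0, h0, a0, g0, b0⟩ := base_struct G l hl c hinj hadj hb
  refine ⟨hchar, ?_⟩
  obtain ⟨R, h, a, g, b⟩ := grow hconn (by rw [hE, hn]) (by rw [hcard]; exact hl) m _ R0 h0 a0
    (by rw [hcard, hn, hm]) g0 b0
  refine ⟨R, h, a, g, b, ?_⟩
  intro x
  have hU : ∀ u : V, u ∈ (Finset.univ : Finset V) := Finset.mem_univ
  have hdeg : ∀ u, 0 < degR G u := by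
    intro u
    obtain ⟨v, hv⟩ : ∃ v, G.Adj u v := by
      have : Nontrivial V := by
        rw [← Fintype.one_lt_card_iff_nontrivial, hn]; omega
      exact hconn.preconnected.exists_adj_of_nontrivial u
    unfold degR
    exact_mod_cast Finset.card_pos.2 ⟨v, by simpa using hv⟩
  have key := coverCost_of_kernel G n hdeg (by
      rw [← hE]; unfold EE
      exact Finset.sum_congr rfl fun u _ => degR_eq G u) R (fun u => g.diag u (hU u)) a
    (fun u z => g.lap u (hU u) z (hU z)) x
  have hrw : ∀ y, ∑ z, degR G z * R y z = 2 * ∑ z, R y z + 2 * h y - (n - l) := by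
    intro y
    have := g.rw' y (hU y)
    rw [Finset.card_univ, hn, hcard] at this
    rw [← this]
    exact Finset.sum_congr rfl fun z _ => by rw [degR_eq]
  rw [key, hn, Finset.sum_congr rfl fun y _ => hrw y, hrw x]
  unfold Tot
  simp only [Finset.sum_add_distrib, Finset.sum_sub_distrib, ← Finset.mul_sum]
  simp only [Finset.sum_const, Finset.card_univ, hn, nsmul_eq_mul]
  ring

/-- In the star-like situation the outer vertices have height one and a single neighbour. -/
theorem star_off [Fintype V] {G : SimpleGraph V} {C : Finset V} {R : V → V → ℝ} {h : V → ℕ}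
    {a : V → ℝ} (g : Good G C Finset.univ R h a) {w : V} (hw : w ∈ C)
    (hall : ∀ y, y ∉ C → G.Adj y w) :
    ∀ y, y ∉ C → h y = 1 ∧ ∀ v, G.Adj y v ↔ v = w := by
  have hone : ∀ y, y ∉ C → h y = 1 ∧ ∀ v, G.Adj y v → v = w ∨ h v = h y + 1 := by
    intro y hy
    obtain ⟨p, -, hp1, hp2, hp3⟩ := g.par y (Finset.mem_univ y) hy
    have hw0 := g.h0 w hw
    rcases hp3 w (Finset.mem_univ w) (hall y hy) with e | e
    · subst e
      exact ⟨by omega, fun v hv => hp3 v (Finset.mem_univ v) hv⟩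
    · omega
  intro y hy
  refine ⟨(hone y hy).1, fun v => ⟨fun hv => ?_, fun e => e ▸ hall y hy⟩⟩
  rcases (hone y hy).2 v hv with e | e
  · exact e
  · exfalso
    have h1 := (hone y hy).1
    by_cases hvC : v ∈ C
    · have := g.h0 v hvC; omega
    · have := (hone v hvC).1; omega

theorem star_iso [Fintype V] (G : SimpleGraph V) (n l : ℕ) [NeZero l]
    (hn : Fintype.card V = n) (hl : 3 ≤ l) (hln : l < n)
    (c : Fin l → V) (hinj : Function.Injective c)
    (hchar : ∀ i j, G.Adj (c i) (c j) ↔ j = i + 1 ∨ j = i - 1) (i0 : Fin l)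
    (hoff : ∀ y, y ∉ Finset.univ.image c → ∀ v, G.Adj y v ↔ v = c i0) :
    Nonempty (starCycle n l ≃g G) := by
  have hcard : (Finset.univ.image c).card = l := by
    rw [Finset.card_image_of_injective _ hinj]; simp
  have hmemC : ∀ i, c i ∈ Finset.univ.image c := fun i =>
    Finset.mem_image_of_mem c (Finset.mem_univ i)
  have hco : Fintype.card {y : V // y ∉ Finset.univ.image c} = n - l := by
    rw [Fintype.card_subtype_compl, hn, Fintype.card_coe, hcard]
  let σ : Fin (n - l) ≃ {y : V // y ∉ Finset.univ.image c} :=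
    (Fintype.equivFinOfCardEq hco).symm
  let φ : Fin n → V := fun a => if h : a.val < l then c (i0 + ⟨a.val, h⟩)
    else (σ ⟨a.val - l, by have := a.isLt; omega⟩).val
  have φ1 : ∀ (a : Fin n) (h : a.val < l), φ a = c (i0 + ⟨a.val, h⟩) := fun a h => by
    simp only [φ, dif_pos h]
  have φ2 : ∀ (a : Fin n) (h : ¬ a.val < l),
      φ a = (σ ⟨a.val - l, by have := a.isLt; omega⟩).val := fun a h => by
    simp only [φ, dif_neg h]
  have φ3 : ∀ (a : Fin n), ¬ a.val < l → φ a ∉ Finset.univ.image c := fun a h => by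
    rw [φ2 a h]; exact (σ _).2
  have hφinj : Function.Injective φ := by
    intro a b hab
    by_cases ha : a.val < l <;> by_cases hb : b.val < l
    · rw [φ1 a ha, φ1 b hb] at hab
      have := add_left_cancel (hinj hab)
      rw [Fin.ext_iff] at this
      exact Fin.ext this
    · exfalso; apply φ3 b hb; rw [← hab, φ1 a ha]; exact hmemC _
    · exfalso; apply φ3 a ha; rw [hab, φ1 b hb]; exact hmemC _
    · rw [φ2 a ha, φ2 b hb] at hab
      have := σ.injective (Subtype.ext hab)
      rw [Fin.ext_iff] at this
      simp only at this
      exact Fin.ext (by omega)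
  have hφbij : Function.Bijective φ := by
    rw [Fintype.bijective_iff_injective_and_card]
    exact ⟨hφinj, by simp [hn]⟩
  have key : ∀ a b : Fin n, ¬ b.val < l → (G.Adj (φ a) (φ b) ↔ a.val = 0) := by
    intro a b hb
    rw [G.adj_comm, hoff _ (φ3 b hb)]
    by_cases ha : a.val < l
    · rw [φ1 a ha, hinj.eq_iff, add_eq_left, Fin.ext_iff]
      simp
    · constructor
      · intro e; exfalso; apply φ3 a ha; rw [e]; exact hmemC _
      · intro e; omega
  refine ⟨⟨Equiv.ofBijective φ hφbij, ?_⟩⟩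
  intro a b
  simp only [Equiv.ofBijective_apply]
  unfold starCycle
  rw [SimpleGraph.fromRel_adj]
  have hab : a ≠ b ↔ a.val ≠ b.val := by rw [ne_eq, Fin.ext_iff]
  rw [hab]
  by_cases hb : b.val < l
  · by_cases ha : a.val < l
    · rw [φ1 a ha, φ1 b hb, hchar]
      have e1 : i0 + (⟨b.val, hb⟩ : Fin l) = i0 + ⟨a.val, ha⟩ + 1 ↔
          b.val = if a.val + 1 = l then 0 else a.val + 1 := by
        rw [add_assoc, add_right_inj, Fin.ext_iff, fin_val_succ' hl]
      have e2 : i0 + (⟨b.val, hb⟩ : Fin l) = i0 + ⟨a.val, ha⟩ - 1 ↔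
          b.val = if a.val = 0 then l - 1 else a.val - 1 := by
        rw [add_sub_assoc, add_right_inj, Fin.ext_iff, fin_val_pred' hl]
      rw [e1, e2]
      split_ifs <;> omega
    · rw [G.adj_comm, key b a ha]
      omega
  · rw [key a b hb]
    omega

/-- For an `n`-vertex unicyclic graph `G` with cycle length
`l < n`, `n ≥ 6`, and any `x ∈ V(G)`,
`CC(x) ≥ −l³/6 + n·l²/3 + (7−12n)l/6 + n(6n−7)/3`, with equality iff
`G ≅ S_n^l` and `x` is a pendant vertex. -/
theorem coverCost_lower [Fintype V] (G : SimpleGraph V) (n l : ℕ) [NeZero l]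
    (hn : Fintype.card V = n) (hconn : G.Connected) (huni : esize G = n)
    (hl : 3 ≤ l) (hln : l ≠ n) (hn6 : 6 ≤ n)
    (c : Fin l → V) (hinj : Function.Injective c)
    (hadj : ∀ i : Fin l, G.Adj (c i) (c (i + 1))) (x : V) :
    -(l : ℝ)^3/6 + (n : ℝ)*(l : ℝ)^2/3 + (7-12*(n : ℝ))*(l : ℝ)/6
        + (n : ℝ)*(6*(n : ℝ)-7)/3 ≤ coverCost G x ∧
    (coverCost G x = -(l : ℝ)^3/6 + (n : ℝ)*(l : ℝ)^2/3 + (7-12*(n : ℝ))*(l : ℝ)/6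
        + (n : ℝ)*(6*(n : ℝ)-7)/3 ↔
      Nonempty (starCycle n l ≃g G) ∧ G.degree x = 1) := by
  have hlt : l < n := by
    have h1 := Fintype.card_le_of_injective c hinj
    rw [Fintype.card_fin, hn] at h1
    omega
  have hB : ∀ m : ℕ, BB (l : ℝ) n = -(l : ℝ)^3/6 + (n : ℝ)*(l : ℝ)^2/3
      + (7-12*(n : ℝ))*(l : ℝ)/6 + (n : ℝ)*(6*(n : ℝ)-7)/3 := fun _ => rfl
  rw [← hB 0]
  have hcard : ∀ c : Fin l → V, Function.Injective c → (Finset.univ.image c).card = l := by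
    intro c hinj
    rw [Finset.card_image_of_injective _ hinj]; simp
  obtain ⟨hchar, R, h, a, g, b, hCC⟩ := main_struct G n l hn hconn huni hl c hinj hadj
  have hlow := b.low x (Finset.mem_univ x)
  have heq := b.eq x (Finset.mem_univ x)
  rw [Finset.card_univ, hn, hcard c hinj] at hlow heq
  refine ⟨by rw [hCC]; linarith, ?_, ?_⟩
  · intro he
    rw [hCC] at he
    obtain ⟨w, hw, hall, hx1⟩ := heq (by linarith) hn6 hlt
    have hoff := star_off g hw (fun y hy => hall y (Finset.mem_univ y) hy)
    have hxC : x ∉ Finset.univ.image c := by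
      intro hx
      have := g.h0 x hx
      omega
    have hw2 := hw
    rw [Finset.mem_image] at hw2
    obtain ⟨i0, -, rfl⟩ := hw2
    refine ⟨star_iso G n l hn hl hlt c hinj hchar i0 (fun y hy => (hoff y hy).2), ?_⟩
    rw [SimpleGraph.degree_eq_one_iff_existsUnique_adj]
    exact ⟨c i0, ((hoff x hxC).2 _).2 rfl, fun v hv => ((hoff x hxC).2 v).1 hv⟩
  · rintro ⟨⟨ψ⟩, hdeg⟩
    let c' : Fin l → V := fun i => ψ ⟨i.val, by have := i.isLt; omega⟩
    have hinj' : Function.Injective c' := by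
      intro i j hij
      have := ψ.injective hij
      rw [Fin.ext_iff] at this
      exact Fin.ext this
    have hadj' : ∀ i : Fin l, G.Adj (c' i) (c' (i + 1)) := by
      intro i
      rw [ψ.map_adj_iff]
      unfold starCycle
      rw [SimpleGraph.fromRel_adj, ne_eq, Fin.ext_iff]
      simp only [fin_val_succ' hl]
      have := i.isLt
      split_ifs <;> omega
    obtain ⟨hchar', R', h', a', g', b', hCC'⟩ := main_struct G n l hn hconn huni hl c' hinj' hadj'
    have hall : ∀ y, y ∉ Finset.univ.image c' → G.Adj y (c' 0) := by
      intro y hy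
      obtain ⟨j, rfl⟩ := ψ.surjective y
      have hj : ¬ j.val < l := by
        intro hj
        exact hy (Finset.mem_image.2 ⟨⟨j.val, hj⟩, Finset.mem_univ _, rfl⟩)
      rw [ψ.map_adj_iff]
      unfold starCycle
      rw [SimpleGraph.fromRel_adj, ne_eq, Fin.ext_iff]
      have hz0 : ((0 : Fin l) : ℕ) = 0 := by simp
      refine ⟨fun e => ?_, Or.inr (Or.inr (Or.inr ⟨hz0, not_lt.1 hj⟩))⟩
      have e' : j.val = ((0 : Fin l) : ℕ) := e
      omega
    have h0C : c' 0 ∈ Finset.univ.image c' := Finset.mem_image_of_mem c' (Finset.mem_univ _)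
    have hT := b'.star (c' 0) h0C (fun y _ hy => hall y hy)
    rw [Finset.card_univ, hn, hcard c' hinj'] at hT
    have hxC : x ∉ Finset.univ.image c' := by
      intro hx
      rw [Finset.mem_image] at hx
      obtain ⟨i, -, hi⟩ := hx
      rw [← hi, SimpleGraph.degree_eq_one_iff_existsUnique_adj] at hdeg
      have h1 := hdeg.unique ((hchar' i _).2 (Or.inl rfl)) ((hchar' i _).2 (Or.inr rfl))
      exact fin_succ_ne_pred hl i (hinj' h1)
    have hx1 := (star_off g' h0C hall x hxC).1
    rw [hCC', hT, hx1]
    push_cast; ring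
end

section
/- Let G be an n-vertex unicyclic graph whose unique cycle has length l, and let x ∈ V(G). Then RC(x) ≥ l³/6 − 7l/6 + n, with equality if and only if G is S_n^l and x is the vertex of degree n−l+2. -/
open SimpleGraph Finset

attribute [local instance] Classical.propDecidable

variable {V : Type*}

namespace RCLow

/-- Maximum principle. -/
lemma maxPrin [Fintype V] (G : SimpleGraph V) (hconn : G.Connected) (x : V) (u : V → ℝ)
    (hx : u x ≤ 0)
    (hu : ∀ y, y ≠ x → ∑ z ∈ univ.filter (fun z => G.Adj y z), (u y - u z) ≤ 0) (y : V) :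
    u y ≤ 0 := by
  obtain ⟨v0, -, hv0⟩ := Finset.exists_max_image (univ : Finset V) u ⟨x, mem_univ x⟩
  by_contra hy
  push Not at hy
  have hM : 0 < u v0 := lt_of_lt_of_le hy (hv0 y (mem_univ y))
  have key : ∀ v w : V, G.Walk v w → u v = u v0 → u w = u v0 := by
    intro v w p
    induction p with
    | nil => exact id
    | @cons a b c' h p ih =>
      intro ha
      apply ih
      have hax : a ≠ x := by
        rintro rfl
        linarith
      have h1 := hu a hax
      have h2 : ∀ z ∈ univ.filter (fun z => G.Adj a z), 0 ≤ u a - u z := by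
        intro z _
        have := hv0 z (mem_univ z)
        linarith
      have h3 := (Finset.sum_eq_zero_iff_of_nonneg h2).1 (le_antisymm h1 (Finset.sum_nonneg h2)) b
        (by simp [h])
      linarith
  obtain ⟨p⟩ := hconn.preconnected v0 x
  have := key v0 x p rfl
  linarith

lemma degR_pos [Fintype V] (G : SimpleGraph V) {y z : V} (h : G.Adj y z) : 0 < degR G y := by
  unfold degR
  exact_mod_cast Finset.card_pos.2 ⟨z, by simp [h]⟩

/-- killed operator -/
lemma hitMat_mulVec [Fintype V] (G : SimpleGraph V) (x : V) (u : V → ℝ) (y : V) :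
    (∑ z, hitMat G x y z * u z) = (degR G y)⁻¹ *
      ∑ z ∈ univ.filter (fun z => G.Adj y z), (if z = x then 0 else u z) := by
  rw [Finset.sum_filter, Finset.mul_sum]
  refine Finset.sum_congr rfl fun z _ => ?_
  simp only [hitMat, Matrix.of_apply]
  split_ifs <;> simp

lemma killed_max [Fintype V] (G : SimpleGraph V) (hconn : G.Connected)
    (hdeg : ∀ y, 0 < degR G y) (x : V) (u : V → ℝ)
    (hu : ∀ y, u y ≤ ∑ z, hitMat G x y z * u z) (y : V) : u y ≤ 0 := by
  have h1 : ∀ y, (if y = x then 0 else u y) ≤ 0 := by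
    apply maxPrin G hconn x
    · simp
    · intro y hy
      have := hu y
      rw [hitMat_mulVec] at this
      rw [Finset.sum_sub_distrib, Finset.sum_const, nsmul_eq_mul]
      simp only [if_neg hy]
      have hd := hdeg y
      have h2 := mul_le_mul_of_nonneg_left this hd.le
      rw [← mul_assoc, mul_inv_cancel₀ hd.ne', one_mul] at h2
      unfold degR at h2
      linarith
  refine (hu y).trans ?_
  rw [hitMat_mulVec]
  exact mul_nonpos_of_nonneg_of_nonpos (inv_nonneg.2 (hdeg y).le) (Finset.sum_nonpos fun z _ => h1 z)

lemma hitMat_nonneg [Fintype V] (G : SimpleGraph V) (x y z : V) : 0 ≤ hitMat G x y z := by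
  simp only [hitMat, Matrix.of_apply]
  split_ifs
  · exact le_rfl
  · unfold degR; positivity
  · exact le_rfl

lemma exists_g [Fintype V] (G : SimpleGraph V) (hconn : G.Connected)
    (hdeg : ∀ y, 0 < degR G y) (x : V) :
    ∃ g : V → ℝ, (∀ y, 0 ≤ g y) ∧ ∀ y, g y = 1 + ∑ z, hitMat G x y z * g z := by
  let A : (V → ℝ) →ₗ[ℝ] (V → ℝ) := LinearMap.id - Matrix.mulVecLin (hitMat G x)
  have hA : ∀ u y, A u y = u y - ∑ z, hitMat G x y z * u z := by
    intro u y
    simp [A, Matrix.mulVec, dotProduct]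
  have hinj : Function.Injective A := by
    rw [← LinearMap.ker_eq_bot, LinearMap.ker_eq_bot']
    intro u hu
    have h0 : ∀ y, u y = ∑ z, hitMat G x y z * u z := by
      intro y
      have := congrFun hu y
      rw [hA] at this
      simp at this
      linarith
    funext y
    apply le_antisymm
    · exact killed_max G hconn hdeg x u (fun y => (h0 y).le) y
    · have := killed_max G hconn hdeg x (fun y => - u y) (fun y => by
        simp only [mul_neg, Finset.sum_neg_distrib]
        rw [← h0 y]) y
      simp at this ⊢
      exact this
  obtain ⟨g, hg⟩ := (LinearMap.injective_iff_surjective.1 hinj) (fun _ => 1)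
  have h0 : ∀ y, g y = 1 + ∑ z, hitMat G x y z * g z := by
    intro y
    have := congrFun hg y
    rw [hA] at this
    linarith
  refine ⟨g, fun y => ?_, h0⟩
  have := killed_max G hconn hdeg x (fun y => - g y) (fun y => by
        simp only [mul_neg, Finset.sum_neg_distrib]
        rw [h0 y]; linarith) y
  linarith

lemma surv_succ [Fintype V] (G : SimpleGraph V) (x y : V) (k : ℕ) :
    ∑ z, (hitMat G x ^ (k+1)) y z = ∑ w, hitMat G x y w * ∑ z, (hitMat G x ^ k) w z := by
  simp only [pow_succ', Matrix.mul_apply, Finset.mul_sum]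
  rw [Finset.sum_comm]

lemma surv_nonneg [Fintype V] (G : SimpleGraph V) (x : V) (k : ℕ) : ∀ y,
    0 ≤ ∑ z, (hitMat G x ^ k) y z := by
  induction k with
  | zero => intro y; simp [Matrix.one_apply]
  | succ k ih =>
    intro y
    rw [surv_succ]
    exact Finset.sum_nonneg fun w _ => mul_nonneg (hitMat_nonneg ..) (ih w)

lemma surv_summable [Fintype V] (G : SimpleGraph V) (hconn : G.Connected)
    (hdeg : ∀ y, 0 < degR G y) (x y : V) :
    Summable fun k : ℕ => ∑ z, (hitMat G x ^ k) y z := by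
  obtain ⟨g, hg0, hg⟩ := exists_g G hconn hdeg x
  have key : ∀ K : ℕ, ∀ y, ∑ k ∈ Finset.range K, ∑ z, (hitMat G x ^ k) y z ≤ g y := by
    intro K
    induction K with
    | zero => intro y; simpa using hg0 y
    | succ K ih =>
      intro y
      rw [Finset.sum_range_succ', hg y]
      simp only [surv_succ]
      rw [Finset.sum_comm]
      simp only [← Finset.mul_sum]
      have h1 : ∑ z, (hitMat G x ^ 0) y z = 1 := by simp [Matrix.one_apply]
      rw [h1, add_comm]
      have := Finset.sum_le_sum (s := univ) fun w _ =>
        mul_le_mul_of_nonneg_left (ih w) (hitMat_nonneg G x y w)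
      linarith
  exact summable_of_sum_range_le (fun k => surv_nonneg G x k y) (fun K => key K y)

lemma hitting_eq [Fintype V] (G : SimpleGraph V) (hconn : G.Connected)
    (hdeg : ∀ y, 0 < degR G y) (x y : V) (hy : y ≠ x) :
    ∑ z ∈ univ.filter (fun z => G.Adj y z), (hitting G y x - hitting G z x) = degR G y := by
  have h1 : hitting G y x = 1 + ∑ w, hitMat G x y w * ∑' k : ℕ, ∑ z, (hitMat G x ^ k) w z := by
    unfold hitting
    rw [if_neg hy, (surv_summable G hconn hdeg x y).tsum_eq_zero_add]
    simp only [surv_succ]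
    rw [Summable.tsum_finsetSum (fun w _ => (surv_summable G hconn hdeg x w).mul_left _)]
    simp only [tsum_mul_left]
    simp [Matrix.one_apply]
  rw [hitMat_mulVec] at h1
  rw [Finset.sum_sub_distrib, Finset.sum_const, nsmul_eq_mul]
  have h2 : ∀ z, hitting G z x = (if z = x then 0 else ∑' k : ℕ, ∑ z', (hitMat G x ^ k) z z') :=
    fun z => rfl
  simp only [← h2] at h1
  have hd := hdeg y
  change degR G y * _ - _ = _
  rw [h1]
  field_simp
  ring

/-- Comparison from below. -/
lemma le_hitting [Fintype V] (G : SimpleGraph V) (hconn : G.Connected)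
    (hdeg : ∀ y, 0 < degR G y) (x : V) (f : V → ℝ) (hx : f x ≤ 0)
    (hf : ∀ y, y ≠ x → ∑ z ∈ univ.filter (fun z => G.Adj y z), (f y - f z) ≤ degR G y) (y : V) :
    f y ≤ hitting G y x := by
  have := maxPrin G hconn x (fun y => f y - hitting G y x) (by simpa [hitting] using hx)
    (fun y hy => by
      have h1 := hf y hy
      have h2 := hitting_eq G hconn hdeg x y hy
      have h3 : ∑ z ∈ univ.filter (fun z => G.Adj y z),
        ((f y - hitting G y x) - (f z - hitting G z x)) =
        ∑ z ∈ univ.filter (fun z => G.Adj y z), (f y - f z) -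
        ∑ z ∈ univ.filter (fun z => G.Adj y z), (hitting G y x - hitting G z x) := by
        rw [← Finset.sum_sub_distrib]
        exact Finset.sum_congr rfl fun _ _ => by ring
      rw [h3]; linarith) y
  linarith

lemma hitting_le [Fintype V] (G : SimpleGraph V) (hconn : G.Connected)
    (hdeg : ∀ y, 0 < degR G y) (x : V) (f : V → ℝ) (hx : 0 ≤ f x)
    (hf : ∀ y, y ≠ x → degR G y ≤ ∑ z ∈ univ.filter (fun z => G.Adj y z), (f y - f z)) (y : V) :
    hitting G y x ≤ f y := by
  have := maxPrin G hconn x (fun y => hitting G y x - f y) (by simpa [hitting] using hx)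
    (fun y hy => by
      have h1 := hf y hy
      have h2 := hitting_eq G hconn hdeg x y hy
      have h3 : ∑ z ∈ univ.filter (fun z => G.Adj y z),
        ((hitting G y x - f y) - (hitting G z x - f z)) =
        ∑ z ∈ univ.filter (fun z => G.Adj y z), (hitting G y x - hitting G z x) -
        ∑ z ∈ univ.filter (fun z => G.Adj y z), (f y - f z) := by
        rw [← Finset.sum_sub_distrib]
        exact Finset.sum_congr rfl fun _ _ => by ring
      rw [h3]; linarith) y
  linarith

lemma hitting_self [Fintype V] (G : SimpleGraph V) (x : V) : hitting G x x = 0 := by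
  simp [hitting]

lemma hitting_ge_one [Fintype V] (G : SimpleGraph V) (hconn : G.Connected)
    (hdeg : ∀ y, 0 < degR G y) (x y : V) (hy : y ≠ x) : 1 ≤ hitting G y x := by
  have := le_hitting G hconn hdeg x (fun y => if y = x then 0 else 1) (by simp) (fun y hy => by
    unfold degR
    rw [Finset.card_eq_sum_ones]
    push_cast
    refine Finset.sum_le_sum fun z _ => ?_
    split_ifs <;> norm_num) y
  simpa [hy] using this

lemma nbr_of_hitting_one [Fintype V] (G : SimpleGraph V) (hconn : G.Connected)
    (hdeg : ∀ y, 0 < degR G y) (x y : V) (hy : y ≠ x) (h : hitting G y x = 1) (z : V)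
    (hz : G.Adj y z) : z = x := by
  have h0 := hitting_eq G hconn hdeg x y hy
  rw [Finset.sum_sub_distrib, Finset.sum_const, nsmul_eq_mul, h] at h0
  change degR G y * 1 - _ = _ at h0
  have h1 : ∑ z ∈ univ.filter (fun z => G.Adj y z), hitting G z x = 0 := by linarith
  have h2 : ∀ z, 0 ≤ hitting G z x := by
    intro z
    by_cases hzx : z = x
    · simp [hitting, hzx]
    · linarith [hitting_ge_one G hconn hdeg x z hzx]
  have h3 := (Finset.sum_eq_zero_iff_of_nonneg (fun z _ => h2 z)).1 h1 z (by simp [hz])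
  by_contra hzx
  linarith [hitting_ge_one G hconn hdeg x z hzx]

end RCLow

namespace RCLow

/-- Hitting time profile on the cycle. -/
noncomputable def FF (l : ℕ) (k : Fin l) : ℝ := (k.val : ℝ) * ((l : ℝ) - k.val)

lemma FF_nonneg (l : ℕ) (k : Fin l) : 0 ≤ FF l k := by
  unfold FF
  have : (k.val : ℝ) ≤ l := by exact_mod_cast k.2.le
  exact mul_nonneg (by positivity) (by linarith)

lemma val_one' {l : ℕ} [NeZero l] (hl : 3 ≤ l) : ((1 : Fin l) : ℕ) = 1 := by
  rw [Fin.val_one', Nat.mod_eq_of_lt (by omega)]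

lemma val_add_one' {l : ℕ} [NeZero l] (hl : 3 ≤ l) (k : Fin l) :
    ((k + 1 : Fin l) : ℕ) = if k.val + 1 = l then 0 else k.val + 1 := by
  rw [Fin.val_add, val_one' hl]
  have := k.2
  split_ifs with h
  · rw [h, Nat.mod_self]
  · exact Nat.mod_eq_of_lt (by omega)

lemma FF_lap {l : ℕ} [NeZero l] (hl : 3 ≤ l) (k : Fin l) (hk : k ≠ 0) :
    (FF l k - FF l (k + 1)) + (FF l k - FF l (k - 1)) = 2 := by
  obtain ⟨j, rfl⟩ : ∃ j, k = j + 1 := ⟨k - 1, by simp⟩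
  rw [add_sub_cancel_right]
  have h0 : ((j + 1 : Fin l) : ℕ) ≠ 0 := fun h => hk (Fin.ext (by simpa using h))
  have h1 : ((j + 1 : Fin l) : ℕ) = j.val + 1 := by
    rw [val_add_one' hl] at h0 ⊢
    split_ifs at h0 ⊢
    · simp at h0
    · rfl
  have h2 := val_add_one' hl (j+1)
  unfold FF
  rw [h2, h1]
  split_ifs with h
  · have : (l : ℝ) = j.val + 1 + 1 := by exact_mod_cast h.symm
    rw [this]; push_cast; ring
  · push_cast; ring

lemma FF_sum (l : ℕ) : ∑ k : Fin l, FF l k = (l:ℝ)^3/6 - l/6 := by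
  unfold FF
  rw [Fin.sum_univ_eq_sum_range (fun k => (k:ℝ) * ((l:ℝ) - k)) l]
  have : ∀ m : ℕ, ∀ a : ℝ, ∑ k ∈ Finset.range m, (k:ℝ) * (a - k)
      = a * (m * (m-1)/2) - (m-1)*m*(2*m-1)/6 := by
    intro m a
    induction m with
    | zero => simp
    | succ m ih => rw [Finset.sum_range_succ, ih]; push_cast; ring
  rw [this]; ring

lemma exists_proj [Fintype V] (G : SimpleGraph V) (n l : ℕ) [NeZero l]
    (hn : Fintype.card V = n) (hconn : G.Connected) (huni : esize G = n)
    (hl : 3 ≤ l) (c : Fin l → V) (hinj : Function.Injective c)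
    (hadj : ∀ i : Fin l, G.Adj (c i) (c (i + 1))) :
    ∃ r : V → Fin l, (∀ i, r (c i) = i) ∧ ∀ u v, G.Adj u v →
      r u = r v ∨ ∃ i, (u = c i ∧ v = c (i+1)) ∨ (v = c i ∧ u = c (i+1)) := by
  set G' := G.deleteEdges (cycleEdges c) with hG'
  have hsep : ∀ i j, G'.Reachable (c i) (c j) → i = j := by
    intro i j hij
    by_contra hne
    have he : s(c i, c (i+1)) ≠ s(c j, c (j+1)) := by
      intro h
      rw [Sym2.eq_iff] at h
      rcases h with ⟨h, -⟩ | ⟨h1, h2⟩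
      · exact hne (hinj h)
      · have h1 := congrArg Fin.val (hinj h1)
        have h2 := congrArg Fin.val (hinj h2)
        rw [val_add_one' hl] at h1 h2
        split_ifs at h1 h2 <;> omega
    set S : Set (Sym2 V) := {s(c i, c (i+1)), s(c j, c (j+1))} with hS
    set H := G.deleteEdges S with hH
    have hle : G' ≤ H := by
      rw [hG', hH]
      apply SimpleGraph.deleteEdges_anti
      rintro e (rfl | rfl)
      · exact ⟨i, rfl⟩
      · exact ⟨j, rfl⟩
    have hijH : H.Reachable (c i) (c j) := hij.mono hle
    have hstep : ∀ k, k ≠ i → k ≠ j → H.Adj (c k) (c (k+1)) := by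
      intro k hki hkj
      rw [hH, SimpleGraph.deleteEdges_adj]
      refine ⟨hadj k, ?_⟩
      have aux : ∀ m, k ≠ m → s(c k, c (k+1)) ≠ s(c m, c (m+1)) := by
        intro m hkm h
        rw [Sym2.eq_iff] at h
        rcases h with ⟨h, -⟩ | ⟨h1, h2⟩
        · exact hkm (hinj h)
        · have h1 := congrArg Fin.val (hinj h1)
          have h2 := congrArg Fin.val (hinj h2)
          rw [val_add_one' hl] at h1 h2
          split_ifs at h1 h2 <;> omega
      rintro (h | h)
      · exact aux i hki h
      · exact aux j hkj h
    have hcyc' : ∀ m : ℕ, ∀ k : Fin l, (i - k).val = m → H.Reachable (c k) (c i) := by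
      intro m
      induction m with
      | zero =>
        intro k hk
        have : i - k = 0 := Fin.ext (by simpa using hk)
        rw [sub_eq_zero.1 this]
      | succ m ih =>
        intro k hk
        by_cases h1 : k = i
        · rw [h1]
        · by_cases h2 : k = j
          · rw [h2]; exact hijH.symm
          · have h3 : i - (k + 1) + 1 = i - k := by abel
            have h4 := val_add_one' hl (i - (k+1))
            rw [h3, hk] at h4
            exact (hstep k h1 h2).reachable.trans (ih (k+1) (by split_ifs at h4; omega))
    have hcyc : ∀ k, H.Reachable (c k) (c i) := fun k => hcyc' _ k rfl
    have hall : ∀ u v, G.Walk u v → H.Reachable u v := by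
      intro u v p
      induction p with
      | nil => rfl
      | @cons a b d h p ih =>
        refine SimpleGraph.Reachable.trans ?_ ih
        by_cases hs : s(a, b) ∈ S
        · have : ∃ k k', a = c k ∧ b = c k' := by
            rw [hS, Set.mem_insert_iff, Set.mem_singleton_iff] at hs
            rcases hs with h | h <;> rw [Sym2.eq_iff] at h <;> rcases h with ⟨h1, h2⟩ | ⟨h1, h2⟩ <;>
              exact ⟨_, _, h1, h2⟩
          obtain ⟨k, k', rfl, rfl⟩ := this
          exact (hcyc k).trans (hcyc k').symm
        · exact SimpleGraph.Adj.reachable (by rw [hH, SimpleGraph.deleteEdges_adj]; exact ⟨h, hs⟩)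
    have : Nonempty V := ⟨c 0⟩
    have hHc : H.Connected := ⟨fun u v => by
      obtain ⟨p⟩ := hconn.preconnected u v
      exact hall u v p⟩
    have h1 := hHc.card_vert_le_card_edgeSet_add_one
    rw [Nat.card_eq_fintype_card, hn] at h1
    have h2 : H.edgeSet = G.edgeSet \ S := by rw [hH, SimpleGraph.edgeSet_deleteEdges]
    have h3 : S ⊆ G.edgeSet := by
      rintro e (rfl | rfl)
      · exact hadj i
      · exact hadj j
    have h4 : (G.edgeSet \ S).ncard + S.ncard = G.edgeSet.ncard :=
      Set.ncard_sdiff_add_ncard_of_subset h3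
    rw [hS, Set.ncard_pair he, ← hS] at h4
    unfold esize at huni
    rw [Nat.card_coe_set_eq] at huni h1
    rw [h2] at h1
    omega
  have hex : ∀ u v, G.Walk u v → (∃ i, G'.Reachable v (c i)) → ∃ i, G'.Reachable u (c i) := by
    intro u v p
    induction p with
    | nil => exact id
    | @cons a b d h p ih =>
      intro hv
      obtain ⟨i, hi⟩ := ih hv
      by_cases hs : s(a, b) ∈ cycleEdges c
      · obtain ⟨k, hk⟩ := hs
        simp only at hk
        rw [Sym2.eq_iff] at hk
        rcases hk with ⟨h1, h2⟩ | ⟨h1, h2⟩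
        · exact ⟨k, by rw [h1]⟩
        · exact ⟨k+1, by rw [h2]⟩
      · exact ⟨i, (SimpleGraph.Adj.reachable
          (by rw [hG', SimpleGraph.deleteEdges_adj]; exact ⟨h, hs⟩)).trans hi⟩
  have hex' : ∀ v, ∃ i, G'.Reachable v (c i) := by
    intro v
    obtain ⟨p⟩ := hconn.preconnected v (c 0)
    exact hex _ _ p ⟨0, by rfl⟩
  choose r hr using hex'
  refine ⟨r, fun i => (hsep _ _ (hr (c i))).symm, ?_⟩
  intro u v huv
  by_cases hs : s(u, v) ∈ cycleEdges c
  · right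
    obtain ⟨k, hk⟩ := hs
    simp only at hk
    rw [Sym2.eq_iff] at hk
    rcases hk with ⟨h1, h2⟩ | ⟨h1, h2⟩
    · exact ⟨k, Or.inl ⟨h1.symm, h2.symm⟩⟩
    · exact ⟨k, Or.inr ⟨h1.symm, h2.symm⟩⟩
  · left
    have h1 : G'.Adj u v := by rw [hG', SimpleGraph.deleteEdges_adj]; exact ⟨huv, hs⟩
    exact hsep _ _ ((hr u).symm.trans (h1.reachable.trans (hr v)))

lemma ne_pm {l : ℕ} [NeZero l] (hl : 3 ≤ l) (i : Fin l) : i + 1 ≠ i - 1 := by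
  intro h
  have h' : (i - 1) + 1 + 1 = i - 1 := by rw [sub_add_cancel, h]
  have := congrArg Fin.val h'
  rw [val_add_one' hl, val_add_one' hl] at this
  split_ifs at this <;> omega

/-- Laplacian of a function of the projection at a cycle vertex. -/
lemma lap_cycle [Fintype V] (G : SimpleGraph V) (l : ℕ) [NeZero l]
    (hl : 3 ≤ l) (c : Fin l → V) (hinj : Function.Injective c)
    (hadj : ∀ i : Fin l, G.Adj (c i) (c (i + 1))) (r : V → Fin l) (hrc : ∀ i, r (c i) = i)
    (hr : ∀ u v, G.Adj u v →
      r u = r v ∨ ∃ i, (u = c i ∧ v = c (i+1)) ∨ (v = c i ∧ u = c (i+1)))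
    (f : Fin l → ℝ) (i : Fin l) :
    ∑ z ∈ univ.filter (fun z => G.Adj (c i) z), (f (r (c i)) - f (r z)) =
      (f i - f (i+1)) + (f i - f (i-1)) := by
  have hsub : ({c (i+1), c (i-1)} : Finset V) ⊆ univ.filter (fun z => G.Adj (c i) z) := by
    intro z hz
    simp only [Finset.mem_insert, Finset.mem_singleton] at hz
    simp only [Finset.mem_filter, Finset.mem_univ, true_and]
    rcases hz with rfl | rfl
    · exact hadj i
    · have := (hadj (i-1)).symm
      rwa [sub_add_cancel] at this
  rw [← Finset.sum_subset hsub, Finset.sum_pair (fun h => ne_pm hl i (hinj h))]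
  · simp [hrc]
  · intro z hz hz'
    simp only [Finset.mem_filter, Finset.mem_univ, true_and] at hz
    simp only [Finset.mem_insert, Finset.mem_singleton, not_or] at hz'
    rcases hr _ _ hz with h | ⟨k, ⟨h1, h2⟩ | ⟨h1, h2⟩⟩
    · rw [h, sub_self]
    · rw [← hinj h1] at h2; exact absurd h2 hz'.1
    · have := hinj h2
      rw [this, add_sub_cancel_right] at hz'
      exact absurd h1 hz'.2

lemma two_le_deg [Fintype V] (G : SimpleGraph V) (l : ℕ) [NeZero l]
    (hl : 3 ≤ l) (c : Fin l → V) (hinj : Function.Injective c)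
    (hadj : ∀ i : Fin l, G.Adj (c i) (c (i + 1))) (i : Fin l) : 2 ≤ degR G (c i) := by
  have hsub : ({c (i+1), c (i-1)} : Finset V) ⊆ univ.filter (fun z => G.Adj (c i) z) := by
    intro z hz
    simp only [Finset.mem_insert, Finset.mem_singleton] at hz
    simp only [Finset.mem_filter, Finset.mem_univ, true_and]
    rcases hz with rfl | rfl
    · exact hadj i
    · have := (hadj (i-1)).symm
      rwa [sub_add_cancel] at this
  have := Finset.card_le_card hsub
  rw [Finset.card_pair (fun h => ne_pm hl i (hinj h))] at this
  unfold degR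
  exact_mod_cast this

lemma FF_le_hitting [Fintype V] (G : SimpleGraph V) (l : ℕ) [NeZero l] (hconn : G.Connected)
    (hdeg : ∀ y, 0 < degR G y)
    (hl : 3 ≤ l) (c : Fin l → V) (hinj : Function.Injective c)
    (hadj : ∀ i : Fin l, G.Adj (c i) (c (i + 1))) (r : V → Fin l) (hrc : ∀ i, r (c i) = i)
    (hr : ∀ u v, G.Adj u v →
      r u = r v ∨ ∃ i, (u = c i ∧ v = c (i+1)) ∨ (v = c i ∧ u = c (i+1)))
    (x y : V) : FF l (r y - r x) ≤ hitting G y x := by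
  apply le_hitting G hconn hdeg x (fun y => FF l (r y - r x))
  · simp [FF]
  · intro y hy
    by_cases h0 : r y = r x
    · refine le_trans (Finset.sum_nonpos fun z _ => ?_) (hdeg y).le
      have := FF_nonneg l (r z - r x)
      have h1 : FF l (r y - r x) = 0 := by simp [h0, FF]
      linarith
    by_cases hc : ∃ i, y = c i
    · obtain ⟨i, rfl⟩ := hc
      refine le_trans ?_ (two_le_deg G l hl c hinj hadj i)
      rw [lap_cycle G l hl c hinj hadj r hrc hr (fun k => FF l (k - r x)) i]
      have h1 := FF_lap hl (i - r x) (fun h => h0 (by rw [hrc]; exact sub_eq_zero.1 h))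
      rw [show i - r x + 1 = i + 1 - r x by abel, show i - r x - 1 = i - 1 - r x by abel] at h1
      exact h1.le
    · refine le_trans (le_of_eq (Finset.sum_eq_zero fun z hz => ?_)) (hdeg y).le
      simp only [Finset.mem_filter, Finset.mem_univ, true_and] at hz
      rcases hr _ _ hz with h | ⟨k, ⟨h1, h2⟩ | ⟨h1, h2⟩⟩
      · rw [h, sub_self]
      · exact absurd ⟨_, h1⟩ hc
      · exact absurd ⟨_, h2⟩ hc

/-- The pointwise lower bound. -/
noncomputable def bb {l : ℕ} (c : Fin l → V) (r : V → Fin l) (x v : V) : ℝ :=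
  if v = x then 0 else if ∃ i, i ≠ r x ∧ c i = v then FF l (r v - r x) else 1

lemma bb_sum [Fintype V] (n l : ℕ) [NeZero l]
    (hn : Fintype.card V = n) (c : Fin l → V) (hinj : Function.Injective c)
    (r : V → Fin l) (hrc : ∀ i, r (c i) = i) (x : V) :
    ∑ v, bb c r x v = (l : ℝ)^3/6 - 7*(l : ℝ)/6 + (n : ℝ) := by
  set C : Finset V := (univ.erase (r x)).image c with hC
  have hmem : ∀ v, v ∈ C ↔ ∃ i, i ≠ r x ∧ c i = v := by
    intro v; simp [hC]
  have hcard : C.card = l - 1 := by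
    rw [hC, Finset.card_image_of_injective _ hinj, Finset.card_erase_of_mem (mem_univ _)]; simp
  have hxC : x ∉ C := by
    rw [hmem]
    rintro ⟨i, h1, h2⟩
    apply h1
    rw [← h2, hrc]
  have h1 : ∑ v ∈ C, bb c r x v = (l:ℝ)^3/6 - l/6 := by
    rw [hC, Finset.sum_image (fun a _ b _ h => hinj h)]
    have : ∀ i ∈ univ.erase (r x), bb c r x (c i) = FF l (i - r x) := by
      intro i hi
      have hi' : i ≠ r x := Finset.ne_of_mem_erase hi
      unfold bb
      rw [if_neg, if_pos ⟨i, hi', rfl⟩, hrc]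
      intro h
      apply hi'
      rw [← h, hrc]
    rw [Finset.sum_congr rfl this]
    have h2 := Finset.add_sum_erase univ (fun i => FF l (i - r x)) (mem_univ (r x))
    have h3 : FF l (r x - r x) = 0 := by simp [FF]
    rw [h3, zero_add] at h2
    rw [h2, ← FF_sum l]
    exact (Equiv.subRight (r x)).sum_comp (FF l)
  have h2 : ∑ v ∈ Cᶜ, bb c r x v = (Cᶜ.erase x).card := by
    rw [← Finset.add_sum_erase Cᶜ _ (Finset.mem_compl.2 hxC)]
    rw [Finset.card_eq_sum_ones]
    push_cast
    have h0 : bb c r x x = 0 := by simp [bb]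
    rw [h0, zero_add]
    refine Finset.sum_congr rfl fun v hv => ?_
    have h3 := Finset.ne_of_mem_erase hv
    have h4 := Finset.mem_compl.1 (Finset.mem_of_mem_erase hv)
    rw [hmem] at h4
    unfold bb
    rw [if_neg h3, if_neg h4]
  rw [← Finset.sum_add_sum_compl C, h1, h2]
  have h5 := Finset.card_erase_add_one (Finset.mem_compl.2 hxC)
  have h6 := Finset.card_add_card_compl C
  have h7 : (Cᶜ.erase x).card + l = n := by
    have : 1 ≤ l := Nat.one_le_iff_ne_zero.2 (NeZero.ne l)
    omega
  rw [← h7]; push_cast; ring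

end RCLow

namespace RCLow

lemma bb_le_hitting [Fintype V] (G : SimpleGraph V) (l : ℕ) [NeZero l] (hconn : G.Connected)
    (hdeg : ∀ y, 0 < degR G y)
    (hl : 3 ≤ l) (c : Fin l → V) (hinj : Function.Injective c)
    (hadj : ∀ i : Fin l, G.Adj (c i) (c (i + 1))) (r : V → Fin l) (hrc : ∀ i, r (c i) = i)
    (hr : ∀ u v, G.Adj u v →
      r u = r v ∨ ∃ i, (u = c i ∧ v = c (i+1)) ∨ (v = c i ∧ u = c (i+1)))
    (x y : V) : bb c r x y ≤ hitting G y x := by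
  unfold bb
  split_ifs with h1 h2
  · rw [h1, hitting_self]
  · exact FF_le_hitting G l hconn hdeg hl c hinj hadj r hrc hr x y
  · exact hitting_ge_one G hconn hdeg x y h1

lemma nbr_cycle [Fintype V] (G : SimpleGraph V) (l : ℕ) [NeZero l]
    (c : Fin l → V) (hinj : Function.Injective c)
    (r : V → Fin l) (hrc : ∀ i, r (c i) = i)
    (hr : ∀ u v, G.Adj u v →
      r u = r v ∨ ∃ i, (u = c i ∧ v = c (i+1)) ∨ (v = c i ∧ u = c (i+1)))
    (i j : Fin l) (h : G.Adj (c i) (c j)) : j = i + 1 ∨ i = j + 1 := by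
  rcases hr _ _ h with h' | ⟨k, ⟨h1, h2⟩ | ⟨h1, h2⟩⟩
  · rw [hrc, hrc] at h'
    rw [h'] at h
    exact absurd h (G.loopless.irrefl _)
  · left; rw [hinj h1, hinj h2]
  · right; rw [hinj h1, hinj h2]

lemma rcc_eq_of_pend [Fintype V] (G : SimpleGraph V) (n l : ℕ) [NeZero l] (hconn : G.Connected)
    (hn : Fintype.card V = n)
    (hdeg : ∀ y, 0 < degR G y)
    (hl : 3 ≤ l) (c : Fin l → V) (hinj : Function.Injective c)
    (hadj : ∀ i : Fin l, G.Adj (c i) (c (i + 1))) (r : V → Fin l) (hrc : ∀ i, r (c i) = i)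
    (hr : ∀ u v, G.Adj u v →
      r u = r v ∨ ∃ i, (u = c i ∧ v = c (i+1)) ∨ (v = c i ∧ u = c (i+1)))
    (x : V) (i0 : Fin l) (hx : x = c i0)
    (hpend : ∀ v, (∀ i, c i ≠ v) → ∀ z, G.Adj v z → z = x) :
    reverseCoverCost G x = (l : ℝ)^3/6 - 7*(l : ℝ)/6 + (n : ℝ) := by
  have hrx : r x = i0 := by rw [hx, hrc]
  rw [← bb_sum n l hn c hinj r hrc x]
  unfold reverseCoverCost
  refine Finset.sum_congr rfl fun y _ => le_antisymm ?_
    (bb_le_hitting G l hconn hdeg hl c hinj hadj r hrc hr x y)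
  have hbc : ∀ j, bb c r x (c j) = FF l (r (c j) - r x) := by
    intro j
    unfold bb
    by_cases hj : j = i0
    · rw [if_pos (by rw [hj, hx]), hrc, hrx, hj]; simp [FF]
    · rw [if_neg (by rw [hx]; exact fun h => hj (hinj h)), if_pos ⟨j, by rwa [hrx], rfl⟩]
  refine hitting_le G hconn hdeg x (bb c r x) (by simp [bb]) ?_ y
  intro y hy
  by_cases hc : ∃ i, c i = y
  · obtain ⟨i, rfl⟩ := hc
    have hi : i ≠ i0 := by rintro rfl; exact hy hx.symm
    have hN : ∀ z, G.Adj (c i) z → ∃ j, z = c j ∧ (j = i + 1 ∨ i = j + 1) := by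
      intro z hz
      by_cases hzc : ∃ j, c j = z
      · obtain ⟨j, rfl⟩ := hzc
        exact ⟨j, rfl, nbr_cycle G l c hinj r hrc hr i j hz⟩
      · exact absurd (hpend z (fun j h => hzc ⟨j, h⟩) _ hz.symm) hy
    have h1 : ∑ z ∈ univ.filter (fun z => G.Adj (c i) z), (bb c r x (c i) - bb c r x z) = 2 := by
      have h2 : ∑ z ∈ univ.filter (fun z => G.Adj (c i) z), (bb c r x (c i) - bb c r x z) =
        ∑ z ∈ univ.filter (fun z => G.Adj (c i) z),
          ((fun k => FF l (k - r x)) (r (c i)) - (fun k => FF l (k - r x)) (r z)) := by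
        refine Finset.sum_congr rfl fun z hz => ?_
        simp only [Finset.mem_filter, Finset.mem_univ, true_and] at hz
        obtain ⟨j, rfl, -⟩ := hN z hz
        rw [hbc, hbc]
      rw [h2, lap_cycle G l hl c hinj hadj r hrc hr (fun k => FF l (k - r x)) i]
      have h1 := FF_lap hl (i - r x) (fun h => hi (by rw [← hrx]; exact sub_eq_zero.1 h))
      rw [show i - r x + 1 = i + 1 - r x by abel, show i - r x - 1 = i - 1 - r x by abel] at h1
      exact h1
    rw [h1]
    have hsub : univ.filter (fun z => G.Adj (c i) z) ⊆ ({c (i+1), c (i-1)} : Finset V) := by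
      intro z hz
      simp only [Finset.mem_filter, Finset.mem_univ, true_and] at hz
      obtain ⟨j, rfl, rfl | rfl⟩ := hN z hz <;> simp
    unfold degR
    exact_mod_cast (Finset.card_le_card hsub).trans Finset.card_le_two
  · push Not at hc
    unfold degR
    rw [Finset.card_eq_sum_ones]
    push_cast
    refine Finset.sum_le_sum fun z hz => ?_
    simp only [Finset.mem_filter, Finset.mem_univ, true_and] at hz
    have hzx := hpend y hc z hz
    have h1 : bb c r x y = 1 := by
      unfold bb
      rw [if_neg hy, if_neg]
      rintro ⟨i, -, h⟩
      exact hc i h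
    have h2 : bb c r x z = 0 := by simp [bb, hzx]
    rw [h1, h2]; norm_num

lemma iso_of_pend [Fintype V] (G : SimpleGraph V) (n l : ℕ) [NeZero l]
    (hn : Fintype.card V = n)
    (hdeg : ∀ y, 0 < degR G y)
    (hl : 3 ≤ l) (c : Fin l → V) (hinj : Function.Injective c)
    (hadj : ∀ i : Fin l, G.Adj (c i) (c (i + 1))) (r : V → Fin l) (hrc : ∀ i, r (c i) = i)
    (hr : ∀ u v, G.Adj u v →
      r u = r v ∨ ∃ i, (u = c i ∧ v = c (i+1)) ∨ (v = c i ∧ u = c (i+1)))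
    (x : V) (i0 : Fin l) (hx : x = c i0)
    (hpend : ∀ v, (∀ i, c i ≠ v) → ∀ z, G.Adj v z → z = x) :
    Nonempty (starCycle n l ≃g G) ∧ G.degree x = n - l + 2 := by
  set O : Finset V := (univ.image c)ᶜ with hO
  have hmemO : ∀ v, v ∈ O ↔ ∀ i, c i ≠ v := by intro v; simp [hO]
  have hcardI : (univ.image c).card = l := by
    rw [Finset.card_image_of_injective _ hinj]; simp
  have hcardO : O.card = n - l := by
    rw [hO, Finset.card_compl, hcardI, hn]
  have hOx : ∀ v ∈ O, G.Adj v x := by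
    intro v hv
    have h1 := hdeg v
    unfold degR at h1
    have h2 : 0 < (univ.filter fun y => G.Adj v y).card := by exact_mod_cast h1
    obtain ⟨z, hz⟩ := Finset.card_pos.1 h2
    simp only [Finset.mem_filter, Finset.mem_univ, true_and] at hz
    rwa [hpend v ((hmemO v).1 hv) z hz] at hz
  have hln : l ≤ n := by
    rw [← hcardI, ← hn]; exact Finset.card_le_univ _
  refine ⟨?_, ?_⟩
  · let eO := O.equivFinOfCardEq hcardO
    let e : Fin n → V := fun k => if h : k.val < l then c (i0 + ⟨k.val, h⟩) else
      (eO.symm ⟨k.val - l, by have := k.2; omega⟩ : V)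
    have he1 : ∀ (k : Fin n) (h : k.val < l), e k = c (i0 + ⟨k.val, h⟩) := by
      intro k h; simp only [e]; rw [dif_pos h]
    have he2 : ∀ (k : Fin n) (h : ¬ k.val < l),
        e k = (eO.symm ⟨k.val - l, by have := k.2; omega⟩ : V) := by
      intro k h; simp only [e]; rw [dif_neg h]
    have heO : ∀ (k : Fin n) (h : ¬ k.val < l), e k ∈ O := by
      intro k h; rw [he2 k h]; exact (eO.symm _).2
    have hei : Function.Injective e := by
      intro a b hab
      by_cases ha : a.val < l <;> by_cases hb : b.val < l
      · rw [he1 a ha, he1 b hb] at hab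
        have := congrArg Fin.val (add_left_cancel (hinj hab))
        exact Fin.ext this
      · exact absurd (by rw [← hab, he1 a ha]) ((hmemO _).1 (heO b hb) (i0 + ⟨a.val, ha⟩))
      · exact absurd (by rw [hab, he1 b hb]) ((hmemO _).1 (heO a ha) (i0 + ⟨b.val, hb⟩))
      · rw [he2 a ha, he2 b hb] at hab
        have := congrArg Fin.val (eO.symm.injective (Subtype.ext hab))
        simp only at this
        exact Fin.ext (by omega)
    have heb : Function.Bijective e :=
      (Fintype.bijective_iff_injective_and_card e).2 ⟨hei, by simp [hn]⟩
    have hcc : ∀ i j, G.Adj (c i) (c j) ↔ (j = i + 1 ∨ i = j + 1) := by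
      intro i j
      refine ⟨nbr_cycle G l c hinj r hrc hr i j, ?_⟩
      rintro (rfl | rfl)
      · exact hadj i
      · exact (hadj j).symm
    have hOc : ∀ v ∈ O, ∀ k (h : k < l), G.Adj v (c (i0 + ⟨k, h⟩)) ↔ k = 0 := by
      intro v hv k h
      constructor
      · intro hvk
        have h1 := hpend v ((hmemO v).1 hv) _ hvk
        rw [hx] at h1
        have h2 := hinj h1
        have h3 : (⟨k, h⟩ : Fin l) = 0 := by simpa using h2
        have := congrArg Fin.val h3
        simpa using this
      · rintro rfl
        have h3 : (⟨0, h⟩ : Fin l) = 0 := Fin.ext (by simp)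
        rw [h3, add_zero, ← hx]
        exact hOx v hv
    have hstep : ∀ a b (ha : a < l) (hb : b < l),
        (i0 + (⟨b, hb⟩ : Fin l) = i0 + ⟨a, ha⟩ + 1) ↔ b = if a + 1 = l then 0 else a + 1 := by
      intro a b ha hb
      rw [add_assoc, add_right_inj, Fin.ext_iff, val_add_one' hl]
    refine ⟨⟨Equiv.ofBijective e heb, ?_⟩⟩
    intro a b
    simp only [Equiv.ofBijective_apply, starCycle, SimpleGraph.fromRel_adj]
    rw [ne_eq, Fin.ext_iff]
    have haa := a.2
    have hbb := b.2
    by_cases ha : a.val < l <;> by_cases hb : b.val < l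
    · rw [he1 a ha, he1 b hb, hcc, hstep, hstep]
      split_ifs <;> omega
    · rw [he1 a ha, SimpleGraph.adj_comm, hOc _ (heO b hb)]
      omega
    · rw [he1 b hb, hOc _ (heO a ha)]
      omega
    · have : ¬ G.Adj (e a) (e b) := by
        intro h
        have h1 := hpend _ ((hmemO _).1 (heO a ha)) _ h
        rw [hx] at h1
        exact (hmemO _).1 (heO b hb) _ h1.symm
      simp only [this, false_iff]
      omega
  · rw [← SimpleGraph.card_neighborFinset_eq_degree]
    have h1 : G.neighborFinset x = O ∪ {c (i0+1), c (i0-1)} := by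
      ext z
      simp only [SimpleGraph.mem_neighborFinset, Finset.mem_union, Finset.mem_insert,
        Finset.mem_singleton]
      constructor
      · intro hz
        by_cases hzc : ∃ j, c j = z
        · obtain ⟨j, rfl⟩ := hzc
          rw [hx] at hz
          right
          rcases nbr_cycle G l c hinj r hrc hr _ _ hz with h | h
          · left; rw [h]
          · right; rw [h, add_sub_cancel_right]
        · left
          rw [hmemO]
          exact fun i h => hzc ⟨i, h⟩
      · rintro (h | h | h)
        · exact (hOx z h).symm
        · rw [h, hx]; exact hadj i0
        · rw [h, hx]
          have := (hadj (i0-1)).symm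
          rwa [sub_add_cancel] at this
    rw [h1, Finset.card_union_of_disjoint, hcardO, Finset.card_pair (fun h => ne_pm hl i0 (hinj h))]
    rw [Finset.disjoint_left]
    intro z hz hz'
    rw [hmemO] at hz
    simp only [Finset.mem_insert, Finset.mem_singleton] at hz'
    rcases hz' with h | h <;> exact hz _ h.symm

lemma pend_of_iso [Fintype V] (G : SimpleGraph V) (n l : ℕ) [NeZero l] (hln : l ≤ n)
    (hl : 3 ≤ l) (x : V) (φ : starCycle n l ≃g G) (hd : G.degree x = n - l + 2) :
    ∃ c : Fin l → V, Function.Injective c ∧ (∀ i : Fin l, G.Adj (c i) (c (i + 1))) ∧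
      ∃ i0, x = c i0 ∧ ∀ v, (∀ i, c i ≠ v) → ∀ z, G.Adj v z → z = x := by
  have hn0 : 0 < n := by omega
  obtain ⟨k, rfl⟩ : ∃ k, φ k = x := φ.surjective x
  have hk0 : l < n → k.val = 0 := by
    intro hlt
    by_contra hk
    have hkk := k.2
    set q : Fin n := if h : k.val + 1 < l then ⟨k.val + 1, by omega⟩ else ⟨0, hn0⟩ with hq
    set p : Fin n := ⟨k.val - 1, by omega⟩ with hp
    have hqv : q.val = if k.val + 1 < l then k.val + 1 else 0 := by
      rw [hq]; split_ifs <;> rfl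
    have hsub : G.neighborFinset (φ k) ⊆ {φ p, φ q} := by
      intro z hz
      rw [SimpleGraph.mem_neighborFinset] at hz
      obtain ⟨m, rfl⟩ : ∃ m, φ m = z := φ.surjective z
      rw [φ.map_adj_iff] at hz
      simp only [starCycle, SimpleGraph.fromRel_adj] at hz
      have : m = p ∨ m = q := by
        rw [Fin.ext_iff, Fin.ext_iff, hqv]
        simp only [hp]
        obtain ⟨_, hz⟩ := hz
        split_ifs <;> omega
      rcases this with rfl | rfl <;> simp
    have h1 := (Finset.card_le_card hsub).trans Finset.card_le_two
    rw [SimpleGraph.card_neighborFinset_eq_degree, hd] at h1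
    omega
  refine ⟨fun i => φ (Fin.castLE hln i), ?_, ?_, ?_⟩
  · intro a b hab
    exact Fin.castLE_injective hln (φ.injective hab)
  · intro i
    rw [φ.map_adj_iff]
    simp only [starCycle, SimpleGraph.fromRel_adj, ne_eq, Fin.ext_iff, Fin.val_castLE]
    rw [val_add_one' hl]
    have := i.2
    split_ifs <;> omega
  · have hkl : k.val < l := by
      rcases hln.lt_or_eq with h | h
      · rw [hk0 h]; omega
      · rw [h]; exact k.2
    refine ⟨⟨k.val, hkl⟩, rfl, ?_⟩
    intro v hv z hz
    obtain ⟨m, rfl⟩ : ∃ m, φ m = v := φ.surjective v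
    obtain ⟨w, rfl⟩ : ∃ w, φ w = z := φ.surjective z
    have hm : l ≤ m.val := by
      by_contra h
      push Not at h
      exact hv ⟨m.val, h⟩ rfl
    have h0 := hk0 (lt_of_le_of_lt hm m.2)
    rw [φ.map_adj_iff] at hz
    simp only [starCycle, SimpleGraph.fromRel_adj] at hz
    congr 1
    apply Fin.ext
    omega

end RCLow

/-- For an `n`-vertex unicyclic graph `G` with cycle length `l`
and any `x ∈ V(G)`, `RC(x) ≥ l³/6 − 7l/6 + n`, with equality iff `G ≅ S_n^l`
and `x` is the vertex of degree `n − l + 2`. -/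
theorem reverseCoverCost_lower [Fintype V] (G : SimpleGraph V) (n l : ℕ) [NeZero l]
    (hn : Fintype.card V = n) (hconn : G.Connected) (huni : esize G = n)
    (hl : 3 ≤ l) (c : Fin l → V) (hinj : Function.Injective c)
    (hadj : ∀ i : Fin l, G.Adj (c i) (c (i + 1))) (x : V) :
    (l : ℝ)^3/6 - 7*(l : ℝ)/6 + (n : ℝ) ≤ reverseCoverCost G x ∧
    (reverseCoverCost G x = (l : ℝ)^3/6 - 7*(l : ℝ)/6 + (n : ℝ) ↔
      Nonempty (starCycle n l ≃g G) ∧ G.degree x = n - l + 2) := by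
  have hdeg : ∀ y, 0 < degR G y := by
    intro y
    have hex : ∃ z, G.Adj y z := by
      by_cases hy : y = c 0
      · exact ⟨_, hy ▸ hadj 0⟩
      · obtain ⟨p⟩ := hconn.preconnected y (c 0)
        cases p with
        | nil => exact absurd rfl hy
        | cons h _ => exact ⟨_, h⟩
    obtain ⟨z, hz⟩ := hex
    exact RCLow.degR_pos G hz
  have hln : l ≤ n := by
    have := Fintype.card_le_of_injective c hinj
    rwa [Fintype.card_fin, hn] at this
  obtain ⟨r, hrc, hr⟩ := RCLow.exists_proj G n l hn hconn huni hl c hinj hadj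
  have hbb := RCLow.bb_le_hitting G l hconn hdeg hl c hinj hadj r hrc hr x
  have hsum := RCLow.bb_sum n l hn c hinj r hrc x
  refine ⟨?_, ?_, ?_⟩
  · rw [← hsum]
    exact Finset.sum_le_sum fun v _ => hbb v
  · intro heq
    rw [← hsum] at heq
    have hpt : ∀ v, RCLow.bb c r x v = hitting G v x := fun v =>
      (Finset.sum_eq_sum_iff_of_le (fun v _ => hbb v)).1 heq.symm v (Finset.mem_univ v)
    have hone : ∀ v, v ≠ x → (¬ ∃ i, i ≠ r x ∧ c i = v) → ∀ z, G.Adj v z → z = x := by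
      intro v hv hvc
      apply RCLow.nbr_of_hitting_one G hconn hdeg x v hv
      rw [← hpt]
      unfold RCLow.bb
      rw [if_neg hv, if_neg hvc]
    have hxc : x = c (r x) := by
      by_contra hne
      have h1 := hone (c (r x)) (fun h => hne h.symm) (by
        rintro ⟨i, h1, h2⟩
        exact h1 (hinj h2))
      have h2 := h1 _ (hadj (r x))
      have h3 := (hadj (r x - 1)).symm
      rw [sub_add_cancel] at h3
      have h4 := h1 _ h3
      exact RCLow.ne_pm hl (r x) (hinj (h2.trans h4.symm))
    refine RCLow.iso_of_pend G n l hn hdeg hl c hinj hadj r hrc hr x (r x) hxc ?_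
    intro v hv
    refine hone v ?_ ?_
    · intro h
      exact hv (r x) (by rw [h]; exact hxc.symm)
    · rintro ⟨i, -, h⟩
      exact hv i h
  · rintro ⟨⟨φ⟩, hd⟩
    obtain ⟨c', hinj', hadj', i0, hx, hpend⟩ := RCLow.pend_of_iso G n l hln hl x φ hd
    obtain ⟨r', hrc', hr'⟩ := RCLow.exists_proj G n l hn hconn huni hl c' hinj' hadj'
    exact RCLow.rcc_eq_of_pend G n l hconn hn hdeg hl c' hinj' hadj' r' hrc' hr' x i0 hx hpend
end

section
/- Let G be an n-vertex unicyclic graph whose unique cycle has length l, and let x ∈ V(G). Then RC(x) ≤ −l³/2 + l²/2 + n(n−1)(4n+1)/6, with equality if and only if G is the lollipop graph P_n^l and x is the vertex at distance n−l from the cycle. -/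
open SimpleGraph Finset

attribute [local instance] Classical.propDecidable

variable {V : Type*}

lemma aux_hitting_eq [Fintype V] (G : SimpleGraph V) (x : V) (h : V → ℝ)
    (h0 : h x = 0) (hnn : ∀ y, 0 ≤ h y)
    (heq : ∀ y, y ≠ x → h y = 1 + (degR G y)⁻¹ * ∑ z ∈ univ.filter (fun z => G.Adj y z), h z)
    (y : V) : hitting G y x = h y := by
  unfold hitting
  split_ifs with hyx
  · rw [hyx, h0]
  set P := hitMat G x with hP
  set h' : V → ℝ := fun y => 1 + (degR G y)⁻¹ * ∑ z ∈ univ.filter (fun z => G.Adj y z), h z with hh'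
  have hdeg : ∀ y, 0 ≤ (degR G y)⁻¹ := fun y => by unfold degR; positivity
  have hh'x : ∀ y, y ≠ x → h' y = h y := fun y hy => (heq y hy).symm
  have hPh : ∀ y, (P.mulVec h') y = h' y - 1 := by
    intro y
    simp only [hh', add_sub_cancel_left]
    rw [Finset.sum_filter, Finset.mul_sum]
    simp only [Matrix.mulVec, dotProduct, hP, hitMat, Matrix.of_apply]
    apply Finset.sum_congr rfl
    intro z _
    by_cases hz : z = x
    · simp [hz, h0]
    · have := hh'x z hz
      simp only [hh'] at this
      rw [this]
      simp only [hz, if_false]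
      split_ifs <;> simp
  have hPnn : ∀ a b, 0 ≤ P a b := by
    intro a b
    simp only [hP, hitMat, Matrix.of_apply]
    split_ifs <;> simp [hdeg]
  have hPknn : ∀ k a b, 0 ≤ (P ^ k) a b := by
    intro k
    induction k with
    | zero => intro a b; simp only [pow_zero, Matrix.one_apply]; split_ifs <;> simp
    | succ k ih =>
      intro a b
      rw [pow_succ, Matrix.mul_apply]
      exact Finset.sum_nonneg fun z _ => mul_nonneg (ih _ _) (hPnn _ _)
  have hPh2 : P.mulVec h' = h' - 1 := by funext y; rw [hPh]; rfl
  have hsum : ∀ K, ∑ k ∈ range K, ∑ z, (P ^ k) y z = h' y - ((P ^ K).mulVec h') y := by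
    intro K
    induction K with
    | zero => simp
    | succ K ih =>
      rw [Finset.sum_range_succ, ih, pow_succ, ← Matrix.mulVec_mulVec, hPh2, Matrix.mulVec_sub]
      simp only [Pi.sub_apply]
      have : (P ^ K).mulVec 1 y = ∑ z, (P ^ K) y z := by simp [Matrix.mulVec, dotProduct]
      rw [this]; ring
  have hh'nn : ∀ y, 0 ≤ h' y := fun y => by
    simp only [hh']
    have := Finset.sum_nonneg (s := univ.filter (fun z => G.Adj y z)) fun z _ => hnn z
    have := mul_nonneg (hdeg y) this
    linarith
  have hnn2 : ∀ K, 0 ≤ ((P ^ K).mulVec h') y := fun K =>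
    Finset.sum_nonneg fun z _ => mul_nonneg (hPknn _ _ _) (hh'nn _)
  have hunn : ∀ k, 0 ≤ ∑ z, (P ^ k) y z := fun k => Finset.sum_nonneg fun z _ => hPknn _ _ _
  have hs : Summable fun k => ∑ z, (P ^ k) y z :=
    summable_of_sum_range_le (c := h' y) hunn fun K => by rw [hsum]; linarith [hnn2 K]
  have ht := hs.hasSum.tendsto_sum_nat
  have hz := hs.tendsto_atTop_zero
  obtain ⟨M, hM⟩ : ∃ M, ∀ z, h' z ≤ M := by
    refine ⟨∑ z, h' z, fun z => Finset.single_le_sum (fun z _ => hh'nn z) (Finset.mem_univ z)⟩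
  have hlim : Filter.Tendsto (fun K => ((P ^ K).mulVec h') y) Filter.atTop (nhds 0) := by
    refine squeeze_zero hnn2 (g := fun K => (∑ z, (P ^ K) y z) * M) ?_ ?_
    · intro K
      rw [Finset.sum_mul]
      exact Finset.sum_le_sum fun z _ => mul_le_mul_of_nonneg_left (hM z) (hPknn _ _ _)
    · simpa using hz.mul_const M
  have ht2 : Filter.Tendsto (fun K => ∑ k ∈ range K, ∑ z, (P ^ k) y z) Filter.atTop (nhds (h' y)) := by
    simp_rw [hsum]
    simpa using hlim.const_sub (h' y)
  rw [tendsto_nhds_unique ht ht2, hh'x y hyx]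

lemma aux_maxp [Fintype V] (G : SimpleGraph V) (hconn : G.Connected) (x : V) (f : V → ℝ)
    (h0 : f x = 0)
    (heq : ∀ y, y ≠ x → degR G y * f y ≤ ∑ z ∈ univ.filter (fun z => G.Adj y z), f z)
    (y : V) : f y ≤ 0 := by
  have : Nonempty V := ⟨x⟩
  obtain ⟨y0, hy0⟩ := Finite.exists_max f
  by_contra hcon
  push Not at hcon
  have hpos : 0 < f y0 := lt_of_lt_of_le hcon (hy0 y)
  have key : ∀ a b, G.Adj a b → f a = f y0 → f b = f y0 := by
    intro a b hab ha
    have hax : a ≠ x := by rintro rfl; linarith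
    have h1 := heq a hax
    have h2 : ∑ z ∈ univ.filter (fun z => G.Adj a z), (f y0 - f z) ≤ 0 := by
      rw [Finset.sum_sub_distrib, Finset.sum_const, nsmul_eq_mul]
      unfold degR at h1
      rw [ha] at h1
      linarith
    have h3 := Finset.single_le_sum (f := fun z => f y0 - f z)
      (s := univ.filter (fun z => G.Adj a z)) (fun z _ => by linarith [hy0 z])
      (show b ∈ _ by simpa using hab)
    have := hy0 b
    linarith
  obtain ⟨w⟩ := hconn.preconnected y0 x
  have : ∀ a b (w : G.Walk a b), f a = f y0 → f b = f y0 := by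
    intro a b w
    induction w with
    | nil => exact id
    | cons hab _ ih => exact fun ha => ih (key _ _ hab ha)
  have := this _ _ w rfl
  linarith

lemma aux_exists_h [Fintype V] (G : SimpleGraph V) (hconn : G.Connected) (x : V) :
    ∃ h : V → ℝ, h x = 0 ∧ (∀ y, 0 ≤ h y) ∧
      ∀ y, y ≠ x → degR G y * h y = degR G y + ∑ z ∈ univ.filter (fun z => G.Adj y z), h z := by
  let A : (V → ℝ) →ₗ[ℝ] (V → ℝ) :=
    { toFun := fun f y => if y = x then f x else
        degR G y * f y - ∑ z ∈ univ.filter (fun z => G.Adj y z), f z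
      map_add' := by
        intro f g; funext y
        simp only [Pi.add_apply, Finset.sum_add_distrib]
        split_ifs <;> ring
      map_smul' := by
        intro r f; funext y
        simp only [Pi.smul_apply, smul_eq_mul, RingHom.id_apply, ← Finset.mul_sum]
        split_ifs <;> ring }
  have hA : ∀ f y, A f y = if y = x then f x else
        degR G y * f y - ∑ z ∈ univ.filter (fun z => G.Adj y z), f z := fun _ _ => rfl
  have hinj : Function.Injective A := by
    rw [← LinearMap.ker_eq_bot, LinearMap.ker_eq_bot']
    intro f hf
    have hf' : ∀ y, A f y = 0 := fun y => by rw [hf]; rfl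
    have hx : f x = 0 := by simpa [hA] using hf' x
    have hy : ∀ y, y ≠ x → degR G y * f y = ∑ z ∈ univ.filter (fun z => G.Adj y z), f z := by
      intro y hy
      have := hf' y
      rw [hA, if_neg hy] at this
      linarith
    funext y
    apply le_antisymm
    · exact aux_maxp G hconn x f hx (fun y h => (hy y h).le) y
    · have := aux_maxp G hconn x (fun y => - f y) (by simp [hx]) (fun y h => by
        rw [Finset.sum_neg_distrib, ← hy y h]; linarith) y
      simp only [Pi.zero_apply]
      linarith
  obtain ⟨h, hh⟩ := (LinearMap.injective_iff_surjective.mp hinj) (fun y => if y = x then 0 else degR G y)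
  have hh' : ∀ y, A h y = if y = x then 0 else degR G y := fun y => by rw [hh]
  have hx : h x = 0 := by simpa [hA] using hh' x
  have hy : ∀ y, y ≠ x → degR G y * h y = degR G y + ∑ z ∈ univ.filter (fun z => G.Adj y z), h z := by
    intro y hy
    have := hh' y
    rw [hA, if_neg hy, if_neg hy] at this
    linarith
  refine ⟨h, hx, fun y => ?_, hy⟩
  have := aux_maxp G hconn x (fun y => - h y) (by simp [hx]) (fun y h' => by
        rw [Finset.sum_neg_distrib]
        have := hy y h'
        have h3 : 0 ≤ degR G y := by unfold degR; positivity
        linarith) y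
  linarith

lemma aux_hit [Fintype V] (G : SimpleGraph V) (hconn : G.Connected) (x : V)
    (hd : ∀ y, degR G y ≠ 0) :
    ∃ h : V → ℝ, h x = 0 ∧ reverseCoverCost G x = ∑ y, h y ∧
      ∀ y, y ≠ x → degR G y * h y = degR G y + ∑ z ∈ univ.filter (fun z => G.Adj y z), h z := by
  obtain ⟨h, hx, hnn, hy⟩ := aux_exists_h G hconn x
  refine ⟨h, hx, ?_, hy⟩
  unfold reverseCoverCost
  refine Finset.sum_congr rfl fun y _ => aux_hitting_eq G x h hx hnn (fun y hyx => ?_) y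
  have := hy y hyx
  have h2 := hd y
  field_simp
  linarith

lemma aux_fin_two {l : ℕ} [NeZero l] (hl : 3 ≤ l) (i : Fin l) : i + 1 + 1 ≠ i := by
  intro h
  rw [add_assoc] at h
  have h2 : (1 + 1 : Fin l) = 0 := by simpa using h
  have := congrArg Fin.val h2
  rw [Fin.val_add, Fin.val_one' , Fin.val_zero, Nat.mod_eq_of_lt (show 1 < l by omega),
    Nat.mod_eq_of_lt (show 1 + 1 < l by omega)] at this
  omega

lemma aux_struct [Fintype V] (G : SimpleGraph V) (n l : ℕ) [NeZero l]
    (hn : Fintype.card V = n) (hconn : G.Connected) (huni : esize G = n)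
    (hl : 3 ≤ l) (c : Fin l → V) (hinj : Function.Injective c)
    (hadj : ∀ i : Fin l, G.Adj (c i) (c (i + 1))) :
    ∃ (π : V → V) (ρ : V → ℕ), (∀ y, ρ y = distToSet G y (Set.range c)) ∧
      (∀ y, ρ y = 0 ↔ y ∈ Set.range c) ∧ (∀ y, ρ y ≠ 0 → ρ (π y) + 1 = ρ y) ∧
      (∀ i, π (c i) = c (i + 1)) ∧ (∀ a b, G.Adj a b ↔ π a = b ∨ π b = a) ∧
      (∀ a, π (π a) ≠ a) := by
  set ρ : V → ℕ := fun y => distToSet G y (Set.range c) with hρ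
  have hρle : ∀ y i, ρ y ≤ G.dist y (c i) := fun y i => Nat.sInf_le ⟨c i, ⟨i, rfl⟩, rfl⟩
  have hρex : ∀ y, ∃ i, G.dist y (c i) = ρ y := by
    intro y
    have : ρ y ∈ {d | ∃ z ∈ Set.range c, G.dist y z = d} :=
      Nat.sInf_mem ⟨_, c 0, ⟨0, rfl⟩, rfl⟩
    obtain ⟨z, ⟨i, rfl⟩, h⟩ := this
    exact ⟨i, h⟩
  have hρ0 : ∀ y, ρ y = 0 ↔ y ∈ Set.range c := by
    intro y
    constructor
    · intro h
      obtain ⟨i, hi⟩ := hρex y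
      rw [h, hconn.dist_eq_zero_iff] at hi
      exact ⟨i, hi.symm⟩
    · rintro ⟨i, rfl⟩
      have := hρle (c i) i
      rw [SimpleGraph.dist_self] at this
      omega
  have hpar : ∀ y, ρ y ≠ 0 → ∃ z, G.Adj y z ∧ ρ z + 1 = ρ y := by
    intro y hy
    obtain ⟨i, hi⟩ := hρex y
    obtain ⟨w, hw⟩ := hconn.exists_walk_length_eq_dist y (c i)
    cases w with
    | nil => exact absurd (by rw [← hi, SimpleGraph.dist_self]) hy
    | @cons _ z _ hyz w =>
      refine ⟨z, hyz, ?_⟩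
      rw [SimpleGraph.Walk.length_cons] at hw
      have h1 := (hρle z i).trans (SimpleGraph.dist_le w)
      obtain ⟨j, hj⟩ := hρex z
      have h2 := hρle y j
      have h3 := hconn.dist_triangle (u := y) (v := z) (w := c j)
      rw [SimpleGraph.dist_eq_one_iff_adj.mpr hyz] at h3
      omega
  have hpi : ∀ y, ∃ z, G.Adj y z ∧ (ρ y ≠ 0 → ρ z + 1 = ρ y) ∧ (∀ i, y = c i → z = c (i + 1)) := by
    intro y
    by_cases hy : ρ y = 0
    · obtain ⟨i, rfl⟩ := (hρ0 y).mp hy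
      exact ⟨c (i + 1), hadj i, fun h => absurd hy h, fun j hj => by rw [hinj hj]⟩
    · obtain ⟨z, h1, h2⟩ := hpar y hy
      exact ⟨z, h1, fun _ => h2, fun i hi => absurd ((hρ0 y).mpr ⟨i, hi.symm⟩) hy⟩
  choose π hπa hπρ hπc using hpi
  have hππ : ∀ a, π (π a) ≠ a := by
    intro a ha
    by_cases h0 : ρ a = 0
    · obtain ⟨i, rfl⟩ := (hρ0 a).mp h0
      rw [hπc (c i) i rfl, hπc _ (i + 1) rfl] at ha
      exact aux_fin_two hl i (hinj ha)
    · have h1 := hπρ a h0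
      by_cases h2 : ρ (π a) = 0
      · obtain ⟨i, hi⟩ := (hρ0 _).mp h2
        rw [← hi, hπc _ i rfl] at ha
        exact h0 ((hρ0 a).mpr ⟨_, ha⟩)
      · have h3 := hπρ _ h2
        rw [ha] at h3
        omega
  refine ⟨π, ρ, fun _ => rfl, hρ0, hπρ, fun i => hπc _ i rfl, ?_, hππ⟩
  let E : V → G.edgeSet := fun y => ⟨s(y, π y), hπa y⟩
  have hE : Function.Injective E := by
    intro a b hab
    have h1 : s(a, π a) = s(b, π b) := congrArg Subtype.val hab
    rw [Sym2.eq_iff] at h1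
    rcases h1 with h | h
    · exact h.1
    · exact absurd (by rw [← h.1, h.2]) (hππ b)
  have hfin : Finite G.edgeSet := inferInstance
  have hsurj : Function.Surjective E := by
    have : Function.Bijective E := by
      rw [Nat.bijective_iff_injective_and_card]
      refine ⟨hE, ?_⟩
      rw [Nat.card_eq_fintype_card, hn]
      exact huni.symm
    exact this.2
  intro a b
  constructor
  · intro hab
    obtain ⟨y, hy⟩ := hsurj ⟨s(a, b), hab⟩
    have h1 : s(y, π y) = s(a, b) := congrArg Subtype.val hy
    rw [Sym2.eq_iff] at h1
    rcases h1 with h | h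
    · left; rw [← h.1, h.2]
    · right; rw [← h.1, h.2]
  · rintro (h | h)
    · rw [← h]; exact hπa a
    · rw [← h]; exact (hπa b).symm

/-- descendants -/
noncomputable def auxDesc [Fintype V] (π : V → V) (ρ : V → ℕ) (y : V) : Finset V :=
  univ.filter fun z => ρ y ≤ ρ z ∧ π^[ρ z - ρ y] z = y

lemma aux_iter (π : V → V) (ρ : V → ℕ) (H : ∀ y, ρ y ≠ 0 → ρ (π y) + 1 = ρ y)
    (z : V) (i : ℕ) (hi : i ≤ ρ z) : ρ (π^[i] z) = ρ z - i := by
  induction i with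
  | zero => simp
  | succ i ih =>
    rw [Function.iterate_succ_apply']
    have h1 := ih (by omega)
    have := H (π^[i] z) (by omega)
    omega

lemma aux_desc_sum [Fintype V] (π : V → V) (ρ : V → ℕ) (H : ∀ y, ρ y ≠ 0 → ρ (π y) + 1 = ρ y)
    (w : V → ℝ) (y : V) :
    ∑ u ∈ auxDesc π ρ y, w u = w y +
      ∑ z ∈ univ.filter (fun z => ρ z ≠ 0 ∧ π z = y), ∑ u ∈ auxDesc π ρ z, w u := by
  have hd : Set.PairwiseDisjoint (↑(univ.filter (fun z => ρ z ≠ 0 ∧ π z = y)) : Set V)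
      (auxDesc π ρ) := by
    intro a ha b hb hab
    simp only [coe_filter, mem_univ, true_and, Set.mem_ofPred_eq] at ha hb
    rw [Function.onFun, Finset.disjoint_left]
    intro u hua hub
    simp only [auxDesc, mem_filter, mem_univ, true_and] at hua hub
    have h1 := H a ha.1
    have h2 := H b hb.1
    rw [ha.2] at h1
    rw [hb.2] at h2
    apply hab
    rw [← hua.2, ← hub.2, ← h1, ← h2]
  rw [← Finset.sum_biUnion hd, ← Finset.sum_insert]
  · apply Finset.sum_congr _ fun _ _ => rfl
    ext u
    simp only [mem_insert, mem_biUnion, auxDesc, mem_filter, mem_univ, true_and]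
    constructor
    · rintro ⟨h1, h2⟩
      by_cases h : ρ u = ρ y
      · left; simpa [h] using h2
      · right
        have h3 := aux_iter π ρ H u (ρ u - ρ y - 1) (by omega)
        refine ⟨π^[ρ u - ρ y - 1] u, ⟨by omega, ?_⟩, by omega, ?_⟩
        · rw [← Function.iterate_succ_apply' π]
          rwa [show (ρ u - ρ y - 1).succ = ρ u - ρ y by omega]
        · rw [h3, show ρ u - (ρ u - (ρ u - ρ y - 1)) = ρ u - ρ y - 1 by omega]
    · rintro (rfl | ⟨z, ⟨h1, rfl⟩, h3, h4⟩)
      · simp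
      · have := H z h1
        refine ⟨by omega, ?_⟩
        rw [show ρ u - ρ (π z) = (ρ u - ρ z) + 1 by omega, Function.iterate_succ_apply', h4]
  · simp only [mem_biUnion, auxDesc, mem_filter, mem_univ, true_and, not_exists, not_and]
    rintro z ⟨h1, rfl⟩ h3
    have := H z h1
    omega

/-- size of the set of descendants -/
noncomputable def auxS [Fintype V] (π : V → V) (ρ : V → ℕ) (y : V) : ℝ := ((auxDesc π ρ y).card : ℝ)

/-- descendant indicator -/
noncomputable def auxI [Fintype V] (π : V → V) (ρ : V → ℕ) (x y : V) : ℝ :=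
  if x ∈ auxDesc π ρ y then 1 else 0

lemma aux_S [Fintype V] (π : V → V) (ρ : V → ℕ) (H : ∀ y, ρ y ≠ 0 → ρ (π y) + 1 = ρ y) (y : V) :
    auxS π ρ y = 1 + ∑ z ∈ univ.filter (fun z => ρ z ≠ 0 ∧ π z = y), auxS π ρ z := by
  have := aux_desc_sum π ρ H (fun _ => 1) y
  simpa [auxS] using this

lemma aux_I [Fintype V] (π : V → V) (ρ : V → ℕ) (H : ∀ y, ρ y ≠ 0 → ρ (π y) + 1 = ρ y) (x y : V) :
    auxI π ρ x y = (if y = x then 1 else 0)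
      + ∑ z ∈ univ.filter (fun z => ρ z ≠ 0 ∧ π z = y), auxI π ρ x z := by
  have := aux_desc_sum π ρ H (fun u => if u = x then 1 else 0) y
  simpa [auxI] using this

/-- telescoping -/
lemma aux_tele [Fintype V] (π : V → V) (ρ : V → ℕ) (H : ∀ y, ρ y ≠ 0 → ρ (π y) + 1 = ρ y)
    (f : V → ℝ) : ∑ y, f y = ∑ y ∈ univ.filter (fun y => ρ y ≠ 0), auxS π ρ y * (f y - f (π y))
      + ∑ y ∈ univ.filter (fun y => ρ y = 0), auxS π ρ y * f y := by
  have h1 : ∀ y, f y = auxS π ρ y * f y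
      - ∑ z ∈ univ.filter (fun z => ρ z ≠ 0), if π z = y then auxS π ρ z * f y else 0 := by
    intro y
    rw [← Finset.sum_filter, Finset.filter_filter, ← Finset.sum_mul]
    have := aux_S π ρ H y
    rw [this]; ring
  rw [Finset.sum_congr rfl fun y _ => h1 y, Finset.sum_sub_distrib, Finset.sum_comm]
  simp only [Finset.sum_ite_eq, mem_univ, if_true]
  simp only [mul_sub, Finset.sum_sub_distrib]
  rw [← Finset.sum_filter_add_sum_filter_not univ (fun y => ρ y ≠ 0)]
  simp only [not_not]
  ring

lemma aux_nbr [Fintype V] (G : SimpleGraph V) (π : V → V)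
    (hA : ∀ a b, G.Adj a b ↔ π a = b ∨ π b = a) (hππ : ∀ a, π (π a) ≠ a) (f : V → ℝ) (y : V) :
    ∑ z ∈ univ.filter (fun z => G.Adj y z), f z
      = f (π y) + ∑ z ∈ univ.filter (fun z => π z = y), f z := by
  rw [← Finset.sum_insert]
  · apply Finset.sum_congr _ fun _ _ => rfl
    ext z
    simp only [mem_filter, mem_univ, true_and, mem_insert, hA]
    constructor
    · rintro (h | h)
      · exact Or.inl h.symm
      · exact Or.inr h
    · rintro (h | h)
      · exact Or.inl h.symm
      · exact Or.inr h
  · simpa using hππ y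

lemma aux_deg [Fintype V] (G : SimpleGraph V) (π : V → V)
    (hA : ∀ a b, G.Adj a b ↔ π a = b ∨ π b = a) (hππ : ∀ a, π (π a) ≠ a) (y : V) :
    degR G y = 1 + ((univ.filter (fun z => π z = y)).card : ℝ) := by
  have := aux_nbr G π hA hππ (fun _ => 1) y
  simpa [degR] using this

lemma aux_flow [Fintype V] (G : SimpleGraph V) (π : V → V)
    (hA : ∀ a b, G.Adj a b ↔ π a = b ∨ π b = a) (hππ : ∀ a, π (π a) ≠ a) (x : V) (h : V → ℝ)
    (hh : ∀ y, y ≠ x → degR G y * h y = degR G y + ∑ z ∈ univ.filter (fun z => G.Adj y z), h z)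
    (g : V → ℝ) (hg : ∀ y, g y = h y - h (π y) + 1) (y : V) :
    g y = 2 - 2 * (Fintype.card V : ℝ) * (if y = x then 1 else 0)
      + ∑ z ∈ univ.filter (fun z => π z = y), g z := by
  have key : ∀ y, y ≠ x → g y - ∑ z ∈ univ.filter (fun z => π z = y), g z = 2 := by
    intro y hy
    have h1 := hh y hy
    rw [aux_deg G π hA hππ, aux_nbr G π hA hππ] at h1
    have h2 : ∑ z ∈ univ.filter (fun z => π z = y), g z
        = ∑ z ∈ univ.filter (fun z => π z = y), (h z - h y + 1) := by
      apply Finset.sum_congr rfl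
      intro z hz
      simp only [mem_filter, mem_univ, true_and] at hz
      rw [hg, hz]
    rw [h2, hg, Finset.sum_add_distrib, Finset.sum_sub_distrib]
    simp only [Finset.sum_const, nsmul_eq_mul, mul_one]
    linarith
  by_cases hyx : y = x
  · subst hyx
    have h0 : ∑ y, (g y - ∑ z ∈ univ.filter (fun z => π z = y), g z) = 0 := by
      rw [Finset.sum_sub_distrib]
      simp only [Finset.sum_filter]
      rw [Finset.sum_comm]
      simp
    rw [← Finset.add_sum_erase _ _ (mem_univ y)] at h0
    rw [Finset.sum_congr rfl (fun z hz => key z (Finset.ne_of_mem_erase hz))] at h0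
    rw [Finset.sum_const, Finset.card_erase_of_mem (mem_univ y), nsmul_eq_mul, Finset.card_univ,
      Nat.cast_sub (Fintype.card_pos_iff.mpr ⟨y⟩)] at h0
    simp only [if_true]
    push_cast at h0
    linarith
  · have := key y hyx
    simp only [hyx, if_false]
    linarith

lemma aux_flow_tree [Fintype V] (π : V → V) (ρ : V → ℕ)
    (H : ∀ y, ρ y ≠ 0 → ρ (π y) + 1 = ρ y) (H0 : ∀ y, ρ y = 0 → ρ (π y) = 0) (x : V) (K : ℝ)
    (g : V → ℝ)
    (hg : ∀ y, g y = 2 - 2 * K * (if y = x then 1 else 0)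
      + ∑ z ∈ univ.filter (fun z => π z = y), g z) (y : V) (hy : ρ y ≠ 0) :
    g y = 2 * auxS π ρ y - 2 * K * auxI π ρ x y := by
  have hB : ∀ z, ρ z ≤ ∑ z, ρ z := fun z =>
    Finset.single_le_sum (f := ρ) (fun _ _ => Nat.zero_le _) (mem_univ z)
  have key : ∀ k y, ρ y ≠ 0 → ∑ z, ρ z < ρ y + k →
      g y = 2 * auxS π ρ y - 2 * K * auxI π ρ x y := by
    intro k
    induction k with
    | zero => intro y _ h; have := hB y; omega
    | succ k ih =>
      intro y hy hk
      have hf : univ.filter (fun z => π z = y) = univ.filter (fun z => ρ z ≠ 0 ∧ π z = y) := by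
        ext z
        simp only [mem_filter, mem_univ, true_and]
        constructor
        · rintro rfl
          exact ⟨fun h => hy (H0 z h), rfl⟩
        · exact fun h => h.2
      rw [hg y, hf, aux_S π ρ H, aux_I π ρ H]
      rw [Finset.sum_congr rfl (g := fun z => 2 * auxS π ρ z - 2 * K * auxI π ρ x z)]
      · rw [Finset.sum_sub_distrib, ← Finset.mul_sum, ← Finset.mul_sum]
        ring
      · intro z hz
        simp only [mem_filter, mem_univ, true_and] at hz
        apply ih z hz.1
        have := H z hz.1
        rw [hz.2] at this
        omega
  exact key (∑ z, ρ z + 1) y hy (by omega)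

lemma aux_flow_cyc [Fintype V] (π : V → V) (ρ : V → ℕ)
    (H : ∀ y, ρ y ≠ 0 → ρ (π y) + 1 = ρ y) (H0 : ∀ y, ρ y = 0 → ρ (π y) = 0) (x : V) (K : ℝ)
    (g : V → ℝ)
    (hg : ∀ y, g y = 2 - 2 * K * (if y = x then 1 else 0)
      + ∑ z ∈ univ.filter (fun z => π z = y), g z) (w : V) (hw : ρ w = 0)
    (hu : ∀ z, ρ z = 0 → π z = π w → z = w) :
    g (π w) = g w + 2 * auxS π ρ (π w) - 2 * K * auxI π ρ x (π w) := by
  have hf : univ.filter (fun z => π z = π w)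
      = insert w (univ.filter (fun z => ρ z ≠ 0 ∧ π z = π w)) := by
    ext z
    simp only [mem_filter, mem_univ, true_and, mem_insert]
    constructor
    · intro h
      by_cases hz : ρ z = 0
      · exact Or.inl (hu z hz h)
      · exact Or.inr ⟨hz, h⟩
    · rintro (rfl | h)
      · rfl
      · exact h.2
  rw [hg (π w), hf, Finset.sum_insert (by simp [hw]), aux_S π ρ H, aux_I π ρ H]
  rw [Finset.sum_congr rfl (g := fun z => 2 * auxS π ρ z - 2 * K * auxI π ρ x z)]
  · rw [Finset.sum_sub_distrib, ← Finset.mul_sum, ← Finset.mul_sum]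
    ring
  · intro z hz
    simp only [mem_filter, mem_univ, true_and] at hz
    exact aux_flow_tree π ρ H H0 x K g hg z hz.1

lemma aux_concave (L : ℕ) (a : ℕ → ℝ) (h0 : a 0 = 0)
    (hc : ∀ j, j < L → a j + a (j + 2) ≤ 2 * a (j + 1)) (j : ℕ) (hj : j ≤ L) :
    a (j + 1) - a j ≤ a 1 ∧ a j ≤ j * a 1 ∧ a (j + 1) ≤ (j + 1) * a 1 := by
  induction j with
  | zero => simp [h0]
  | succ j ih =>
    obtain ⟨h1, h2, h3⟩ := ih (by omega)
    have := hc j (by omega)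
    push_cast
    refine ⟨by linarith, by linarith, by linarith⟩

lemma aux_cyc (L : ℕ) (a N : ℕ → ℝ) (h0 : a 0 = 0) (hL : a (L + 1) = 0)
    (hr : ∀ j, j < L → 2 * a (j + 1) - a j - a (j + 2) = 2 * N (j + 1))
    (hN : ∀ j, 1 ≤ N j) (m : ℝ) (hm : m = ∑ j ∈ range L, (N (j + 1) - 1)) :
    ∑ j ∈ range L, N (j + 1) * a (j + 1) ≤ (((L : ℝ) + 1) ^ 3 - (L + 1)) / 6
      + m * (((L : ℝ) + 1) ^ 2 / 4 + (L + m) * (L + 1) / 2) ∧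
    (m = 0 → ∑ j ∈ range L, N (j + 1) * a (j + 1) = (((L : ℝ) + 1) ^ 3 - (L + 1)) / 6) := by
  -- identity (i)
  have hi : ∑ j ∈ range L, a (j + 1)
      = ∑ j ∈ range L, N (j + 1) * (((j : ℝ) + 1) * (L - j)) := by
    let u : ℕ → ℝ := fun j => a (j + 1) * ((j : ℝ) * (L + 1 - j)) - a j * (((j : ℝ) + 1) * (L - j))
    have h1 : ∑ j ∈ range L, (u j - u (j + 1)) = u 0 - u L := Finset.sum_range_sub' u L
    have h2 : u 0 - u L = 0 := by simp [u, h0, hL]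
    have h3 : ∑ j ∈ range L, (u j - u (j + 1))
        = ∑ j ∈ range L, (2 * (N (j + 1) * (((j : ℝ) + 1) * (L - j))) - 2 * a (j + 1)) := by
      apply Finset.sum_congr rfl
      intro j hj
      have := hr j (by simpa using hj)
      have h4 : N (j + 1) = (2 * a (j + 1) - a j - a (j + 2)) / 2 := by linarith
      rw [h4]
      simp only [u]
      push_cast
      ring
    rw [h1, h2, Finset.sum_sub_distrib, ← Finset.mul_sum, ← Finset.mul_sum] at h3
    linarith
  have hM : ∑ j ∈ range L, N (j + 1) = L + m := by
    rw [hm, Finset.sum_sub_distrib]; simp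
  have hcube : ∑ j ∈ range L, (((j : ℝ) + 1) * (L - j)) = (((L : ℝ) + 1) ^ 3 - (L + 1)) / 6 := by
    have : ∀ K : ℕ, ∑ j ∈ range K, (((j : ℝ) + 1) * (L - j))
        = L * (K * (K + 1) / 2) - ((K - 1) * K * (K + 1)) / 3 := by
      intro K
      induction K with
      | zero => simp
      | succ K ih => rw [Finset.sum_range_succ, ih]; push_cast; ring
    rw [this]; ring
  have hsplit : ∑ j ∈ range L, N (j + 1) * a (j + 1) = (((L : ℝ) + 1) ^ 3 - (L + 1)) / 6
      + ∑ j ∈ range L, (N (j + 1) - 1) * (((j : ℝ) + 1) * (L - j) + a (j + 1)) := by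
    rw [← hcube]
    have : ∑ j ∈ range L, N (j + 1) * a (j + 1) = ∑ j ∈ range L, (N (j + 1) - 1) * a (j + 1)
        + ∑ j ∈ range L, a (j + 1) := by
      rw [← Finset.sum_add_distrib]; exact Finset.sum_congr rfl fun j _ => by ring
    rw [this, hi, ← Finset.sum_add_distrib, ← Finset.sum_add_distrib]
    exact Finset.sum_congr rfl fun j _ => by ring
  have hconc : ∀ j, j < L → a j + a (j + 2) ≤ 2 * a (j + 1) := fun j hj => by
    have := hr j hj; have := hN (j + 1); linarith
  have hsum : a 1 + a L = 2 * (L + m) := by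
    have h1 : ∑ j ∈ range L, ((a (j + 1) - a j) - (a (j + 1 + 1) - a (j + 1)))
        = (a (0 + 1) - a 0) - (a (L + 1) - a L) :=
      Finset.sum_range_sub' (fun j => a (j + 1) - a j) L
    rw [← hM, Finset.mul_sum]
    rw [← Finset.sum_congr rfl (fun j hj => hr j (by simpa using hj))]
    rw [hL, h0] at h1
    have : ∑ j ∈ range L, (2 * a (j + 1) - a j - a (j + 2))
        = ∑ j ∈ range L, ((a (j + 1) - a j) - (a (j + 1 + 1) - a (j + 1))) :=
      Finset.sum_congr rfl fun j _ => by ring_nf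
    rw [this, h1]; ring
  have hup1 : ∀ j, j < L → a (j + 1) ≤ (j + 1) * a 1 := fun j hj =>
    (aux_concave L a h0 hconc j hj.le).2.2
  have hup2 : ∀ j, j < L → a (j + 1) ≤ (L - j) * a L := by
    intro j hj
    have := (aux_concave L (fun i => a (L + 1 - i)) (by simpa using hL) (fun i hi => by
      have := hconc (L - 1 - i) (by omega)
      rw [show L + 1 - i = L - 1 - i + 2 by omega, show L + 1 - (i + 2) = L - 1 - i by omega,
        show L + 1 - (i + 1) = L - 1 - i + 1 by omega]
      linarith) (L - j) (by omega)).2.1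
    rw [show L + 1 - (L - j) = j + 1 by omega, Nat.cast_sub hj.le] at this
    simpa using this
  have hmnn : 0 ≤ m := by
    rw [hm]; exact Finset.sum_nonneg fun j _ => by linarith [hN (j + 1)]
  have hup : ∀ j, j < L → ((j : ℝ) + 1) * (L - j) + a (j + 1)
      ≤ ((L : ℝ) + 1) ^ 2 / 4 + (L + m) * (L + 1) / 2 := by
    intro j hj
    have h1 := hup1 j hj
    have h2 := hup2 j hj
    have hjL : (j : ℝ) + 1 ≤ L := by exact_mod_cast hj
    have hj0 : (0 : ℝ) ≤ j := Nat.cast_nonneg j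
    have h3 : ((j : ℝ) + 1) * (L - j) ≤ ((L : ℝ) + 1) ^ 2 / 4 := by
      nlinarith [sq_nonneg (((j : ℝ) + 1) - (L - j))]
    have h4 : ((L : ℝ) + 1) * a (j + 1) ≤ 2 * (L + m) * (((j : ℝ) + 1) * (L - j)) := by
      have e1 := mul_le_mul_of_nonneg_left h1 (show (0 : ℝ) ≤ L - j by linarith)
      have e2 := mul_le_mul_of_nonneg_left h2 (show (0 : ℝ) ≤ j + 1 by linarith)
      rw [← hsum]
      nlinarith
    have hLm : (0 : ℝ) ≤ 2 * (L + m) := by positivity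
    have h5 : ((L : ℝ) + 1) * a (j + 1) ≤ (L + 1) * ((L + m) * (L + 1) / 2) := by
      have := mul_le_mul_of_nonneg_left h3 hLm
      nlinarith
    have h6 := le_of_mul_le_mul_left h5 (by positivity)
    linarith
  constructor
  · rw [hsplit, hm, Finset.sum_mul, ← hm]
    apply add_le_add le_rfl
    apply Finset.sum_le_sum
    intro j hj
    exact mul_le_mul_of_nonneg_left (hup j (by simpa using hj)) (by linarith [hN (j + 1)])
  · intro hm0
    rw [hsplit]
    rw [hm0] at hm
    have := (Finset.sum_eq_zero_iff_of_nonneg (fun j _ => by linarith [hN (j + 1)])).mp hm.symm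
    rw [Finset.sum_eq_zero fun j hj => by rw [this j hj, zero_mul], add_zero]

lemma aux_tree_bound (ρ : V → ℕ) (s : V → ℕ) (F : ℕ → ℝ) (hF : Monotone F) (k : ℕ) :
    ∀ O : Finset V, O.card = k →
    (∀ o ∈ O, s o ≤ (O.filter fun z => z = o ∨ ρ o < ρ z).card) →
    ∑ o ∈ O, F (s o) ≤ ∑ t ∈ range k, F (t + 1) := by
  induction k with
  | zero => intro O h _; rw [Finset.card_eq_zero] at h; simp [h]
  | succ k ih =>
    intro O hO hs
    obtain ⟨o, ho, hmin⟩ := Finset.exists_min_image O ρ (Finset.card_pos.mp (by omega))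
    rw [← Finset.sum_erase_add _ _ ho, Finset.sum_range_succ]
    apply add_le_add
    · apply ih
      · rw [Finset.card_erase_of_mem ho]; omega
      · intro z hz
        refine (hs z (Finset.mem_of_mem_erase hz)).trans (Finset.card_le_card ?_)
        intro u hu
        simp only [mem_filter, mem_erase] at hu hz ⊢
        refine ⟨⟨?_, hu.1⟩, hu.2⟩
        rintro rfl
        have := hmin z hz.2
        rcases hu.2 with h | h
        · exact hz.1 h.symm
        · omega
    · apply hF
      refine (hs o ho).trans ?_
      rw [← hO]
      exact Finset.card_filter_le _ _

/-- vertices off the cycle and off the path from `x` to the cycle -/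
noncomputable def auxO [Fintype V] (π : V → V) (ρ : V → ℕ) (x : V) : Finset V :=
  univ.filter fun y => ρ y ≠ 0 ∧ x ∉ auxDesc π ρ y

lemma aux_mem_desc_iter [Fintype V] (π : V → V) (ρ : V → ℕ)
    (H : ∀ y, ρ y ≠ 0 → ρ (π y) + 1 = ρ y) (x : V) (i j : ℕ) (hij : j ≤ i) (hi : i ≤ ρ x) :
    π^[j] x ∈ auxDesc π ρ (π^[i] x) := by
  simp only [auxDesc, mem_filter, mem_univ, true_and]
  rw [aux_iter π ρ H x i hi, aux_iter π ρ H x j (by omega)]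
  refine ⟨by omega, ?_⟩
  rw [← Function.iterate_add_apply]
  congr 2; omega

lemma aux_path_eq [Fintype V] (π : V → V) (ρ : V → ℕ)
    (H : ∀ y, ρ y ≠ 0 → ρ (π y) + 1 = ρ y) (x : V) :
    univ.filter (fun y => ρ y ≠ 0 ∧ x ∈ auxDesc π ρ y) = (range (ρ x)).image (fun i => π^[i] x) := by
  ext y
  simp only [mem_filter, mem_univ, true_and, mem_image, mem_range]
  constructor
  · rintro ⟨h1, h2⟩
    simp only [auxDesc, mem_filter, mem_univ, true_and] at h2
    exact ⟨ρ x - ρ y, by omega, h2.2⟩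
  · rintro ⟨i, hi, rfl⟩
    refine ⟨?_, ?_⟩
    · rw [aux_iter π ρ H x i hi.le]; omega
    · exact aux_mem_desc_iter π ρ H x i 0 (Nat.zero_le _) hi.le

lemma aux_path_inj (π : V → V) (ρ : V → ℕ)
    (H : ∀ y, ρ y ≠ 0 → ρ (π y) + 1 = ρ y) (x : V) (i j : ℕ) (hi : i ≤ ρ x) (hj : j ≤ ρ x)
    (h : π^[i] x = π^[j] x) : i = j := by
  have h1 := aux_iter π ρ H x i hi
  have h2 := aux_iter π ρ H x j hj
  rw [h] at h1
  omega

lemma aux_sum_split [Fintype V] (π : V → V) (ρ : V → ℕ)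
    (H : ∀ y, ρ y ≠ 0 → ρ (π y) + 1 = ρ y) (x : V) (f : V → ℝ) :
    ∑ y ∈ univ.filter (fun y => ρ y ≠ 0), f y
      = ∑ y ∈ auxO π ρ x, f y + ∑ i ∈ range (ρ x), f (π^[i] x) := by
  rw [← Finset.sum_filter_add_sum_filter_not (univ.filter (fun y => ρ y ≠ 0))
    (fun y => x ∉ auxDesc π ρ y), Finset.filter_filter, Finset.filter_filter]
  simp only [not_not]
  rw [aux_path_eq π ρ H x, Finset.sum_image]
  · rfl
  · intro i hi j hj hij
    simp only [coe_range, Set.mem_Iio] at hi hj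
    exact aux_path_inj π ρ H x i j hi.le hj.le hij

lemma aux_S_path [Fintype V] (π : V → V) (ρ : V → ℕ)
    (H : ∀ y, ρ y ≠ 0 → ρ (π y) + 1 = ρ y) (x : V) (i : ℕ) (hi : i ≤ ρ x) :
    ((i : ℝ) + 1) ≤ auxS π ρ (π^[i] x) := by
  have : (range (i + 1)).image (fun j => π^[j] x) ⊆ auxDesc π ρ (π^[i] x) := by
    intro y hy
    simp only [mem_image, mem_range] at hy
    obtain ⟨j, hj, rfl⟩ := hy
    exact aux_mem_desc_iter π ρ H x i j (by omega) hi
  have h2 := Finset.card_le_card this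
  rw [Finset.card_image_of_injOn, Finset.card_range] at h2
  · unfold auxS; exact_mod_cast h2
  · intro a ha b hb hab
    simp only [coe_range, Set.mem_Iio] at ha hb
    exact aux_path_inj π ρ H x a b (by omega) (by omega) hab

lemma aux_S_path_eq [Fintype V] (π : V → V) (ρ : V → ℕ)
    (H : ∀ y, ρ y ≠ 0 → ρ (π y) + 1 = ρ y) (x : V) (i : ℕ) (hi : i < ρ x)
    (hO : auxO π ρ x = ∅) :
    auxS π ρ (π^[i] x) = (i : ℝ) + 1 := by
  apply le_antisymm _ (aux_S_path π ρ H x i hi.le)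
  have : auxDesc π ρ (π^[i] x) ⊆ (range (i + 1)).image (fun j => π^[j] x) := by
    intro y hy
    have hρ := aux_iter π ρ H x i hi.le
    simp only [auxDesc, mem_filter, mem_univ, true_and] at hy
    have hyO : y ∉ auxO π ρ x := by simp [hO]
    simp only [auxO, mem_filter, mem_univ, true_and, not_and, not_not] at hyO
    have h1 := hyO (by omega)
    simp only [auxDesc, mem_filter, mem_univ, true_and] at h1
    simp only [mem_image, mem_range]
    exact ⟨ρ x - ρ y, by omega, h1.2⟩
  have h2 := (Finset.card_le_card this).trans Finset.card_image_le
  rw [Finset.card_range] at h2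
  unfold auxS; exact_mod_cast h2

lemma aux_S_ge_one [Fintype V] (π : V → V) (ρ : V → ℕ) (y : V) : 1 ≤ auxS π ρ y := by
  have : 0 < (auxDesc π ρ y).card := Finset.card_pos.mpr ⟨y, by simp [auxDesc]⟩
  unfold auxS; exact_mod_cast this

lemma aux_O_bound [Fintype V] (π : V → V) (ρ : V → ℕ)
    (x : V) :
    ∑ o ∈ auxO π ρ x, auxS π ρ o * (2 * auxS π ρ o - 1)
      ≤ ∑ t ∈ range (auxO π ρ x).card, ((t : ℝ) + 1) * (2 * (t + 1) - 1) := by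
  have := aux_tree_bound ρ (fun o => (auxDesc π ρ o).card) (fun t => (t : ℝ) * (2 * t - 1)) (by
    apply monotone_nat_of_le_succ
    intro k
    push_cast
    have : (0 : ℝ) ≤ k := Nat.cast_nonneg k
    nlinarith) (auxO π ρ x).card (auxO π ρ x) rfl (by
    intro o ho
    apply Finset.card_le_card
    intro z hz
    simp only [auxO, mem_filter, mem_univ, true_and] at ho ⊢
    simp only [auxDesc, mem_filter, mem_univ, true_and] at hz ho ⊢
    refine ⟨⟨by omega, ?_⟩, ?_⟩
    · rintro ⟨h1, h2⟩
      apply ho.2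
      refine ⟨by omega, ?_⟩
      rw [show ρ x - ρ o = (ρ z - ρ o) + (ρ x - ρ z) by omega, Function.iterate_add_apply, h2, hz.2]
    · by_cases h : ρ z = ρ o
      · left; simpa [h] using hz.2
      · right; omega)
  simpa [auxS] using this

lemma aux_formula [Fintype V] (G : SimpleGraph V) (n : ℕ)
    (hn : Fintype.card V = n) (hconn : G.Connected) (x : V) (π : V → V) (ρ : V → ℕ)
    (H : ∀ y, ρ y ≠ 0 → ρ (π y) + 1 = ρ y) (H0 : ∀ y, ρ y = 0 → ρ (π y) = 0)
    (hA : ∀ a b, G.Adj a b ↔ π a = b ∨ π b = a) (hππ : ∀ a, π (π a) ≠ a)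
    (hu : ∀ w z, ρ w = 0 → ρ z = 0 → π z = π w → z = w) :
    ∃ h : V → ℝ,
      (∀ w, ρ w = 0 → 2 * h (π w) - h w - h (π (π w))
        = 2 * auxS π ρ (π w) - 2 * n * auxI π ρ x (π w)) ∧
      reverseCoverCost G x = ∑ o ∈ auxO π ρ x, auxS π ρ o * (2 * auxS π ρ o - 1)
        + ∑ i ∈ range (ρ x), (n - auxS π ρ (π^[i] x)) * (2 * (n - auxS π ρ (π^[i] x)) + 1)
        + ∑ y ∈ univ.filter (fun y => ρ y = 0), auxS π ρ y * (h y - h (π^[ρ x] x)) := by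
  have hd : ∀ y, degR G y ≠ 0 := fun y => by rw [aux_deg G π hA hππ]; positivity
  obtain ⟨h, hx, hRC, hh⟩ := aux_hit G hconn x hd
  refine ⟨h, ?_, ?_⟩
  · intro w hw
    have := aux_flow_cyc π ρ H H0 x n _ (fun y => by
      rw [← hn]; exact aux_flow G π hA hππ x h hh (fun y => h y - h (π y) + 1) (fun _ => rfl) y)
      w hw (fun z hz e => hu w z hw hz e)
    linarith
  have hg : ∀ y, ρ y ≠ 0 → h y - h (π y) = 2 * auxS π ρ y - 2 * n * auxI π ρ x y - 1 := by
    intro y hy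
    have := aux_flow_tree π ρ H H0 x n _ (fun y => by
      rw [← hn]; exact aux_flow G π hA hππ x h hh (fun y => h y - h (π y) + 1) (fun _ => rfl) y) y hy
    linarith
  have hI0 : ∀ y ∈ auxO π ρ x, auxI π ρ x y = 0 := by
    intro y hy
    simp only [auxO, mem_filter] at hy
    simp [auxI, hy.2.2]
  have hI1 : ∀ i, i < ρ x → auxI π ρ x (π^[i] x) = 1 := by
    intro i hi
    have := aux_mem_desc_iter π ρ H x i 0 (Nat.zero_le _) hi.le
    simp only [Function.iterate_zero, id] at this
    simp [auxI, this]
  have hne : ∀ i, i < ρ x → ρ (π^[i] x) ≠ 0 := fun i hi => by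
    rw [aux_iter π ρ H x i hi.le]; omega
  have htot : ∑ y ∈ univ.filter (fun y => ρ y = 0), auxS π ρ y = n := by
    have := aux_tele π ρ H (fun _ => 1)
    simp at this
    rw [← this, hn]
  have hroot : h (π^[ρ x] x) = ∑ i ∈ range (ρ x), (2 * (n - auxS π ρ (π^[i] x)) + 1) := by
    have h1 := Finset.sum_range_sub (fun i => h (π^[i] x)) (ρ x)
    simp only [Function.iterate_zero, id, hx, sub_zero] at h1
    rw [← h1]
    apply Finset.sum_congr rfl
    intro i hi
    have hi' : i < ρ x := by simpa using hi
    have h2 := hg _ (hne i hi')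
    rw [hI1 i hi'] at h2
    rw [Function.iterate_succ_apply']
    linarith
  rw [hRC, aux_tele π ρ H h, aux_sum_split π ρ H x]
  have e1 : ∑ y ∈ auxO π ρ x, auxS π ρ y * (h y - h (π y))
      = ∑ o ∈ auxO π ρ x, auxS π ρ o * (2 * auxS π ρ o - 1) := by
    apply Finset.sum_congr rfl
    intro y hy
    have h1 := hI0 y hy
    have : ρ y ≠ 0 := by simp only [auxO, mem_filter] at hy; exact hy.2.1
    rw [hg y this, h1]; ring
  have e2 : ∑ i ∈ range (ρ x), auxS π ρ (π^[i] x) * (h (π^[i] x) - h (π (π^[i] x)))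
      = ∑ i ∈ range (ρ x), (n - auxS π ρ (π^[i] x)) * (2 * (n - auxS π ρ (π^[i] x)) + 1)
        - n * h (π^[ρ x] x) := by
    rw [hroot, Finset.mul_sum, ← Finset.sum_sub_distrib]
    apply Finset.sum_congr rfl
    intro i hi
    have hi' : i < ρ x := by simpa using hi
    rw [hg _ (hne i hi'), hI1 i hi']; ring
  have e3 : ∑ y ∈ univ.filter (fun y => ρ y = 0), auxS π ρ y * (h y - h (π^[ρ x] x))
      = ∑ y ∈ univ.filter (fun y => ρ y = 0), auxS π ρ y * h y - n * h (π^[ρ x] x) := by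
    simp only [mul_sub, Finset.sum_sub_distrib]
    rw [← Finset.sum_mul, htot]
  rw [e1, e2, e3]
  ring

lemma aux_htot [Fintype V] (π : V → V) (ρ : V → ℕ) (H : ∀ y, ρ y ≠ 0 → ρ (π y) + 1 = ρ y) :
    ∑ y ∈ univ.filter (fun y => ρ y = 0), auxS π ρ y = (Fintype.card V : ℝ) := by
  have := aux_tele π ρ H (fun _ => 1)
  simp at this
  rw [← this]

lemma aux_sum_cyc [Fintype V] (l : ℕ) [NeZero l] (c : Fin l → V) (hinj : Function.Injective c)
    (ρ : V → ℕ) (hρ : ∀ y, ρ y = 0 ↔ y ∈ Set.range c) (k : Fin l) (F : V → ℝ) :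
    ∑ y ∈ univ.filter (fun y => ρ y = 0), F y
      = ∑ j ∈ range l, F (c (k + Fin.ofNat l j)) := by
  have h1 : univ.filter (fun y => ρ y = 0) = univ.image c := by
    ext y; simp [hρ]
  rw [h1, Finset.sum_image (fun a _ b _ h => hinj h),
    ← Equiv.sum_comp (Equiv.addLeft k) (fun i => F (c i)),
    ← Fin.sum_univ_eq_sum_range (fun j => F (c (k + Fin.ofNat l j)))]
  apply Finset.sum_congr rfl
  intro i _
  simp

lemma aux_count [Fintype V] (π : V → V) (ρ : V → ℕ) (H : ∀ y, ρ y ≠ 0 → ρ (π y) + 1 = ρ y)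
    (l : ℕ) [NeZero l] (c : Fin l → V) (hinj : Function.Injective c)
    (hρ : ∀ y, ρ y = 0 ↔ y ∈ Set.range c) (x : V) :
    Fintype.card V = ρ x + l + (auxO π ρ x).card := by
  have h1 := aux_sum_split π ρ H x (fun _ => 1)
  have h2 := aux_sum_cyc l c hinj ρ hρ 0 (fun _ => 1)
  have h3 := Finset.card_filter_add_card_filter_not (s := (univ : Finset V)) (fun y => ρ y = 0)
  simp only [Finset.sum_const, nsmul_eq_mul, mul_one, Finset.card_range] at h1 h2
  norm_cast at h1 h2
  rw [Finset.card_univ] at h3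
  omega

lemma aux_ofNat_succ (l : ℕ) [NeZero l] (j : ℕ) : Fin.ofNat l (j + 1) = Fin.ofNat l j + 1 := by
  apply Fin.ext
  simp [Fin.val_add]

lemma aux_fin_ineq (L m T : ℝ) (hL : 0 ≤ L) (hm : 0 ≤ m) (hmT : m ≤ T) :
    m * ((L + 1) ^ 2 / 4 + (L + m) * (L + 1) / 2) ≤ T * ((L + 1) ^ 2 / 4 + (L + T) * (L + 1) / 2) := by
  have hT : 0 ≤ T := hm.trans hmT
  gcongr

set_option maxHeartbeats 800000 in
lemma aux_main [Fintype V] (G : SimpleGraph V) (n l L : ℕ) [NeZero l] (hL : l = L + 1)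
    (hn : Fintype.card V = n) (hconn : G.Connected) (c : Fin l → V)
    (hinj : Function.Injective c) (x : V) (π : V → V) (ρ : V → ℕ)
    (hρ : ∀ y, ρ y = 0 ↔ y ∈ Set.range c)
    (H : ∀ y, ρ y ≠ 0 → ρ (π y) + 1 = ρ y) (hπc : ∀ i, π (c i) = c (i + 1))
    (hA : ∀ a b, G.Adj a b ↔ π a = b ∨ π b = a) (hππ : ∀ a, π (π a) ≠ a)
    (T : ℕ) (hT : T = (auxO π ρ x).card) :
    (reverseCoverCost G x ≤ ∑ t ∈ range T, ((t : ℝ) + 1) * (2 * (t + 1) - 1)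
      + ∑ i ∈ range (ρ x), ((n : ℝ) - (i + 1)) * (2 * (n - (i + 1)) + 1)
      + ((((L : ℝ) + 1) ^ 3 - (L + 1)) / 6
      + T * (((L : ℝ) + 1) ^ 2 / 4 + (L + T) * (L + 1) / 2))) ∧
    (T = 0 → reverseCoverCost G x =
      ∑ i ∈ range (ρ x), ((n : ℝ) - (i + 1)) * (2 * (n - (i + 1)) + 1)
      + (((L : ℝ) + 1) ^ 3 - (L + 1)) / 6) := by
  have H0 : ∀ y, ρ y = 0 → ρ (π y) = 0 := by
    intro y hy
    obtain ⟨i, rfl⟩ := (hρ y).mp hy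
    rw [hπc]
    exact (hρ _).mpr ⟨_, rfl⟩
  have hu : ∀ w z, ρ w = 0 → ρ z = 0 → π z = π w → z = w := by
    intro w z hw hz h
    obtain ⟨i, rfl⟩ := (hρ w).mp hw
    obtain ⟨j, rfl⟩ := (hρ z).mp hz
    rw [hπc, hπc] at h
    rw [add_right_cancel (hinj h)]
  obtain ⟨h, hcyc, hRC⟩ := aux_formula G n hn hconn x π ρ H H0 hA hππ hu
  have hcount := aux_count π ρ H l c hinj hρ x
  rw [← hT, hn] at hcount
  obtain ⟨k, hk⟩ : π^[ρ x] x ∈ Set.range c := by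
    rw [← hρ, aux_iter π ρ H x _ le_rfl]; omega
  set N : ℕ → ℝ := fun j => auxS π ρ (c (k + Fin.ofNat l j)) with hN
  set a : ℕ → ℝ := fun j => h (c (k + Fin.ofNat l j)) - h (c k) with ha
  have hz : Fin.ofNat l 0 = 0 := rfl
  have hlz : Fin.ofNat l (L + 1) = 0 := by apply Fin.ext; simp [hL]
  have hN0 : (ρ x : ℝ) + 1 ≤ N 0 := by
    simp only [hN, hz, add_zero, hk]
    exact aux_S_path π ρ H x _ le_rfl
  have hNtot : N 0 + ∑ j ∈ range L, N (j + 1) = n := by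
    have h1 := aux_htot π ρ H
    rw [aux_sum_cyc l c hinj ρ hρ k, hn] at h1
    rw [← h1, show range l = range (L + 1) by rw [hL], Finset.sum_range_succ', add_comm]
  set m : ℝ := ∑ j ∈ range L, (N (j + 1) - 1) with hm
  have hN1 : ∀ j, 1 ≤ N j := fun j => aux_S_ge_one _ _ _
  have hm0 : 0 ≤ m := Finset.sum_nonneg fun j _ => by linarith [hN1 (j + 1)]
  have hmT : m ≤ T := by
    rw [hm, Finset.sum_sub_distrib]
    have : (n : ℝ) = ρ x + (L + 1) + T := by rw [hcount, hL]; push_cast; ring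
    simp only [Finset.sum_const, nsmul_eq_mul, mul_one, Finset.card_range]
    linarith
  have hcy := aux_cyc L a N (by simp [ha]) (by
    change h (c (k + Fin.ofNat l (L + 1))) - h (c k) = 0
    rw [hlz, add_zero, sub_self]) (by
    intro j hj
    have h1 := hcyc (c (k + Fin.ofNat l j)) ((hρ _).mpr ⟨_, rfl⟩)
    rw [hπc, hπc, add_assoc, add_assoc, add_assoc, ← add_assoc (Fin.ofNat l j), ← aux_ofNat_succ,
      ← aux_ofNat_succ] at h1
    have h2 : auxI π ρ x (c (k + Fin.ofNat l (j + 1))) = 0 := by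
      unfold auxI
      rw [if_neg]
      intro hx
      simp only [auxDesc, mem_filter, mem_univ, true_and] at hx
      rw [(hρ (c (k + Fin.ofNat l (j + 1)))).mpr ⟨_, rfl⟩, Nat.sub_zero, ← hk] at hx
      have h3 := hinj hx.2
      have h4 : Fin.ofNat l (j + 1) = 0 := by simpa using h3.symm
      have h5 := congrArg Fin.val h4
      simp only [Fin.val_ofNat, Fin.val_zero] at h5
      rw [Nat.mod_eq_of_lt (by omega)] at h5
      omega
    rw [h2] at h1
    simp only [ha, hN]
    linarith) hN1 m hm
  have hcsum : ∑ y ∈ univ.filter (fun y => ρ y = 0), auxS π ρ y * (h y - h (π^[ρ x] x))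
      = ∑ j ∈ range L, N (j + 1) * a (j + 1) := by
    rw [aux_sum_cyc l c hinj ρ hρ k, ← hk]
    rw [show range l = range (L + 1) by rw [hL], Finset.sum_range_succ']
    simp [hz, hN, ha]
  rw [hcsum] at hRC
  constructor
  · rw [hRC]
    apply add_le_add (add_le_add _ _) _
    · rw [hT]; exact aux_O_bound π ρ x
    · apply Finset.sum_le_sum
      intro i hi
      have hi' : i < ρ x := by simpa using hi
      have h1 := aux_S_path π ρ H x i hi'.le
      have h2 : auxS π ρ (π^[i] x) ≤ n := by
        unfold auxS
        rw [← hn]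
        exact_mod_cast Finset.card_le_univ _
      exact mul_le_mul (by linarith) (by linarith) (by linarith) (by linarith)
    · refine hcy.1.trans ?_
      exact add_le_add le_rfl (aux_fin_ineq L m T (Nat.cast_nonneg _) hm0 hmT)
  · intro hT0
    have hO : auxO π ρ x = ∅ := by rw [← Finset.card_eq_zero]; omega
    have hm00 : m = 0 := by
      rw [hT0] at hmT; push_cast at hmT; linarith
    rw [hRC, hcy.2 hm00, hO, Finset.sum_empty, zero_add]
    congr 1
    apply Finset.sum_congr rfl
    intro i hi
    rw [aux_S_path_eq π ρ H x i (by simpa using hi) hO]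

lemma aux_sum1 (T : ℕ) : ∑ t ∈ range T, ((t : ℝ) + 1) * (2 * (t + 1) - 1)
    = T * (T + 1) * (4 * T - 1) / 6 := by
  induction T with
  | zero => simp
  | succ T ih => rw [Finset.sum_range_succ, ih]; push_cast; ring

lemma aux_sum2 (D : ℕ) (n : ℝ) : ∑ i ∈ range D, ((n : ℝ) - (i + 1)) * (2 * (n - (i + 1)) + 1)
    = n * (n - 1) * (4 * n + 1) / 6 - (n - D) * (n - D - 1) * (4 * (n - D) + 1) / 6 := by
  induction D with
  | zero => simp
  | succ D ih => rw [Finset.sum_range_succ, ih]; push_cast; ring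

lemma aux_iso [Fintype V] (G : SimpleGraph V) (n l : ℕ) [NeZero l] (hl : 3 ≤ l)
    (hn : Fintype.card V = n) (c : Fin l → V)
    (hinj : Function.Injective c) (x : V) (π : V → V) (ρ : V → ℕ)
    (hρ : ∀ y, ρ y = 0 ↔ y ∈ Set.range c)
    (H : ∀ y, ρ y ≠ 0 → ρ (π y) + 1 = ρ y) (hπc : ∀ i, π (c i) = c (i + 1))
    (hA : ∀ a b, G.Adj a b ↔ π a = b ∨ π b = a) (hD : n = ρ x + l) :
    Nonempty (lollipop n l ≃g G) := by
  obtain ⟨k, hk⟩ : π^[ρ x] x ∈ Set.range c := by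
    rw [← hρ, aux_iter π ρ H x _ le_rfl]; omega
  let φ : Fin n → V := fun i => if i.val < l then c (k + Fin.ofNat l i.val) else π^[n - 1 - i.val] x
  have hφ1 : ∀ i : Fin n, i.val < l → φ i = c (k + Fin.ofNat l i.val) := fun i hi => by simp [φ, hi]
  have hφ2 : ∀ i : Fin n, l ≤ i.val → φ i = π^[n - 1 - i.val] x := fun i hi => by
    simp [φ, not_lt.mpr hi]
  have hρ1 : ∀ i : Fin n, i.val < l → ρ (φ i) = 0 := fun i hi => by
    rw [hφ1 i hi]; exact (hρ _).mpr ⟨_, rfl⟩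
  have hρ2 : ∀ i : Fin n, l ≤ i.val → ρ (φ i) = i.val - l + 1 := fun i hi => by
    have := i.isLt
    rw [hφ2 i hi, aux_iter π ρ H x _ (by omega)]; omega
  have hφi : Function.Injective φ := by
    intro i j hij
    by_cases hi : i.val < l <;> by_cases hj : j.val < l
    · rw [hφ1 i hi, hφ1 j hj] at hij
      have h1 := congrArg Fin.val (add_left_cancel (hinj hij))
      simp only [Fin.val_ofNat] at h1
      rw [Nat.mod_eq_of_lt hi, Nat.mod_eq_of_lt hj] at h1
      exact Fin.ext h1
    · have h1 := hρ1 i hi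
      have h2 := hρ2 j (by omega)
      rw [hij] at h1; omega
    · have h1 := hρ1 j hj
      have h2 := hρ2 i (by omega)
      rw [hij] at h2; omega
    · have h1 := hρ2 j (by omega)
      have h2 := hρ2 i (by omega)
      rw [hij] at h2
      apply Fin.ext; omega
  have hφb : Function.Bijective φ := by
    rw [Fintype.bijective_iff_injective_and_card]
    exact ⟨hφi, by simp [hn]⟩
  have hσ : ∀ a b : Fin n, (b.val = if a.val + 1 < l then a.val + 1 else if a.val ≤ l then 0
      else a.val - 1) → π (φ a) = φ b := by
    intro a b hb
    have ha := a.isLt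
    split_ifs at hb with h1 h2
    · rw [hφ1 a (by omega), hφ1 b (by omega), hπc, hb, aux_ofNat_succ, add_assoc]
    · rw [hφ1 b (by omega), hb]
      by_cases h3 : a.val = l
      · rw [hφ2 a (by omega), ← Function.iterate_succ_apply' π,
          show (n - 1 - a.val).succ = ρ x by omega, ← hk]
        simp
      · rw [hφ1 a (by omega), hπc, add_assoc, ← aux_ofNat_succ, show a.val + 1 = l by omega]
        congr 2
        apply Fin.ext; simp
    · rw [hφ2 a (by omega), hφ2 b (by omega), ← Function.iterate_succ_apply' π]
      congr 2
      omega
  have hσ' : ∀ a b : Fin n, π (φ a) = φ b ↔ (b.val = if a.val + 1 < l then a.val + 1 else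
      if a.val ≤ l then 0 else a.val - 1) := by
    intro a b
    constructor
    · intro h
      have hlt : (if a.val + 1 < l then a.val + 1 else if a.val ≤ l then 0 else a.val - 1) < n := by
        have := a.isLt
        split_ifs <;> omega
      have := hσ a ⟨_, hlt⟩ rfl
      rw [h] at this
      rw [hφi this]
    · exact hσ a b
  refine ⟨⟨Equiv.ofBijective φ hφb, ?_⟩⟩
  intro a b
  simp only [Equiv.ofBijective_apply]
  rw [hA, hσ', hσ', lollipop, SimpleGraph.fromRel_adj]
  have := a.isLt
  have := b.isLt
  rw [Ne, Fin.ext_iff]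
  split_ifs <;> omega

/-- For an `n`-vertex unicyclic graph `G` with cycle length `l`
and any `x ∈ V(G)`, `RC(x) ≤ −l³/2 + l²/2 + n(n−1)(4n+1)/6`, with equality
iff `G ≅ P_n^l` and `x` is the vertex at distance `n − l` from the cycle. -/
theorem reverseCoverCost_upper [Fintype V] (G : SimpleGraph V) (n l : ℕ) [NeZero l]
    (hn : Fintype.card V = n) (hconn : G.Connected) (huni : esize G = n)
    (hl : 3 ≤ l) (c : Fin l → V) (hinj : Function.Injective c)
    (hadj : ∀ i : Fin l, G.Adj (c i) (c (i + 1))) (x : V) :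
    reverseCoverCost G x ≤ -(l : ℝ)^3/2 + (l : ℝ)^2/2
        + (n : ℝ)*((n : ℝ)-1)*(4*(n : ℝ)+1)/6 ∧
    (reverseCoverCost G x = -(l : ℝ)^3/2 + (l : ℝ)^2/2
        + (n : ℝ)*((n : ℝ)-1)*(4*(n : ℝ)+1)/6 ↔
      Nonempty (lollipop n l ≃g G) ∧ distToSet G x (Set.range c) = n - l) := by
  obtain ⟨π, ρ, hρd, hρ, H, hπc, hA, hππ⟩ := aux_struct G n l hn hconn huni hl c hinj hadj
  obtain ⟨L, hL⟩ : ∃ L, l = L + 1 := ⟨l - 1, by omega⟩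
  obtain ⟨hle, heq⟩ := aux_main G n l L hL hn hconn c hinj x π ρ hρ H hπc hA hππ _ rfl
  have hcount := aux_count π ρ H l c hinj hρ x
  rw [hn] at hcount
  set T := (auxO π ρ x).card with hT
  have hnR : (n : ℝ) - ρ x = L + 1 + T := by rw [hcount, hL]; push_cast; ring
  have hlR : (l : ℝ) = L + 1 := by rw [hL]; push_cast; ring
  rw [aux_sum2, hnR] at hle heq
  rw [aux_sum1] at hle
  rw [← hρd]
  have hstrict : T ≠ 0 → reverseCoverCost G x < -(l : ℝ)^3/2 + (l : ℝ)^2/2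
        + (n : ℝ)*((n : ℝ)-1)*(4*(n : ℝ)+1)/6 := by
    intro h0
    refine lt_of_le_of_lt hle ?_
    have h1 : (1 : ℝ) ≤ T := by exact_mod_cast Nat.one_le_iff_ne_zero.mpr h0
    have h2 : (3 : ℝ) ≤ l := by exact_mod_cast hl
    have h3 : (L : ℝ) = l - 1 := by linarith
    rw [h3]
    generalize (T : ℝ) = t at *
    generalize (l : ℝ) = k at *
    have key : 0 < t * (5 * k ^ 2 / 4 - k / 2 + (3 * k / 2 - 1) * t) := by
      apply mul_pos (by linarith)
      nlinarith
    nlinarith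
  have heq' : T = 0 → reverseCoverCost G x = -(l : ℝ)^3/2 + (l : ℝ)^2/2
        + (n : ℝ)*((n : ℝ)-1)*(4*(n : ℝ)+1)/6 := by
    intro h0
    rw [heq h0, h0, hlR]
    push_cast
    ring
  refine ⟨?_, ?_, ?_⟩
  · by_cases h0 : T = 0
    · exact (heq' h0).le
    · exact (hstrict h0).le
  · intro h
    have h0 : T = 0 := by
      by_contra h0
      exact absurd h (hstrict h0).ne
    exact ⟨aux_iso G n l hl hn c hinj x π ρ hρ H hπc hA (by omega), by omega⟩
  · rintro ⟨_, h⟩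
    exact heq' (by omega)
end
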